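/- arXiv:1602.09119 — 2 statements merged into one kernel-verified Lean document; each statement's English description precedes it below -/
import Mathlib

section
/- Let n and p be distinct primes, and let K be a degree n number field whose discriminant D_K is a perfect square in ℤ (equivalently, the Galois group of the Galois closure of K acts on the n embeddings of K into the algebraic closure by even permutations). If p is totally ramified in K, i.e., pO_K = 𝔭ⁿ for a prime ideal 𝔭 of the ring of integers O_K, then p is a quadratic residue modulo n, i.e., the image of p in ℤ/nℤ is a square. -/
open scoped NumberField

lemma aux_arith (n p : ℕ) (hn : n.Prime) (hp : p.Prime) (hnp : n ≠ p) (hn2 : n ≠ 2)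
    (t w : ℤ) (hw : ¬ (p : ℤ) ∣ w)
    (h : (p : ℤ) ^ 3 ∣ t ^ 2 - (-1) ^ ((n - 1) / 2) * n * w ^ 2) : IsSquare (p : ZMod n) := by
  have := Fact.mk hn
  have := Fact.mk hp
  have hodd : n % 2 = 1 := hn.eq_two_or_odd.resolve_left hn2
  have key : (n % 4 = 1 ∧ (-1 : ℤ) ^ ((n - 1) / 2) = 1) ∨
      (n % 4 = 3 ∧ (-1 : ℤ) ^ ((n - 1) / 2) = -1) := by
    rcases (by omega : n % 4 = 1 ∨ n % 4 = 3) with h4 | h4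
    · exact Or.inl ⟨h4, Even.neg_one_pow (Nat.even_iff.2 (by omega))⟩
    · exact Or.inr ⟨h4, Odd.neg_one_pow (Nat.odd_iff.2 (by omega))⟩
  by_cases hp2 : p = 2
  · subst hp2
    have : IsSquare (2 : ZMod n) := by
      rw [ZMod.exists_sq_eq_two_iff hn2]
      have hw1 : w % 2 = 1 := by push_cast at hw; omega
      have hw8 : w ^ 2 % 8 = 1 := by
        have : w % 8 = 1 ∨ w % 8 = 3 ∨ w % 8 = 5 ∨ w % 8 = 7 := by omega
        rcases this with h | h | h | h <;> simp [pow_two, Int.mul_emod, h]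
      have ht8 : t ^ 2 % 8 = 1 ∨ t ^ 2 % 2 = 0 := by
        have : t % 8 = 1 ∨ t % 8 = 3 ∨ t % 8 = 5 ∨ t % 8 = 7 ∨ t % 2 = 0 := by omega
        rcases this with h | h | h | h | h <;> simp [pow_two, Int.mul_emod, h]
      obtain ⟨k, hk⟩ : ∃ k, w ^ 2 = 8 * k + 1 := ⟨w ^ 2 / 8, by omega⟩
      rcases key with ⟨h4, e⟩ | ⟨h4, e⟩ <;> rw [e, hk] at h <;>
      · have h' : (8 : ℤ) ∣ _ := h
        ring_nf at h'
        generalize (n : ℤ) * k = z at h'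
        omega
    exact_mod_cast this
  · have hp1 : p % 2 = 1 := hp.eq_two_or_odd.resolve_left hp2
    have hw0 : (w : ZMod p) ≠ 0 := by rwa [Ne, ZMod.intCast_zmod_eq_zero_iff_dvd]
    have h1 : ((t ^ 2 - (-1) ^ ((n - 1) / 2) * n * w ^ 2 : ℤ) : ZMod p) = 0 := by
      rw [ZMod.intCast_zmod_eq_zero_iff_dvd]
      exact (dvd_pow_self _ (by norm_num)).trans h
    rcases key with ⟨h4, e⟩ | ⟨h4, e⟩ <;> rw [e] at h1 <;> push_cast at h1
    · rw [ZMod.exists_sq_eq_prime_iff_of_mod_four_eq_one h4 hp2]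
      refine ⟨t / w, ?_⟩
      field_simp
      linear_combination -h1
    · have hs : IsSquare (-(n : ZMod p)) := by
        refine ⟨t / w, ?_⟩
        field_simp
        linear_combination -h1
      rcases (by omega : p % 4 = 1 ∨ p % 4 = 3) with hp4 | hp4
      · rw [← ZMod.exists_sq_eq_prime_iff_of_mod_four_eq_one hp4 hn2]
        have : IsSquare (-1 : ZMod p) := ZMod.exists_sq_eq_neg_one_iff.2 (by omega)
        simpa using this.mul hs
      · rw [ZMod.exists_sq_eq_prime_iff_of_mod_four_eq_three h4 hp4 hnp]
        intro hns
        have hn0 : (n : ZMod p) ≠ 0 := by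
          rw [Ne, ZMod.natCast_eq_zero_iff, Nat.prime_dvd_prime_iff_eq hp hn]
          exact fun h => hnp h.symm
        have : IsSquare (-1 : ZMod p) := by
          have := hs.div hns
          rwa [neg_div, div_self hn0] at this
        exact ZMod.exists_sq_eq_neg_one_iff.1 this hp4

section ded
variable {R : Type*} [CommRing R] [IsDedekindDomain R] (P : Ideal R) [hP : P.IsPrime] (hP0 : P ≠ ⊥)
include hP0

lemma aux_val {a : R} (ha : a ∈ P) (ha2 : a ∉ P ^ 2) (i : ℕ) : a ^ i ∉ P ^ (i + 1) := by
  have hpr : Prime P := Ideal.prime_of_isPrime hP0 hP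
  have h1 : emultiplicity P (Ideal.span {a}) = 1 := by
    have : emultiplicity P (Ideal.span {a}) = (1 : ℕ) := by
      rw [emultiplicity_eq_coe]
      constructor
      · rw [pow_one, Ideal.dvd_span_singleton]; exact ha
      · rw [Ideal.dvd_span_singleton]; exact ha2
    exact_mod_cast this
  intro h
  rw [← Ideal.dvd_span_singleton, ← Ideal.span_singleton_pow] at h
  have := le_emultiplicity_of_pow_dvd h
  rw [emultiplicity_pow hpr, h1] at this
  simp only [mul_one] at this
  have : (i + 1 : ℕ) ≤ i := by exact_mod_cast this
  omega

variable {n p : ℕ} (hpI : ∀ z : ℤ, (z : R) ∈ P → (p : ℤ) ∣ z)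
  (htot : Ideal.span {(p : R)} = P ^ n)
include hpI htot

lemma aux_indep1 {a : R} (ha : a ∈ P) (ha2 : a ∉ P ^ 2) (b : ℕ → ℤ)
    (hb : ∑ i ∈ Finset.range n, (b i : R) * a ^ i ∈ P ^ n) : ∀ i < n, (p : ℤ) ∣ b i := by
  intro i
  induction i using Nat.strong_induction_on with
  | _ i ih =>
  intro hi
  have hpn : (p : R) ∈ P ^ n := htot ▸ Ideal.mem_span_singleton_self _
  have hle : P ^ n ≤ P ^ (i + 1) := Ideal.pow_le_pow_right hi
  have hrest : ∑ j ∈ (Finset.range n).erase i, (b j : R) * a ^ j ∈ P ^ (i + 1) := by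
    refine Ideal.sum_mem _ fun j hj => ?_
    rw [Finset.mem_erase, Finset.mem_range] at hj
    rcases lt_or_gt_of_ne hj.1 with h | h
    · obtain ⟨c, hc⟩ := ih j h hj.2
      rw [hc]; push_cast
      rw [mul_assoc]
      exact hle (Ideal.mul_mem_right _ _ hpn)
    · exact Ideal.mul_mem_left _ _ (Ideal.pow_le_pow_right h (Ideal.pow_mem_pow ha j))
  rw [← Finset.add_sum_erase _ _ (Finset.mem_range.2 hi)] at hb
  have := (Ideal.add_mem_iff_left _ hrest).1 (hle hb)
  rcases Ideal.IsPrime.mul_mem_pow P this with h | h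
  · exact hpI _ h
  · exact absurd h (aux_val P hP0 ha ha2 i)

lemma aux_indep (hp0 : (p : R) ≠ 0) {a : R} (ha : a ∈ P) (ha2 : a ∉ P ^ 2) (M : ℕ) : ∀ (b : ℕ → ℤ),
    (p : R) ^ M ∣ ∑ i ∈ Finset.range n, (b i : R) * a ^ i → ∀ i < n, (p : ℤ) ^ M ∣ b i := by
  induction M with
  | zero => intro b _ i _; simp
  | succ M ih =>
    intro b hb
    have h1 := aux_indep1 P hP0 hpI htot ha ha2 b (by
      rw [← htot, Ideal.mem_span_singleton]
      exact (dvd_pow_self _ (by omega)).trans hb)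
    have h2 : ∀ i, ∃ c, i < n → b i = p * c := fun i => by
      by_cases hi : i < n
      · obtain ⟨c, hc⟩ := h1 i hi
        exact ⟨c, fun _ => hc⟩
      · exact ⟨0, fun h => absurd h hi⟩
    choose c hc using h2
    have h3 : ∑ i ∈ Finset.range n, (b i : R) * a ^ i
        = p * ∑ i ∈ Finset.range n, (c i : R) * a ^ i := by
      rw [Finset.mul_sum]
      refine Finset.sum_congr rfl fun i hi => ?_
      rw [hc i (Finset.mem_range.1 hi)]; push_cast; ring
    rw [h3, pow_succ', mul_dvd_mul_iff_left hp0] at hb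
    intro i hi
    rw [hc i hi, pow_succ']
    exact mul_dvd_mul_left _ (ih c hb i hi)

omit hpI in
lemma aux_exists (hn : 1 ≤ n) (hp : p.Prime) (hnp : ¬ (p ∣ n)) (hsurj : ∀ x : R, ∃ z : ℤ, x - z ∈ P)
    (k : ℕ) : ∃ (a : R) (u : ℤ) (c : R), a ∈ P ∧ a ∉ P ^ 2 ∧ ¬ (p : ℤ) ∣ u ∧ c ∈ P ^ (k + 1) ∧
      a ^ n = p * (u + c) := by
  have hpr : Prime P := Ideal.prime_of_isPrime hP0 hP
  have hpn : (p : R) ∈ P ^ n := htot ▸ Ideal.mem_span_singleton_self _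
  have hpP : (p : R) ∈ P := Ideal.pow_le_self (by omega) hpn
  induction k with
  | zero =>
    obtain ⟨a, ha, ha2⟩ : ∃ a ∈ P, a ∉ P ^ 2 := by
      have := Ideal.pow_right_strictAnti P hP0 hP.ne_top (show 1 < 2 by norm_num)
      simp only [pow_one] at this
      exact Set.exists_of_ssubset this
    have h1 : a ^ n ∈ P ^ n := Ideal.pow_mem_pow ha n
    rw [← htot, Ideal.mem_span_singleton] at h1
    obtain ⟨v, hv⟩ := h1
    obtain ⟨u, hu⟩ := hsurj v
    refine ⟨a, u, v - u, ha, ha2, ?_, by simpa using hu, by rw [hv]; ring⟩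
    rintro ⟨q, rfl⟩
    have hvP : v ∈ P := by
      have : v = (v - ((p * q : ℤ) : R)) + p * q := by push_cast; ring
      rw [this]
      exact Ideal.add_mem _ hu (Ideal.mul_mem_right _ _ hpP)
    apply aux_val P hP0 ha ha2 n
    rw [hv, pow_succ]
    exact Ideal.mul_mem_mul hpn hvP
  | succ k ih =>
    obtain ⟨a, u, c, ha, ha2, hu, hc, hac⟩ := ih
    have hcop : IsCoprime ((n : ℤ) * u) p := by
      have hpi : Prime (p : ℤ) := Nat.prime_iff_prime_int.1 hp
      rw [isCoprime_comm, hpi.coprime_iff_not_dvd]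
      intro h
      rcases hpi.dvd_or_dvd h with h | h
      · exact hnp (by exact_mod_cast h)
      · exact hu h
    obtain ⟨m, t, hmt⟩ := hcop
    have hmt' : (m : R) * (n * u) + t * p = 1 := by exact_mod_cast congrArg (Int.cast : ℤ → R) hmt
    -- (1 - m c)^n = 1 - n m c + c^2 r
    obtain ⟨r, hr⟩ : ∃ r, (1 - m * c) ^ n = 1 - n * m * c + c ^ 2 * r := by
      obtain ⟨r, hr⟩ := Polynomial.powAddExpansion (1 : R) (-(m * c)) n
      refine ⟨r * m ^ 2, ?_⟩
      rw [sub_eq_add_neg, hr]; simp; ring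
    have hcP : c ∈ P := Ideal.pow_le_self (by omega) hc
    have hc2 : c ^ 2 ∈ P ^ (k + 1 + 1) := by
      rw [pow_two, pow_succ P]; exact Ideal.mul_mem_mul hc hcP
    have hpc : p * c ∈ P ^ (k + 1 + 1) := by
      rw [pow_succ' P]; exact Ideal.mul_mem_mul hpP hc
    refine ⟨a * (1 - m * c), u, (p * c) * t + c ^ 2 * (u * r - n * m + c * r), Ideal.mul_mem_right _ _ ha, ?_, hu, ?_, ?_⟩
    · intro h
      apply ha2
      have : a = a * (1 - m * c) + (a * c) * m := by ring
      rw [this]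
      refine Ideal.add_mem _ h (Ideal.mul_mem_right _ _ ?_)
      rw [pow_two]; exact Ideal.mul_mem_mul ha hcP
    · exact Ideal.add_mem _ (Ideal.mul_mem_right _ _ hpc) (Ideal.mul_mem_right _ _ hc2)
    · rw [mul_pow, hac, hr]
      linear_combination (-p * c) * hmt'
end ded

lemma aux_sqdisc (K : Type) [Field K] [NumberField K] (pb : PowerBasis ℚ K)
    (hsq : IsSquare (NumberField.discr K)) : IsSquare (Algebra.discr ℚ pb.basis) := by
  classical
  let e := pb.basis.indexEquiv (NumberField.integralBasis K)
  let b' := (NumberField.integralBasis K).reindex e.symm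
  have h1 : Algebra.discr ℚ b' = NumberField.discr K := by
    rw [NumberField.coe_discr, Module.Basis.coe_reindex, Algebra.discr_reindex]
  have h2 := Algebra.discr_of_matrix_vecMul b' (b'.toMatrix pb.basis)
  rw [Module.Basis.toMatrix_map_vecMul, h1] at h2
  rw [h2]
  obtain ⟨r, hr⟩ := hsq
  rw [hr]
  exact ⟨(b'.toMatrix pb.basis).det * r, by push_cast; ring⟩

lemma aux_norm (K : Type) [Field K] [NumberField K] (c m : ℤ) (γ : 𝓞 K) :
    m ∣ Algebra.norm ℤ ((c : 𝓞 K) + m * γ) - c ^ (Module.finrank ℚ K) := by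
  classical
  let b := NumberField.RingOfIntegers.basis K
  rw [← Ideal.mem_span_singleton, ← Ideal.Quotient.eq]
  have hcard : Fintype.card (Module.Free.ChooseBasisIndex ℤ (𝓞 K)) = Module.finrank ℚ K := by
    rw [← Module.finrank_eq_card_basis b, NumberField.RingOfIntegers.rank]
  rw [Algebra.norm_eq_matrix_det b, RingHom.map_det]
  have h0 : Ideal.Quotient.mk (Ideal.span {m}) m = 0 :=
    Ideal.Quotient.eq_zero_iff_mem.2 (Ideal.mem_span_singleton_self m)
  generalize Ideal.Quotient.mk (Ideal.span {m}) = φ at h0 ⊢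
  have : φ.mapMatrix (Algebra.leftMulMatrix b (c + m * γ))
      = Matrix.diagonal (fun _ => φ c) := by
    have h1 : (c : 𝓞 K) + m * γ = algebraMap ℤ (𝓞 K) c + m • γ := by
      rw [zsmul_eq_mul]; rfl
    rw [h1, map_add, map_smul, AlgHom.commutes]
    ext i j
    rw [RingHom.mapMatrix_apply, Matrix.map_apply, Matrix.add_apply, Matrix.smul_apply,
      smul_eq_mul, map_add, map_mul, h0, zero_mul, add_zero, Matrix.algebraMap_matrix_apply,
      Matrix.diagonal_apply]
    split_ifs
    · rfl
    · exact map_zero _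
  rw [this, Matrix.det_diagonal, Finset.prod_const, Finset.card_univ, hcard, map_pow]

lemma aux_surj (K : Type) [Field K] [NumberField K] (n p : ℕ) (hn : n ≠ 0) (hp : p.Prime)
    (hdeg : Module.finrank ℚ K = n) (P : Ideal (𝓞 K))
    (htot : Ideal.span {(p : 𝓞 K)} = P ^ n) (x : 𝓞 K) : ∃ z : ℤ, x - z ∈ P := by
  have h1 : Ideal.absNorm P = p := by
    have := congrArg Ideal.absNorm htot
    rw [map_pow, Ideal.absNorm_span_singleton] at this
    have h2 : Algebra.norm ℤ (p : 𝓞 K) = (p : ℤ) ^ n := by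
      have := Algebra.norm_algebraMap_of_basis (NumberField.RingOfIntegers.basis K) (p : ℤ)
      rw [← Module.finrank_eq_card_basis (NumberField.RingOfIntegers.basis K), NumberField.RingOfIntegers.rank, hdeg] at this
      simpa using this
    rw [h2, Int.natAbs_pow, Int.natAbs_natCast] at this
    exact (Nat.pow_left_injective hn this).symm
  have := Fact.mk hp
  have hcard : Nat.card (𝓞 K ⧸ P) = p := h1
  have : Finite (𝓞 K ⧸ P) := Nat.finite_of_card_ne_zero (hcard ▸ hp.ne_zero)
  have := Fintype.ofFinite (𝓞 K ⧸ P)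
  have e := ZMod.ringEquivOfPrime (𝓞 K ⧸ P) hp (by rw [← hcard, Nat.card_eq_fintype_card])
  obtain ⟨z, hz⟩ := ZMod.intCast_surjective (e.symm (Ideal.Quotient.mk P x))
  refine ⟨z, ?_⟩
  rw [← Ideal.Quotient.eq]
  have := congrArg e hz
  simpa using this.symm
  
lemma aux_top (K : Type) [Field K] [NumberField K] (n p : ℕ) (hn : n.Prime)
    (hdeg : Module.finrank ℚ K = n) (P : Ideal (𝓞 K))
    (hpI : ∀ z : ℤ, (z : 𝓞 K) ∈ P → (p : ℤ) ∣ z)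
    (htot : Ideal.span {(p : 𝓞 K)} = P ^ n) (a : 𝓞 K) (ha : a ∈ P) (ha2 : a ∉ P ^ 2) :
    ∃ pb : PowerBasis ℚ K, pb.gen = (a : K) := by
  have hint : IsIntegral ℚ (a : K) := Algebra.IsIntegral.isIntegral _
  have := IntermediateField.isSimpleOrder_of_finrank_prime ℚ K (hdeg ▸ hn)
  rcases this.eq_bot_or_eq_top (IntermediateField.adjoin ℚ {(a : K)}) with h | h
  · exfalso
    rw [IntermediateField.adjoin_simple_eq_bot_iff, IntermediateField.mem_bot] at h
    obtain ⟨q, hq⟩ := h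
    have hq' : IsIntegral ℤ q := by
      rw [← isIntegral_algebraMap_iff (FaithfulSMul.algebraMap_injective ℚ K), hq]
      exact a.isIntegral_coe
    obtain ⟨z, rfl⟩ := IsIntegrallyClosed.isIntegral_iff.1 hq'
    have haz : a = z := by
      apply NumberField.RingOfIntegers.coe_injective
      exact hq.symm.trans (by simp)
    rw [haz] at ha
    obtain ⟨y, hy⟩ := hpI z ha
    apply ha2
    rw [haz, hy]
    push_cast
    refine Ideal.mul_mem_right _ _ (Ideal.pow_le_pow_right hn.two_le (htot ▸ Ideal.mem_span_singleton_self _))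
  · refine ⟨PowerBasis.ofAdjoinEqTop hint ?_, PowerBasis.ofAdjoinEqTop_gen _ _⟩
    rw [← IntermediateField.adjoin_simple_toSubalgebra_of_isAlgebraic hint.isAlgebraic, h]
    rfl

open Polynomial in
lemma aux_main (n p : ℕ) (hn : n.Prime) (hp : p.Prime) (hnp : n ≠ p) (hn2 : n ≠ 2)
    (K : Type) [Field K] [NumberField K]
    (hdeg : Module.finrank ℚ K = n)
    (hsq : IsSquare (NumberField.discr K))
    (P : Ideal (𝓞 K)) (hP : P.IsPrime)
    (htot : Ideal.span {(p : 𝓞 K)} = P ^ n) :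
    IsSquare (p : ZMod n) := by
  have hodd : n % 2 = 1 := hn.eq_two_or_odd.resolve_left hn2
  have hpi : Prime (p : ℤ) := Nat.prime_iff_prime_int.1 hp
  have hp0 : (p : 𝓞 K) ≠ 0 := by exact_mod_cast hp.ne_zero
  have hP0 : P ≠ ⊥ := by
    rintro rfl
    rw [← Ideal.zero_eq_bot, zero_pow hn.ne_zero, Ideal.zero_eq_bot, Ideal.span_singleton_eq_bot] at htot
    exact hp0 htot
  have hpP : (p : 𝓞 K) ∈ P :=
    Ideal.pow_le_self hn.ne_zero (htot ▸ Ideal.mem_span_singleton_self _)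
  have hpI : ∀ z : ℤ, (z : 𝓞 K) ∈ P → (p : ℤ) ∣ z := by
    intro z hz
    by_contra h
    rw [← hpi.coprime_iff_not_dvd] at h
    obtain ⟨x, y, hxy⟩ := h
    apply hP.ne_top
    rw [Ideal.eq_top_iff_one]
    have : (1 : 𝓞 K) = x * p + y * z := by exact_mod_cast congrArg (Int.cast : ℤ → 𝓞 K) hxy.symm
    rw [this]
    exact Ideal.add_mem _ (Ideal.mul_mem_left _ _ hpP) (Ideal.mul_mem_left _ _ hz)
  have hndvd : ¬ p ∣ n := fun h => hnp ((Nat.prime_dvd_prime_iff_eq hp hn).1 h).symm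
  obtain ⟨h, hh⟩ : ∃ h, n = 2 * h + 1 := ⟨n / 2, by omega⟩
  -- M = 2h + 4
  obtain ⟨a, u, c, ha, ha2, hu, hc, hac⟩ := aux_exists P hP0 htot hn.one_le hp hndvd
    (aux_surj K n p hn.ne_zero hp hdeg P htot) (n * (2 * h + 3))
  have hcd : (p : 𝓞 K) ^ (2 * h + 3) ∣ c := by
    have h1 : c ∈ P ^ (n * (2 * h + 3)) := Ideal.pow_le_pow_right (by omega) hc
    rwa [pow_mul, ← htot, Ideal.span_singleton_pow, Ideal.mem_span_singleton] at h1
  obtain ⟨c', rfl⟩ := hcd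
  obtain ⟨pb, hpb⟩ := aux_top K n p hn hdeg P hpI htot a ha ha2
  have hinta : IsIntegral ℤ a := a.isIntegral
  set f := minpoly ℤ a with hf
  have hmin : minpoly ℚ (a : K) = f.map (algebraMap ℤ ℚ) :=
    minpoly.isIntegrallyClosed_eq_field_fractions ℚ K hinta
  have hfm : f.Monic := minpoly.monic hinta
  have hdim : pb.dim = n := by rw [← pb.finrank, hdeg]
  have hfdeg : f.natDegree = n := by
    rw [← hdim, ← pb.natDegree_minpoly, hpb, hmin, hfm.natDegree_map]
  have hfa : aeval a f = 0 := minpoly.aeval _ _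
  set g : ℤ[X] := f - (X ^ n - C ((p : ℤ) * u)) with hg
  have hqm : (X ^ n - C ((p : ℤ) * u)).Monic := monic_X_pow_sub_C _ hn.ne_zero
  have hgdeg : g.natDegree < n := by
    have : g.degree < f.degree := by
      apply degree_sub_lt_left
      · rw [degree_X_pow_sub_C hn.pos, degree_eq_natDegree hfm.ne_zero, hfdeg]
      · exact hfm.ne_zero
      · rw [hfm.leadingCoeff, hqm.leadingCoeff]
    by_cases hg0 : g = 0
    · rw [hg0]; simpa using hn.pos
    · rw [← hfdeg]; exact natDegree_lt_natDegree hg0 this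
  have hga : aeval a g = - ((p : 𝓞 K) ^ (2 * h + 4) * c') := by
    rw [hg, map_sub, hfa]
    simp [hac]
    ring
  have hgdvd : C ((p : ℤ) ^ (2 * h + 4)) ∣ g := by
    rw [C_dvd_iff_dvd_coeff]
    intro i
    by_cases hi : i < n
    · refine aux_indep P hP0 hpI htot hp0 ha ha2 (2 * h + 4) (fun i => g.coeff i) ?_ i hi
      rw [aeval_eq_sum_range' hgdeg] at hga
      simp only [zsmul_eq_mul] at hga
      rw [hga]
      exact (dvd_mul_right _ _).neg_right
    · rw [coeff_eq_zero_of_natDegree_lt (by omega)]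
      exact dvd_zero _
  obtain ⟨k, hk⟩ := hgdvd
  have hfk : f = X ^ n - C ((p : ℤ) * u) + C ((p : ℤ) ^ (2 * h + 4)) * k := by
    rw [← hk, hg]; ring
  -- norm of a
  have hNa : Algebra.norm ℤ a = p * u - p ^ (2 * h + 4) * k.coeff 0 := by
    have h1 := Algebra.PowerBasis.norm_gen_eq_coeff_zero_minpoly pb
    rw [hpb, ← Algebra.coe_norm_int, hdim, hmin, coeff_map, Odd.neg_one_pow (Nat.odd_iff.2 hodd), eq_intCast] at h1
    have h2 : Algebra.norm ℤ a = -1 * f.coeff 0 := by exact_mod_cast h1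
    rw [h2, hfk, coeff_add, coeff_sub, coeff_C_mul, coeff_C_zero, coeff_X_pow,
      if_neg hn.ne_zero.symm]
    ring
  -- derivative
  have hder : a * aeval a (derivative f) = ((n * p * u : ℤ) : 𝓞 K) + ((p ^ (2 * h + 4) : ℤ) : 𝓞 K) *
      (n * c' + a * aeval a (derivative k)) := by
    rw [hfk, derivative_add, derivative_sub, derivative_X_pow, derivative_C, derivative_C_mul]
    have : a * a ^ (n - 1) = a ^ n := by rw [← pow_succ', Nat.sub_add_cancel hn.one_le]
    simp
    linear_combination (n : 𝓞 K) * this + (n : 𝓞 K) * hac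
  have hN := aux_norm K (n * p * u) (p ^ (2 * h + 4)) (n * c' + a * aeval a (derivative k))
  rw [← hder, map_mul, hdeg, hNa] at hN
  -- discriminant
  have hD := aux_sqdisc K pb hsq
  rw [Algebra.discr_powerBasis_eq_norm, hpb, hdeg, hmin] at hD
  have h3 : aeval (a : K) (derivative (f.map (algebraMap ℤ ℚ))) = ((aeval a (derivative f) : 𝓞 K) : K) := by
    rw [derivative_map, aeval_map_algebraMap]
    exact aeval_algebraMap_apply K a (derivative f)
  rw [h3, ← Algebra.coe_norm_int] at hD
  generalize Algebra.norm ℤ (aeval a (derivative f)) = N at hD hN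
  have hD' : IsSquare ((-1) ^ (n * (n - 1) / 2) * N : ℤ) := by
    rw [← Rat.isSquare_intCast_iff]; push_cast; exact hD
  have hsign : (-1 : ℤ) ^ (n * (n - 1) / 2) = (-1) ^ ((n - 1) / 2) := by
    have e1 : n * (n - 1) / 2 = n * h := by
      rw [hh, Nat.add_sub_cancel, mul_left_comm, Nat.mul_div_cancel_left _ (by norm_num)]
    have e2 : (n - 1) / 2 = h := by omega
    rw [e1, e2, pow_mul, Odd.neg_one_pow (Nat.odd_iff.2 hodd)]
  rw [hsign] at hD'
  obtain ⟨s, hs⟩ := hD'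
  have hp0' : (p : ℤ) ≠ 0 := hpi.ne_zero
  have hN2 : (p : ℤ) ^ (2 * h + 3) ∣ N - n ^ n * (p * u) ^ (2 * h) := by
    have h4 : (p : ℤ) ^ (2 * h + 4) ∣ (p * u) * (N - n ^ n * (p * u) ^ (2 * h)) := by
      have e : (p * u : ℤ) * (N - n ^ n * (p * u) ^ (2 * h)) =
        ((p * u - p ^ (2 * h + 4) * k.coeff 0) * N - (n * p * u) ^ n) + p ^ (2 * h + 4) * (k.coeff 0 * N) := by
        have : (n * p * u : ℤ) ^ n = n ^ n * ((p * u) ^ (2 * h) * (p * u)) := by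
          rw [← pow_succ, ← hh, ← mul_pow]; ring
        rw [this]; ring
      rw [e]
      exact dvd_add hN (dvd_mul_right _ _)
    rw [pow_succ', mul_assoc, mul_dvd_mul_iff_left hp0'] at h4
    exact ((hpi.coprime_iff_not_dvd.2 hu).pow_left).dvd_of_dvd_mul_left h4
  set w : ℤ := n ^ h * u ^ h with hw
  set ε : ℤ := (-1) ^ ((n - 1) / 2) with hε
  have hs2 : (p : ℤ) ^ (2 * h + 3) ∣ s ^ 2 - p ^ (2 * h) * (ε * n * w ^ 2) := by
    have e : s ^ 2 - p ^ (2 * h) * (ε * n * w ^ 2) = ε * (N - n ^ n * (p * u) ^ (2 * h)) := by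
      have : (n : ℤ) ^ n = n ^ (2 * h) * n := by rw [← pow_succ, ← hh]
      rw [this, mul_sub, hs, hw]; ring
    rw [e]; exact hN2.mul_left _
  have hps : (p : ℤ) ^ h ∣ s := by
    rw [← Int.pow_dvd_pow_iff (n := 2) (by norm_num), ← pow_mul, mul_comm h 2]
    have := (pow_dvd_pow (p : ℤ) (show 2 * h ≤ 2 * h + 3 by omega)).trans hs2
    exact (dvd_sub_left (dvd_mul_right _ _)).1 this
  obtain ⟨t, rfl⟩ := hps
  refine aux_arith n p hn hp hnp hn2 t w ?_ ?_
  · intro hd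
    rcases hpi.dvd_or_dvd hd with hd | hd
    · exact hndvd (by exact_mod_cast hpi.dvd_of_dvd_pow hd)
    · exact hu (hpi.dvd_of_dvd_pow hd)
  · have e : ((p : ℤ) ^ h * t) ^ 2 - p ^ (2 * h) * (ε * n * w ^ 2) = p ^ (2 * h) * (t ^ 2 - ε * n * w ^ 2) := by
      ring
    rw [e, pow_add, mul_dvd_mul_iff_left (pow_ne_zero _ hp0')] at hs2
    exact hs2

theorem stmt1 (n p : ℕ) (hn : n.Prime) (hp : p.Prime) (hnp : n ≠ p)
    (K : Type) [Field K] [NumberField K]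
    (hdeg : Module.finrank ℚ K = n)
    (hsq : IsSquare (NumberField.discr K))
    (𝔭 : Ideal (𝓞 K)) (h𝔭 : 𝔭.IsPrime)
    (htot : Ideal.span {(p : 𝓞 K)} = 𝔭 ^ n) :
    IsSquare (p : ZMod n) := by
  by_cases hn2 : n = 2
  · subst hn2
    generalize (p : ZMod 2) = x
    revert x
    decide
  · exact aux_main n p hn hp hnp hn2 K hdeg hsq 𝔭 h𝔭 htot
end

section
/- The polynomial x³² − x³¹ + 2x³⁰ + x²⁹ + 8x²⁸ − 7x²⁷ + 21x²⁶ − 9x²⁵ − 12x²⁴ + 248x²³ − 548x²² − 65x²¹ + 2653x²⁰ − 4879x¹⁹ + 2564x¹⁸ + 4198x¹⁷ − 7780x¹⁶ + 3593x¹⁵ + 4020x¹⁴ − 7014x¹³ + 4935x¹² − 2042x¹¹ + 929x¹⁰ − 787x⁹ + 695x⁸ − 215x⁷ + 70x⁶ − 42x⁵ + 15x⁴ − 15x³ + 2x² + x + 1 is irreducible over ℚ, and the degree 32 number field K it defines has |D_K| = 21³², and the Galois group of its Galois closure has order 672 and contains a subgroup of index 2 isomorphic to SL₂(𝔽₇).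 -/
open Polynomial IntermediateField
open scoped MatrixGroups Classical NumberField

noncomputable section

abbrev Qbar := AlgebraicClosure ℚ

/-- The discriminant of a (finite-dimensional) subfield of `Qbar`. -/
def absd (K : IntermediateField ℚ Qbar) : ℤ :=
  if h : FiniteDimensional ℚ K then
    haveI := h
    haveI : NumberField K := ⟨⟩
    NumberField.discr K
  else 0

def f3 : ℚ[X] :=
  X ^ 32 - X ^ 31 + 2 * X ^ 30 + X ^ 29 + 8 * X ^ 28 - 7 * X ^ 27 + 21 * X ^ 26 - 9 * X ^ 25 -
    12 * X ^ 24 + 248 * X ^ 23 - 548 * X ^ 22 - 65 * X ^ 21 + 2653 * X ^ 20 - 4879 * X ^ 19 +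
    2564 * X ^ 18 + 4198 * X ^ 17 - 7780 * X ^ 16 + 3593 * X ^ 15 + 4020 * X ^ 14 -
    7014 * X ^ 13 + 4935 * X ^ 12 - 2042 * X ^ 11 + 929 * X ^ 10 - 787 * X ^ 9 + 695 * X ^ 8 -
    215 * X ^ 7 + 70 * X ^ 6 - 42 * X ^ 5 + 15 * X ^ 4 - 15 * X ^ 3 + 2 * X ^ 2 + X + 1

set_option linter.unusedSectionVars false

namespace S3

/-- Operations of a concrete (computable) presentation of a ring. -/
structure Ops (R : Type) where
  zero : R
  one : R
  add : R → R → R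
  neg : R → R
  mul : R → R → R
  isz : R → Bool

structure Sem {R : Type} {S : Type*} [CommRing S] (o : Ops R) (φ : R → S) : Prop where
  zero : φ o.zero = 0
  one : φ o.one = 1
  add : ∀ a b, φ (o.add a b) = φ a + φ b
  neg : ∀ a, φ (o.neg a) = - φ a
  mul : ∀ a b, φ (o.mul a b) = φ a * φ b
  isz : ∀ a, o.isz a = true → φ a = 0

def ladd {R : Type} (o : Ops R) : List R → List R → List R
  | [], b => b
  | a, [] => a
  | x :: a, y :: b => o.add x y :: ladd o a b

def lsmul {R : Type} (o : Ops R) (c : R) : List R → List R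
  | [] => []
  | x :: a => o.mul c x :: lsmul o c a

def lneg {R : Type} (o : Ops R) : List R → List R
  | [] => []
  | x :: a => o.neg x :: lneg o a

def lmul {R : Type} (o : Ops R) : List R → List R → List R
  | [], _ => []
  | x :: a, b => ladd o (lsmul o x b) (o.zero :: lmul o a b)

def ltake {R : Type} : ℕ → List R → List R
  | 0, _ => []
  | _ + 1, [] => []
  | n + 1, x :: a => x :: ltake n a

def ldrop {R : Type} : ℕ → List R → List R
  | 0, a => a
  | _ + 1, [] => []
  | n + 1, _ :: a => ldrop n a

/-- reduce modulo `x ^ n - low` -/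
def lred {R : Type} (o : Ops R) (n : ℕ) (low : List R) (a : List R) : List R :=
  ladd o (ltake n a) (lmul o (ldrop n a) low)

def lmulred {R : Type} (o : Ops R) (n : ℕ) (low : List R) : List R → List R → List R
  | [], _ => []
  | x :: a, b => ladd o (lsmul o x b) (lred o n low (o.zero :: lmulred o n low a b))

def liszero {R : Type} (o : Ops R) : List R → Bool
  | [] => true
  | x :: a => o.isz x && liszero o a

/-- the ring `R[x]/(x ^ n - low)` -/
def ext {R : Type} (o : Ops R) (n : ℕ) (low : List R) : Ops (List R) where
  zero := []
  one := [o.one]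
  add := ladd o
  neg := lneg o
  mul := lmulred o n low
  isz := liszero o

def leval {R : Type} {S : Type*} [CommRing S] (φ : R → S) (x : S) : List R → S
  | [] => 0
  | c :: a => φ c + x * leval φ x a

section
variable {R : Type} {S : Type*} [CommRing S] {o : Ops R} {φ : R → S}

theorem leval_add (h : Sem o φ) (x : S) (a b : List R) :
    leval φ x (ladd o a b) = leval φ x a + leval φ x b := by
  fun_induction ladd o a b with
  | case1 b => simp [leval]
  | case2 a => simp [leval]
  | case3 u a v b ih => simp only [leval, h.add, ih]; ring

theorem leval_smul (h : Sem o φ) (x : S) (c : R) (a : List R) :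
    leval φ x (lsmul o c a) = φ c * leval φ x a := by
  induction a with
  | nil => simp [leval, lsmul]
  | cons u a ih => simp only [leval, lsmul, h.mul, ih]; ring

theorem leval_neg (h : Sem o φ) (x : S) (a : List R) :
    leval φ x (lneg o a) = - leval φ x a := by
  induction a with
  | nil => simp [leval, lneg]
  | cons u a ih => simp only [leval, lneg, h.neg, ih]; ring

theorem leval_mul (h : Sem o φ) (x : S) (a b : List R) :
    leval φ x (lmul o a b) = leval φ x a * leval φ x b := by
  induction a with
  | nil => simp [leval, lmul]
  | cons u a ih =>
    simp only [leval, lmul, leval_add h, leval_smul h, ih, h.zero]; ring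

theorem leval_take_drop (x : S) (n : ℕ) (a : List R) :
    leval φ x a = leval φ x (ltake n a) + x ^ n * leval φ x (ldrop n a) := by
  fun_induction ltake n a with
  | case1 a => simp [ldrop, leval]
  | case2 n => simp [ldrop, leval]
  | case3 n u a ih => simp only [leval, ldrop, ih, Nat.succ_eq_add_one]; ring

theorem leval_red (h : Sem o φ) (x : S) {n : ℕ} {low : List R} (hx : x ^ n = leval φ x low) (a : List R) :
    leval φ x (lred o n low a) = leval φ x a := by
  rw [lred, leval_add h, leval_mul h, leval_take_drop x n a, hx]; ring

theorem leval_mulred (h : Sem o φ) (x : S) {n : ℕ} {low : List R} (hx : x ^ n = leval φ x low) (a b : List R) :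
    leval φ x (lmulred o n low a b) = leval φ x a * leval φ x b := by
  induction a with
  | nil => simp [leval, lmulred]
  | cons u a ih =>
    simp only [leval, lmulred, leval_add h, leval_smul h, leval_red h x hx, ih, h.zero]; ring

theorem leval_isz (h : Sem o φ) (x : S) (a : List R) (ha : liszero o a = true) : leval φ x a = 0 := by
  induction a with
  | nil => simp [leval]
  | cons u a ih =>
    simp only [liszero, Bool.and_eq_true] at ha
    simp [leval, h.isz u ha.1, ih ha.2]

theorem sem_ext (h : Sem o φ) (x : S) {n : ℕ} {low : List R} (hx : x ^ n = leval φ x low) :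
    Sem (ext o n low) (leval φ x) where
  zero := rfl
  one := by simp [ext, leval, h.one]
  add := leval_add h x
  neg := leval_neg h x
  mul := leval_mulred h x hx
  isz := leval_isz h x
end

def opsZ : Ops ℤ where
  zero := 0
  one := 1
  add := fun a b => a + b
  neg := fun a => - a
  mul := fun a b => a * b
  isz := fun a => a == 0

theorem semZ {S : Type*} [CommRing S] : Sem opsZ (fun n : ℤ => (n : S)) where
  zero := by simp [opsZ]
  one := by simp [opsZ]
  add := by intro a b; simp [opsZ]
  neg := by intro a; simp [opsZ]
  mul := by intro a b; simp [opsZ]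
  isz := by intro a ha; simp [opsZ] at ha; simp [ha]

/-- integers modulo `p` -/
def opsM (p : ℤ) : Ops ℤ where
  zero := 0
  one := 1
  add := fun a b => (a + b) % p
  neg := fun a => (- a) % p
  mul := fun a b => (a * b) % p
  isz := fun a => a % p == 0

theorem cast_emod {S : Type*} [CommRing S] {p : ℤ} (hp : (p : S) = 0) (a : ℤ) :
    ((a % p : ℤ) : S) = a := by
  conv_rhs => rw [← Int.emod_add_mul_ediv a p]
  simp [hp]

theorem semM {S : Type*} [CommRing S] {p : ℤ} (hp : (p : S) = 0) :
    Sem (opsM p) (fun n : ℤ => (n : S)) where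
  zero := by simp [opsM]
  one := by simp [opsM]
  add := by intro a b; simp only [opsM, cast_emod hp]; simp
  neg := by intro a; simp only [opsM, cast_emod hp]; simp
  mul := by intro a b; simp only [opsM, cast_emod hp]; simp
  isz := by
    intro a ha
    simp only [opsM, beq_iff_eq] at ha
    rw [← cast_emod hp a, ha]; simp

def opow {R : Type} (o : Ops R) (a : R) : ℕ → R
  | 0 => o.one
  | n + 1 => o.mul a (opow o a n)

theorem Sem.pow {R : Type} {S : Type*} [CommRing S] {o : Ops R} {φ : R → S} (h : Sem o φ)
    (a : R) (n : ℕ) : φ (opow o a n) = φ a ^ n := by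
  induction n with
  | zero => simp [opow, h.one]
  | succ n ih => simp only [opow, h.mul, ih]; ring

/-- `a ^ (p ^ n)` -/
def ofrob {R : Type} (o : Ops R) (p : ℕ) (a : R) : ℕ → R
  | 0 => a
  | n + 1 => opow o (ofrob o p a n) p

theorem Sem.frob {R : Type} {S : Type*} [CommRing S] {o : Ops R} {φ : R → S} (h : Sem o φ)
    (p : ℕ) (a : R) (n : ℕ) : φ (ofrob o p a n) = φ a ^ (p ^ n) := by
  induction n with
  | zero => simp [ofrob]
  | succ n ih => rw [ofrob, h.pow, ih, ← pow_mul, pow_succ]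

/-- equality test -/
def Ops.eqb {R : Type} (o : Ops R) (a b : R) : Bool := o.isz (o.add a (o.neg b))

theorem Sem.eq {R : Type} {S : Type*} [CommRing S] {o : Ops R} {φ : R → S} (h : Sem o φ)
    {a b : R} (hab : o.eqb a b = true) : φ a = φ b := by
  have := h.isz _ hab
  rw [h.add, h.neg] at this
  exact add_neg_eq_zero.1 this

end S3

namespace S3
def dB : List (List ℤ) := [[40, 82, -96, 92, -85, 75, -41, 10], [17, 110, -111, 103, -98, 87, -46,
  11]]
def dA0 : List (List ℤ) := [[-10, -37, 30, -32, 37, -33, 17, -4], [-20, -83, 78, -73, 74, -66, 34,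
  -8]]
def dA1 : List (List ℤ) := [[-4, -14, 19, -13, 15, -14, 6, -1], [-5, -10, 20, -17, 15, -16, 9,
  -2]]
def de : List (List ℤ) := [[0, 0, 1, 1, 1, 0, 1, 0], [1, 0, 1, 1, 1, 1, 0, 0]]
def dQ4 : List (List ℤ) := [[-73, -367, -642, -23, -314, 186, -226, 47], [-119, -644, -1050, 278,
  -547, 498, -497, 184]]
def dBI : List (List ℤ) := [[10, 1, -105, 44, -46, 66, -32, 4], [5, -31, -57, 58, -23, 51, -43,
  11]]
def dG : List (List ℤ) := [[-5, -53, 54, -52, 53, -45, 22, -5], [-4, -7, 0, -2, 7, -9, 5, -1]]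
def dC : List ℤ := [-13, -28, 30, -35, 37, -33, 17, -4]
def dTR : List ℤ := [-2, -33, 36, -34, 33, -27, 13, -3]
def dNM : List ℤ := [-13, -42, 42, -44, 45, -42, 23, -6]
def dDI : List ℤ := [7, 58, -9, 23, -31, 12, -2, 1]
def dC1 : List ℤ := [7, 17, -15, 17, -17, 15, -8, 2]
def dTC : List ℤ := [-18303, -60054, -9962, -10232, -15805, -6338, 689, -1232]
def dUP : List ℤ := [361, -3344, 11851, -20062, 15365, -2359, 7, 16, 1]
def dS : List (List (List ℤ)) := [[[389, 1100, -939, 907, -965, 897, -484, 110], [-414, -1386,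
  1920, -2340, 2292, -1914, 954, -228], [183, 486, -1488, 1830, -1626, 1041, -423, 84], [-167,
  -146, 1050, -1186, 710, -255, 55, -14], [225, 210, -858, 690, -282, 123, -75, 30], [-141, -192,
  471, -309, 129, -123, 84, -30], [44, 68, -141, 85, -59, 66, -43, 14]], [[277, 778, -738, 872,
  -1030, 927, -491, 112], [42, -270, 612, -630, 240, -90, -24, 6], [-24, 150, -369, -105, 447,
  -414, 207, -36], [-178, -514, 189, 289, -461, 144, 5, -22], [294, 726, -345, 3, -93, 438, -309,
  90], [-159, -396, 138, -36, 132, -303, 177, -48], [43, 112, -57, 47, -73, 105, -56, 16]]]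
def dTRa : List ℤ := [-1, -11, 12, -11, 11, -9, 4, -1]
def dTRb : List ℤ := [1, 0]
def dNMa : List ℤ := [-4, -14, 14, -15, 15, -14, 8, -2]
def dNMb : List ℤ := [-1, 0]
def dDIa : List ℤ := [2, 19, -3, 8, -10, 4, -1, 0]
def dDIb : List ℤ := [1, 1]
def dC1a : List ℤ := [2, 6, -5, 6, -6, 5, -3, 1]
def dC1b : List ℤ := [1, -1]
def dQ4a : List ℤ := [-37, -178, -320, -30, -100, 110, -69, 12]
def dQ4b : List ℤ := [0, 1]
def dQ4c : List ℤ := [11, 46, 27, -79, 29, -37, 60, -24]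
def dQ4e : List ℤ := [1, 1]
def dBIa : List ℤ := [-17, -101, -127, -35, 8, 43, -7, -8]
def dBIb : List ℤ := [0, -1]
def dBIc : List ℤ := [-3, -2, -40, -52, 2, -3, 26, -13]
def dBIe : List ℤ := [1, 1]
def dN : List ℤ := [1, 5, 7, -7, 7, -7, 7, -4, 1]
def lowN : List ℤ := [-1, -5, -7, 7, -7, 7, -7, 4]
def dH : List ℤ := [16, 5, 49, 7, 14, 7, 7, -1, 1]
def dF : List ℤ := [1, 1, 2, -15, 15, -42, 70, -215, 695, -787, 929, -2042, 4935, -7014, 4020,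
  3593, -7780, 4198, 2564, -4879, 2653, -65, -548, 248, -12, -9, 21, -7, 8, 1, 2, -1, 1]
def lowN1 : List (List ℤ) := [[-5, -7, 7, -7, 7, -7, 4, -1], [-7, 7, -7, 7, -7, 4, -1], [7, -7, 7,
  -7, 4, -1], [-7, 7, -7, 4, -1], [7, -7, 4, -1], [-7, 4, -1], [4, -1]]

def oT : Ops (List ℤ) := ext opsZ 8 lowN
def oE : Ops (List (List ℤ)) := ext oT 2 [[-1], [-1]]
def oK : Ops (List (List (List ℤ))) := ext oE 2 [dB]
def oT2 : Ops (List (List ℤ)) := ext oT 7 lowN1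
def o56 : Ops (List (List (List ℤ))) := ext oT2 2 [[[-1]], [[-1]]]

def lscale (k : ℤ) : List ℤ → List ℤ
  | [] => []
  | c :: l => c * k ^ l.length :: lscale k l

def hev {R C : Type} (o : Ops R) (c : C → R) (A : R) : List C → R
  | [] => o.zero
  | x :: l => o.add (c x) (o.mul A (hev o c A l))

/-- replace `w` by `-1 - w` -/
def hev2 : List (List ℤ) → List (List ℤ)
  | [] => []
  | x :: l => oE.add [x] (oE.mul [[-1], [-1]] (hev2 l))

/-- put a polynomial in `t` into the second variable -/
def lsecond : List ℤ → List (List ℤ)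
  | [] => []
  | c :: l => [c] :: lsecond l

/-- coefficients of the quartic satisfied by `3 α` over `ℚ(t)` -/
def dq : List (List ℤ) := [[81], [63, 153, -135, 153, -153, 135, -72, 18],
  [-27, -42, 45, -54, 60, -54, 27, -6], [0, -3, 6, -3], [1]]
def lowq : List (List ℤ) := [[-81], [-63, -153, 135, -153, 153, -135, 72, -18],
  [27, 42, -45, 54, -60, 54, -27, 6], [0, 3, -6, 3]]
def oQ : Ops (List (List ℤ)) := ext oT 4 lowq

theorem chk_f : oQ.isz (hev oQ (fun c => [[c]]) [[], [1]] (lscale 3 dF)) = true := by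
  decide +kernel

def lscaleT (k : ℤ) : List (List ℤ) → List (List ℤ)
  | [] => []
  | c :: l => lsmul opsZ (k ^ l.length) c :: lscaleT k l

theorem chk_q : oK.isz (hev oK (fun c => [[c]]) [dA0, dA1] (lscaleT 6 dq)) = true := by
  decide +kernel

theorem chk_S : o56.eqb (o56.mul dS dS)
    (o56.mul [[[441]]] (o56.mul (dB.map lsecond) (dB.map fun x => [x]))) = true := by
  decide +kernel

/-- conjugate of `B` -/
def dB' : List (List ℤ) := hev2 dB
theorem chk_C : oE.eqb (oE.mul dB dB') [oT.mul [-3] (oT.mul dC dC)] = true := by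
  decide +kernel

def dU : List ℤ := [1, 0, 0, -1, 0, 0, 1]

theorem chk_U : oT.isz (hev oT (fun c => [c]) dU (lscale 3 dUP)) = true := by decide +kernel

/-- `3 v = 3 a + U b` -/
def rep3 (v a b : List ℤ) : Bool :=
  oT.eqb v (oT.add (oT.mul [3] a) (oT.mul dU b))

theorem chk_TR : rep3 dTR dTRa dTRb = true := by decide +kernel
theorem chk_NM : rep3 dNM dNMa dNMb = true := by decide +kernel
theorem chk_DI : rep3 dDI dDIa dDIb = true := by decide +kernel
theorem chk_C1 : rep3 dC1 dC1a dC1b = true := by decide +kernel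

theorem chk_G : oE.isz (oE.add (oE.mul dG (oE.add dG (oE.mul [[-3]] [dTR]))) (oE.mul [[27]] [dNM]))
    = true := by decide +kernel

/-- `(tr ^ 2 - 4 nm) * di = 1` -/
theorem chk_dg : oT.eqb (oT.mul (oT.add (oT.mul dTR dTR) (oT.mul [-12] dNM)) dDI) [27] = true := by
  decide +kernel

/-- `3 v = 9 (3 a + U b) + (3 c + U e) G` -/
def rep9 (v : List (List ℤ)) (a b c e : List ℤ) : Bool :=
  oE.eqb (oE.mul [[3]] v) (oE.add (oE.mul [[9]] [oT.add (oT.mul [3] a) (oT.mul dU b)])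
    (oE.mul dG [oT.add (oT.mul [3] c) (oT.mul dU e)]))

theorem chk_Q4 : rep9 dQ4 dQ4a dQ4b dQ4c dQ4e = true := by decide +kernel
theorem chk_BI : rep9 dBI dBIa dBIb dBIc dBIe = true := by decide +kernel

theorem chk_bbi : oE.eqb (oE.mul dB dBI) [[81]] = true := by decide +kernel
theorem chk_q4 : oE.eqb (oE.mul [[9]] (oE.mul de de)) (oE.add dB (oE.mul [[4]] dQ4)) = true := by
  decide +kernel

theorem chk_H : oT.isz (hev oT (fun c => [c]) dC1 (lscale 3 dH)) = true := by decide +kernel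
theorem chk_TC : oT.eqb (hev oT (fun c => [c]) dC1 (lscale 3 dTC)) [0, 32563 * 3 ^ 7] = true := by
  decide +kernel

end S3

namespace S3

theorem grp {G Γ S : Type*} [Group G] [Group Γ] [Group S] [Finite Γ] (ρ : G →* Γ)
    (hρ : Function.Surjective ρ) (Ω : Subgroup G) (hΩ : Ω.index = 2) (hk : ρ.ker ≤ Ω)
    (Ψ : Ω →* S) (hΨ : ∀ g : Ω, Ψ g = 1 ↔ ρ g = 1) (hS : Nat.card S = 336)
    (hd : Nat.card Γ ∣ 672 → 672 ∣ Nat.card Γ) :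
    Nat.card Γ = 672 ∧ ∃ H : Subgroup Γ, H.index = 2 ∧ Nonempty (H ≃* S) := by
  have hi : (Ω.map ρ).index = 2 := by
    rw [Subgroup.index_map, MonoidHom.range_eq_top.2 hρ, sup_eq_left.2 hk, hΩ]; simp
  let ρ' : Ω →* Ω.map ρ := ρ.subgroupMap Ω
  have hρ' : Function.Surjective ρ' := ρ.subgroupMap_surjective Ω
  have hker : ρ'.ker = Ψ.ker := by
    ext g
    rw [MonoidHom.mem_ker, MonoidHom.mem_ker, hΨ, Subtype.ext_iff]
    rfl
  let e : Ω.map ρ ≃* Ψ.range :=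
    (QuotientGroup.quotientKerEquivOfSurjective ρ' hρ').symm.trans
      ((QuotientGroup.quotientMulEquivOfEq hker).trans (QuotientGroup.quotientKerEquivRange Ψ))
  have hc : Nat.card (Ω.map ρ) = Nat.card Ψ.range := Nat.card_congr e.toEquiv
  have hG : Nat.card (Ω.map ρ) * 2 = Nat.card Γ := by
    rw [← hi]; exact Subgroup.card_mul_index _
  have h1 : Nat.card Ψ.range ∣ 336 := hS ▸ Subgroup.card_subgroup_dvd_card _
  have h2 : 336 ∣ Nat.card Ψ.range := by
    have h0 : Nat.card Γ ∣ 672 := by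
      rw [← hG, hc]; exact Nat.mul_dvd_mul_right h1 2
    have := hd h0
    rw [← hc]; omega
  have h3 : Nat.card Ψ.range = 336 := Nat.dvd_antisymm h1 h2
  refine ⟨by omega, _, hi, ⟨e.trans ?_⟩⟩
  have : Finite S := Nat.finite_of_card_ne_zero (by omega)
  have ht : Ψ.range = ⊤ := Subgroup.eq_top_of_card_eq _ (by rw [h3, hS])
  exact (MulEquiv.subgroupCongr ht).trans Subgroup.topEquiv

end S3

namespace S3

theorem card_sl : Nat.card SL(2, ZMod 7) = 336 := by
  let e : SL(2, ZMod 7) ≃ {x : ZMod 7 × ZMod 7 × ZMod 7 × ZMod 7 //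
      x.1 * x.2.2.2 - x.2.1 * x.2.2.1 = 1} :=
    { toFun := fun M => ⟨(M.1 0 0, M.1 0 1, M.1 1 0, M.1 1 1), by
        have := M.2; rw [Matrix.det_fin_two] at this; exact this⟩
      invFun := fun x => ⟨!![x.1.1, x.1.2.1; x.1.2.2.1, x.1.2.2.2], by
        rw [Matrix.det_fin_two_of]; exact x.2⟩
      left_inv := by
        intro M; ext i j; fin_cases i <;> fin_cases j <;> rfl
      right_inv := by intro x; rfl }
  rw [Nat.card_congr e, Nat.card_eq_fintype_card]
  have : Fintype.card {x : ZMod 7 × ZMod 7 × ZMod 7 × ZMod 7 //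
      x.1 * x.2.2.2 - x.2.1 * x.2.2.1 = 1} = 336 := by decide +kernel
  convert this

abbrev V := ZMod 7 × ZMod 7

def vdet (u v : V) : ZMod 7 := u.1 * v.2 - u.2 * v.1

def sq (x : ZMod 7) : Bool := x == 1 || x == 2 || x == 4

def chi (x : ZMod 7) : ℤ := if x == 0 then 0 else if sq x then 1 else -1

def act (M : SL(2, ZMod 7)) (v : V) : V :=
  (M.1 0 0 * v.1 + M.1 0 1 * v.2, M.1 1 0 * v.1 + M.1 1 1 * v.2)

theorem act_mul (M M' : SL(2, ZMod 7)) (v : V) : act (M * M') v = act M (act M' v) := by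
  simp only [act, Matrix.SpecialLinearGroup.coe_mul, Matrix.mul_apply, Fin.sum_univ_two]
  ext <;> simp <;> ring

theorem act_one (v : V) : act 1 v = v := by
  simp [act]

theorem act_smul (M : SL(2, ZMod 7)) (s : ZMod 7) (v : V) : act M (s • v) = s • act M v := by
  simp only [act]
  ext <;> simp <;> ring

theorem act_ne (M : SL(2, ZMod 7)) {v : V} (hv : v ≠ 0) : act M v ≠ 0 := by
  intro h
  apply hv
  rw [← act_one v, ← inv_mul_cancel M, act_mul, h]
  simp [act]

theorem vdet_act (M : SL(2, ZMod 7)) (u v : V) : vdet (act M u) (act M v) = vdet u v := by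
  have := M.2
  rw [Matrix.det_fin_two] at this
  simp only [vdet, act]
  linear_combination (u.1 * v.2 - u.2 * v.1) * this

theorem sq_mul : ∀ x y : ZMod 7, sq x = true → sq y = true → sq (x * y) = true := by decide +kernel
theorem sq_inv : ∀ x : ZMod 7, sq x = true → sq x⁻¹ = true ∧ x * x⁻¹ = 1 ∧ x ^ 3 = 1 := by
  decide +kernel
theorem chi_one : ∀ x : ZMod 7, chi x = 1 → sq x = true := by decide +kernel
theorem sq_ne : ∀ x : ZMod 7, sq x = true → x ≠ 0 := by decide +kernel

/-- the matrix with prescribed image classes of three base vectors -/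
theorem base_mat (u1 u2 u3 : V) (h12 : chi (vdet u1 u2) = 1) (h13 : chi (vdet u1 u3) = 1)
    (h32 : chi (vdet u3 u2) = 1) : ∃ M : SL(2, ZMod 7),
    (∃ s, sq s = true ∧ act M (1, 0) = s • u1) ∧ (∃ s, sq s = true ∧ act M (0, 1) = s • u2) ∧
    (∃ s, sq s = true ∧ act M (1, 1) = s • u3) := by
  have a := chi_one _ h12
  have b := chi_one _ h13
  have c := chi_one _ h32
  set d := vdet u1 u2 with hd
  obtain ⟨ia, ha, ha3⟩ := sq_inv d a
  set x := vdet u3 u2 * d⁻¹ with hx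
  set y := vdet u1 u3 * d⁻¹ with hy
  have sx : sq x = true := sq_mul _ _ c ia
  have sy : sq y = true := sq_mul _ _ b ia
  set k := x * y * d with hk
  have sk : sq k = true := sq_mul _ _ (sq_mul _ _ sx sy) a
  have hk3 := (sq_inv k sk).2.2
  refine ⟨⟨!![k * x * u1.1, k * y * u2.1; k * x * u1.2, k * y * u2.2], ?_⟩,
    ⟨k * x, sq_mul _ _ sk sx, ?_⟩, ⟨k * y, sq_mul _ _ sk sy, ?_⟩, ⟨k, sk, ?_⟩⟩
  · rw [Matrix.det_fin_two_of, ← hk3]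
    have : d = u1.1 * u2.2 - u1.2 * u2.1 := rfl
    calc _ = k ^ 2 * (x * y * (u1.1 * u2.2 - u1.2 * u2.1)) := by ring
      _ = k ^ 2 * k := by rw [← this]
      _ = k ^ 3 := by ring
  · ext <;> simp [act]
  · ext <;> simp [act]
  · have e1 : x * u1.1 + y * u2.1 = u3.1 := by
      have : (vdet u3 u2 * u1.1 + vdet u1 u3 * u2.1) = d * u3.1 := by
        rw [hd]; simp only [vdet]; ring
      calc _ = (vdet u3 u2 * u1.1 + vdet u1 u3 * u2.1) * d⁻¹ := by rw [hx, hy]; ring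
        _ = u3.1 * (d * d⁻¹) := by rw [this]; ring
        _ = _ := by rw [ha, mul_one]
    have e2 : x * u1.2 + y * u2.2 = u3.2 := by
      have : (vdet u3 u2 * u1.2 + vdet u1 u3 * u2.2) = d * u3.2 := by
        rw [hd]; simp only [vdet]; ring
      calc _ = (vdet u3 u2 * u1.2 + vdet u1 u3 * u2.2) * d⁻¹ := by rw [hx, hy]; ring
        _ = u3.2 * (d * d⁻¹) := by rw [this]; ring
        _ = _ := by rw [ha, mul_one]
    ext
    · simp [act]; rw [← e1]; ring
    · simp [act]; rw [← e2]; ring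

def sigOk (F : List V) (v v' : V) : Bool :=
  F.all fun b => chi (vdet v' b) == chi (vdet v b)

def sameCls (v v' : V) : Bool := v == v' || v == (2 : ZMod 7) • v' || v == (4 : ZMod 7) • v'

def Det (F : List V) (v : V) : Prop :=
  ∀ v' : V, v' = 0 ∨ sigOk F v v' = false ∨ sameCls v v' = true

instance (F : List V) (v : V) : Decidable (Det F v) := by unfold Det; infer_instance

def F0 : List V := [(1, 0), (0, 1), (1, 1)]
def F1 : List V := F0 ++ [(1, 2)]

theorem det_F1 : ∀ v ∈ F1, Det F0 v := by decide +kernel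
theorem det_all : ∀ v : V, Det F1 v := by decide +kernel

theorem ext_lemma (R : V → V → Prop) (h1 : ∀ v, v ≠ 0 → ∃ v', v' ≠ 0 ∧ R v v')
    (h2 : ∀ u v u' v', u ≠ 0 → v ≠ 0 → u' ≠ 0 → v' ≠ 0 → R u u' → R v v' → chi (vdet u' v') = chi (vdet u v))
    (h3 : ∀ u u' s, sq s = true → R u u' → R u (s • u')) (h0 : ∀ v ∈ F0, R v v) (v : V)
    (hv : v ≠ 0) : R v v := by
  have key : ∀ F : List V, (∀ b ∈ F, b ≠ 0 ∧ R b b) → ∀ v, v ≠ 0 → Det F v → R v v := by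
    intro F hF v hv hD
    obtain ⟨v', hv', hR⟩ := h1 v hv
    rcases hD v' with h | h | h
    · exact absurd h hv'
    · exfalso
      have : sigOk F v v' = true := by
        rw [sigOk, List.all_eq_true]
        intro b hb
        rw [beq_iff_eq]
        exact h2 v b v' b hv (hF b hb).1 hv' (hF b hb).1 hR (hF b hb).2
      rw [this] at h; exact absurd h (by decide)
    · simp only [sameCls, Bool.or_eq_true, beq_iff_eq] at h
      rcases h with (h | h) | h
      · rw [← h] at hR; exact hR
      · have := h3 v v' 2 (by decide +kernel) hR; rw [← h] at this; exact this
      · have := h3 v v' 4 (by decide +kernel) hR; rw [← h] at this; exact this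
  have n0 : ∀ b ∈ F1, b ≠ 0 := by decide +kernel
  have k1 : ∀ b ∈ F1, b ≠ 0 ∧ R b b := fun b hb =>
    ⟨n0 b hb, key F0 (fun b hb => ⟨n0 b (List.mem_append_left _ hb), h0 b hb⟩) b (n0 b hb)
      (det_F1 b hb)⟩
  exact key F1 k1 v hv (det_all v)

theorem sq_one_of (x : ZMod 7) : sq x = true → x * x = 1 → x = 1 := by
  revert x; decide +kernel

theorem act_unique (A : SL(2, ZMod 7)) (h : ∀ v : V, v ≠ 0 → ∃ s, sq s = true ∧ act A v = s • v) :
    A = 1 := by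
  obtain ⟨a, ha, ha'⟩ := h (1, 0) (by decide)
  obtain ⟨b, hb, hb'⟩ := h (0, 1) (by decide)
  obtain ⟨c, hc, hc'⟩ := h (1, 1) (by decide)
  simp only [act, Prod.ext_iff, Prod.smul_fst, Prod.smul_snd, smul_eq_mul, mul_one, mul_zero,
    add_zero, zero_add] at ha' hb' hc'
  have hd := A.2
  rw [Matrix.det_fin_two] at hd
  obtain ⟨h00, h10⟩ := ha'
  obtain ⟨h01, h11⟩ := hb'
  obtain ⟨e1, e2⟩ := hc'
  rw [h00, h01, add_zero] at e1
  rw [h10, h11, zero_add] at e2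
  rw [h00, h01, h10, h11, e1, e2] at hd
  have : c = 1 := sq_one_of c hc (by linear_combination hd)
  ext i j
  fin_cases i <;> fin_cases j
  · simpa [h00, e1] using this
  · simpa using h01
  · simpa using h10
  · simpa [h11, e2] using this

theorem sl2_hom {G O : Type*} [Group G] [MulAction G O] (X : V → O)
    (hX : ∀ u v, u ≠ 0 → v ≠ 0 → (X u = X v ↔ ∃ s, sq s = true ∧ u = s • v))
    (hσ : ∀ (g : G) u, u ≠ 0 → ∃ u', u' ≠ 0 ∧ g • X u = X u')
    (hχ : ∀ (g : G) u v u' v', u ≠ 0 → v ≠ 0 → u' ≠ 0 → v' ≠ 0 → g • X u = X u' →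
      g • X v = X v' → chi (vdet u' v') = chi (vdet u v)) :
    ∃ Ψ : G →* SL(2, ZMod 7), ∀ g, Ψ g = 1 ↔ ∀ v, v ≠ 0 → g • X v = X v := by
  have hs0 : ∀ (s : ZMod 7) (v : V), sq s = true → v ≠ 0 → s • v ≠ 0 := fun s v hs hv =>
    fun h => hv (by
      rw [← one_smul (ZMod 7) v, ← (sq_inv s hs).2.1, mul_comm, mul_smul, h, smul_zero])
  have hXs : ∀ (s : ZMod 7) (v : V), sq s = true → v ≠ 0 → X (s • v) = X v := fun s v hs hv =>
    (hX _ _ (hs0 s v hs hv) hv).2 ⟨s, hs, rfl⟩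
  have ex : ∀ g : G, ∃ M : SL(2, ZMod 7), ∀ v, v ≠ 0 → g • X v = X (act M v) := by
    intro g
    have n1 : ((1, 0) : V) ≠ 0 := by decide
    have n2 : ((0, 1) : V) ≠ 0 := by decide
    have n3 : ((1, 1) : V) ≠ 0 := by decide
    obtain ⟨u1, z1, g1⟩ := hσ g (1, 0) n1
    obtain ⟨u2, z2, g2⟩ := hσ g (0, 1) n2
    obtain ⟨u3, z3, g3⟩ := hσ g (1, 1) n3
    obtain ⟨M, ⟨s1, q1, m1⟩, ⟨s2, q2, m2⟩, ⟨s3, q3, m3⟩⟩ := base_mat u1 u2 u3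
      ((hχ g _ _ _ _ n1 n2 z1 z2 g1 g2).trans (by decide +kernel))
      ((hχ g _ _ _ _ n1 n3 z1 z3 g1 g3).trans (by decide +kernel))
      ((hχ g _ _ _ _ n3 n2 z3 z2 g3 g2).trans (by decide +kernel))
    refine ⟨M, fun v hv => ext_lemma (fun v v' => g • X v = X (act M v')) ?_ ?_ ?_ ?_ v hv⟩
    · intro v hv
      obtain ⟨w, hw, hg⟩ := hσ g v hv
      refine ⟨act M⁻¹ w, act_ne _ hw, ?_⟩
      rw [← act_mul, mul_inv_cancel, act_one, hg]
    · intro u v u' v' hu0 hv0 hu' hv' hu hv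
      rw [← vdet_act M]
      exact hχ g _ _ _ _ hu0 hv0 (act_ne _ hu') (act_ne _ hv') hu hv
    · intro u u' s hs h
      rcases eq_or_ne u' 0 with rfl | hu'
      · rw [smul_zero]; exact h
      · rw [act_smul, hXs _ _ hs (act_ne M hu'), h]
    · intro v hv
      simp only [F0, List.mem_cons, List.not_mem_nil, or_false] at hv
      rcases hv with rfl | rfl | rfl
      · rw [m1, hXs _ _ q1 z1, g1]
      · rw [m2, hXs _ _ q2 z2, g2]
      · rw [m3, hXs _ _ q3 z3, g3]
  have uniq : ∀ M M' : SL(2, ZMod 7), (∀ v, v ≠ 0 → X (act M v) = X (act M' v)) → M = M' := by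
    intro M M' h
    have : M'⁻¹ * M = 1 := act_unique _ fun v hv => by
      obtain ⟨s, hs, e⟩ := (hX _ _ (act_ne M hv) (act_ne M' hv)).1 (h v hv)
      refine ⟨s, hs, ?_⟩
      rw [act_mul, e, act_smul, ← act_mul, inv_mul_cancel, act_one]
    rw [inv_mul_eq_one] at this
    exact this.symm
  choose Ψ hΨ using ex
  refine ⟨⟨⟨Ψ, ?_⟩, ?_⟩, ?_⟩
  · exact uniq _ _ fun v hv => by rw [← hΨ 1 v hv, act_one, one_smul]
  · intro g g'
    exact uniq _ _ fun v hv => by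
      rw [← hΨ _ v hv, act_mul, ← hΨ g _ (act_ne _ hv), ← hΨ g' v hv, mul_smul]
  · intro g
    constructor
    · intro h v hv
      have h' : Ψ g = 1 := h
      rw [hΨ g v hv, h', act_one]
    · intro h
      exact uniq (Ψ g) 1 fun v hv => by rw [← hΨ g v hv, h v hv, act_one]
end S3

namespace S3

theorem Sem.hev {R C : Type} {S : Type*} [CommRing S] {o : Ops R} {φ : R → S} (h : Sem o φ)
    (c : C → R) (A : R) (l : List C) : φ (hev o c A l) = leval (fun x => φ (c x)) (φ A) l := by
  induction l with
  | nil => simp [S3.hev, leval, h.zero]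
  | cons x l ih => simp only [S3.hev, leval, h.add, h.mul, ih]

section
variable {S : Type*} [CommRing S]

def evT (t : S) (l : List ℤ) : S := leval (fun n : ℤ => (n : S)) t l
def evE (t w : S) (l : List (List ℤ)) : S := leval (evT t) w l
def evK (t w y : S) (l : List (List (List ℤ))) : S := leval (evE t w) y l
def ev2 (t t' : S) (l : List (List ℤ)) : S := leval (evT t) t' l
def ev6 (t t' w : S) (l : List (List (List ℤ))) : S := leval (ev2 t t') w l

theorem leval_map {S' : Type*} [CommRing S'] (g : S →+* S') {R : Type} (φ : R → S) (x : S)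
    (l : List R) : g (leval φ x l) = leval (fun r => g (φ r)) (g x) l := by
  induction l with
  | nil => simp [leval]
  | cons c l ih => simp only [leval, map_add, map_mul, ih]

theorem evT_map {S' : Type*} [CommRing S'] (g : S →+* S') (t : S) (l : List ℤ) :
    g (evT t l) = evT (g t) l := by
  rw [evT, leval_map]; simp [evT]
theorem evE_map {S' : Type*} [CommRing S'] (g : S →+* S') (t w : S) (l : List (List ℤ)) :
    g (evE t w l) = evE (g t) (g w) l := by
  rw [evE, leval_map]; simp only [evE, evT_map]
theorem evK_map {S' : Type*} [CommRing S'] (g : S →+* S') (t w y : S) (l : List (List (List ℤ))) :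
    g (evK t w y l) = evK (g t) (g w) (g y) l := by
  rw [evK, leval_map]; simp only [evK, evE_map]
theorem ev2_map {S' : Type*} [CommRing S'] (g : S →+* S') (t w : S) (l : List (List ℤ)) :
    g (ev2 t w l) = ev2 (g t) (g w) l := by
  rw [ev2, leval_map]; simp only [ev2, evT_map]
theorem ev6_map {S' : Type*} [CommRing S'] (g : S →+* S') (t t' w : S)
    (l : List (List (List ℤ))) : g (ev6 t t' w l) = ev6 (g t) (g t') (g w) l := by
  rw [ev6, leval_map]; simp only [ev6, ev2_map]

theorem semT {t : S} (ht : evT t dN = 0) : Sem oT (evT t) := by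
  refine sem_ext semZ t ?_
  simp only [evT, leval, dN, lowN] at ht ⊢
  push_cast at ht ⊢
  linear_combination ht

theorem evT_const (t : S) (n : ℤ) : evT t [n] = n := by simp [evT, leval]

theorem semE {t w : S} (ht : evT t dN = 0) (hw : w ^ 2 + w + 1 = 0) : Sem oE (evE t w) := by
  refine sem_ext (semT ht) w ?_
  simp only [leval, evT_const]
  push_cast
  linear_combination hw

theorem semK {t w y : S} (ht : evT t dN = 0) (hw : w ^ 2 + w + 1 = 0) (hy : y ^ 2 = evE t w dB) :
    Sem oK (evK t w y) := by
  refine sem_ext (semE ht hw) y ?_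
  simp only [leval, hy]; ring

theorem evE_const (t w : S) (l : List ℤ) : evE t w [l] = evT t l := by simp [evE, leval]
theorem evK_const (t w y : S) (l : List (List ℤ)) : evK t w y [l] = evE t w l := by
  simp [evK, leval]
theorem ev2_const (t t' : S) (l : List ℤ) : ev2 t t' [l] = evT t l := by simp [ev2, leval]
theorem ev6_const (t t' w : S) (l : List (List ℤ)) : ev6 t t' w [l] = ev2 t t' l := by
  simp [ev6, leval]

theorem fact_N1 [IsDomain S] {t t' : S} (ht : evT t dN = 0) (ht' : evT t' dN = 0) (hne : t ≠ t') :
    t' ^ 7 = ev2 t t' lowN1 := by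
  rw [ev2]
  have h1 : (t' - t) * (t' ^ 7 - leval (evT t) t' lowN1) = 0 := by
    simp only [evT, leval, dN, lowN1] at ht ht' ⊢
    push_cast at ht ht' ⊢
    linear_combination ht' - ht
  rcases mul_eq_zero.1 h1 with h | h
  · exact absurd (sub_eq_zero.1 h).symm hne
  · exact sub_eq_zero.1 h

theorem sem2 [IsDomain S] {t t' : S} (ht : evT t dN = 0) (ht' : evT t' dN = 0) (hne : t ≠ t') :
    Sem oT2 (ev2 t t') := sem_ext (semT ht) t' (fact_N1 ht ht' hne)

theorem sem6 [IsDomain S] {t t' w : S} (ht : evT t dN = 0) (ht' : evT t' dN = 0) (hne : t ≠ t')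
    (hw : w ^ 2 + w + 1 = 0) : Sem o56 (ev6 t t' w) := by
  refine sem_ext (sem2 ht ht' hne) w ?_
  simp only [leval, ev2_const, evT_const]
  push_cast
  linear_combination hw

theorem ev2_second (t t' : S) (l : List ℤ) : ev2 t t' (lsecond l) = evT t' l := by
  induction l with
  | nil => simp [ev2, lsecond, leval, evT]
  | cons c l ih =>
    simp only [ev2, evT] at ih
    simp only [ev2, lsecond, leval, evT] at ih ⊢
    rw [ih]; simp

theorem leval_listmap {R R' : Type} (φ : R' → S) (g : R → R') (x : S) (l : List R) :
    leval φ x (l.map g) = leval (fun r => φ (g r)) x l := by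
  induction l with
  | nil => rfl
  | cons c l ih => simp [leval, ih]

theorem ev6_second (t t' w : S) (l : List (List ℤ)) :
    ev6 t t' w (l.map lsecond) = evE t' w l := by
  rw [ev6, leval_listmap]; simp only [ev2_second]; rfl

theorem ev6_first (t t' w : S) (l : List (List ℤ)) :
    ev6 t t' w (l.map fun x => [x]) = evE t w l := by
  rw [ev6, leval_listmap]; simp only [ev2_const]; rfl

theorem fact_S [IsDomain S] {t t' w : S} (ht : evT t dN = 0) (ht' : evT t' dN = 0) (hne : t ≠ t')
    (hw : w ^ 2 + w + 1 = 0) :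
    ev6 t t' w dS ^ 2 = 441 * (evE t' w dB * evE t w dB) := by
  have h := sem6 ht ht' hne hw
  have := h.eq chk_S
  rw [h.mul, h.mul, h.mul, ev6_second, ev6_first, ev6_const, ev2_const, evT_const] at this
  push_cast at this
  linear_combination this

theorem evE_hev2 {t w : S} (ht : evT t dN = 0) (hw : w ^ 2 + w + 1 = 0) (l : List (List ℤ)) :
    evE t w (hev2 l) = evE t (-1 - w) l := by
  have h := semE ht hw
  induction l with
  | nil => simp [hev2, evE, leval]
  | cons x l ih =>
    rw [hev2, h.add, h.mul, ih, evE_const]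
    simp only [evE, leval, evT_const]
    push_cast
    ring

theorem fact_C {t w : S} (ht : evT t dN = 0) (hw : w ^ 2 + w + 1 = 0) :
    evE t w dB * evE t (-1 - w) dB = ((1 + 2 * w) * evT t dC) ^ 2 := by
  have h := semE ht hw
  have hT := semT ht
  have := h.eq chk_C
  rw [h.mul, dB', evE_hev2 ht hw, evE_const, hT.mul, hT.mul, evT_const] at this
  push_cast at this
  linear_combination this - 4 * (evT t dC) ^ 2 * hw

def A18 (t w y : S) : S := evK t w y [dA0, dA1]

theorem leval_scale (k x : S) (k' : ℤ) (hk : (k' : S) = k) (l : List ℤ) :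
    k * leval (fun n : ℤ => (n : S)) (k * x) (lscale k' l) =
      k ^ l.length * leval (fun n : ℤ => (n : S)) x l := by
  induction l with
  | nil => simp [leval, lscale]
  | cons c l ih =>
    simp only [leval, lscale, List.length_cons]
    push_cast
    rw [hk]
    linear_combination k * x * ih

theorem evT_smul (t : S) (k : ℤ) (l : List ℤ) : evT t (lsmul opsZ k l) = k * evT t l :=
  leval_smul semZ t k l

theorem fact_f {K : Type*} [Field K] [CharZero K] {t w y a : K} (ht : evT t dN = 0)
    (hw : w ^ 2 + w + 1 = 0) (hy : y ^ 2 = evE t w dB) (ha : 18 * a = A18 t w y) :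
    evT a dF = 0 := by
  have hK := semK ht hw hy
  have hq := hK.isz _ chk_q
  rw [hK.hev] at hq
  have hA : evK t w y [dA0, dA1] = 6 * (3 * a) := by rw [← A18, ← ha]; ring
  simp only [evK_const, evE_const, hA, dq, lscaleT, leval, evT_smul, List.length] at hq
  have hq' : (3 * a) ^ 4 = leval (evT t) (3 * a) lowq := by
    have h0 : (6 : K) ^ 4 * ((3 * a) ^ 4 - leval (evT t) (3 * a) lowq) = 0 := by
      rw [← hq]
      simp only [lowq, leval, evT]
      push_cast
      ring
    have := (mul_eq_zero.1 h0).resolve_left (by norm_num)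
    exact sub_eq_zero.1 this
  have hQ : Sem oQ (leval (evT t) (3 * a)) := sem_ext (semT ht) _ hq'
  have h := hQ.isz _ chk_f
  rw [hQ.hev] at h
  have e1 : leval (evT t) (3 * a) [[], [1]] = 3 * a := by simp [leval, evT]
  have e2 : (fun c : ℤ => leval (evT t) (3 * a) [[c]]) = fun c : ℤ => (c : K) := by
    funext c; simp [leval, evT]
  rw [e1, e2] at h
  have := leval_scale (3 : K) a 3 (by norm_num) dF
  rw [h, mul_zero] at this
  exact (mul_eq_zero.1 this.symm).resolve_left (pow_ne_zero _ (by norm_num))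

theorem aeval_f3 {K : Type*} [Field K] [CharZero K] [Algebra ℚ K] (a : K) :
    aeval a f3 = evT a dF := by
  simp only [f3, map_add, map_sub, map_mul, map_pow, aeval_X, map_ofNat, map_one, evT, leval, dF]
  push_cast
  ring

/-- evaluation at integers modulo `p` -/
def nT (p r : ℤ) (l : List ℤ) : ℤ := hev (opsM p) (fun c => c) r l
def nE (p r w : ℤ) (l : List (List ℤ)) : ℤ := hev (opsM p) (nT p r) w l
def n6 (p r r' w : ℤ) (l : List (List (List ℤ))) : ℤ :=
  hev (opsM p) (fun x => hev (opsM p) (nT p r) r' x) w l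

theorem nT_sem {p : ℤ} (hp : (p : S) = 0) (r : ℤ) (l : List ℤ) :
    ((nT p r l : ℤ) : S) = evT (r : S) l := (semM hp).hev _ _ _
theorem nE_sem {p : ℤ} (hp : (p : S) = 0) (r w : ℤ) (l : List (List ℤ)) :
    ((nE p r w l : ℤ) : S) = evE (r : S) (w : S) l := by
  refine ((semM hp).hev _ _ _).trans ?_
  simp only [nT_sem hp]; rfl
theorem n6_sem {p : ℤ} (hp : (p : S) = 0) (r r' w : ℤ) (l : List (List (List ℤ))) :
    ((n6 p r r' w l : ℤ) : S) = ev6 (r : S) (r' : S) (w : S) l := by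
  refine ((semM hp).hev _ _ _).trans ?_
  simp only [(semM hp).hev, nT_sem hp]; rfl
end
end S3

namespace S3

theorem int_zero {k : Type*} [CommRing k] [Nontrivial k] {p : ℕ} (hp : p.Prime) (h0 : (p : k) = 0)
    {n : ℤ} (hn : (n : k) = 0) : n % (p : ℤ) = 0 := by
  by_contra h
  have hc : IsCoprime (p : ℤ) n :=
    ((Nat.prime_iff_prime_int.1 hp).coprime_iff_not_dvd).2 fun hd => h (Int.emod_eq_zero_of_dvd hd)
  obtain ⟨a, b, e⟩ := hc
  have := congrArg (fun z : ℤ => (z : k)) e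
  simp [h0, hn] at this

theorem zero_int {k : Type*} [CommRing k] {p : ℕ} (h0 : (p : k) = 0)
    {n : ℤ} (hn : n % (p : ℤ) = 0) : (n : k) = 0 := by
  obtain ⟨c, rfl⟩ := Int.dvd_of_emod_eq_zero hn
  simp [h0]

def rr (a : Fin 8) : ℤ := [551, 783, 3667, 6465, 3342, 4239, 1450, 6186].getD a 0
def ee (a : Fin 8) : ℤ := [1081, 8301, 8820, 6455, 5154, 6788, 1157, 8041].getD a 0
def ff (a : Fin 8) : ℤ := [1153, 4970, 8751, 8782, 2735, 1939, 3665, 6929].getD a 0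
def pts (a : Fin 8) : V := [(1, 0), (0, 1), (1, 1), (2, 1), (3, 1), (4, 1), (5, 1), (6, 1)].getD a 0

theorem chk_r : ∀ a, nT 8893 (rr a) dN % 8893 = 0 := by decide +kernel
theorem chk_rd : ∀ a b, a = b ∨ (rr a - rr b) % 8893 ≠ 0 := by decide +kernel
theorem chk_e : ∀ a, (ee a * ee a - nE 8893 (rr a) 249 dB) % 8893 = 0 := by decide +kernel
theorem chk_ff : ∀ a, (ee a * ff a - 499 * nT 8893 (rr a) dC) % 8893 = 0 := by decide +kernel
theorem chk_ed : ∀ a b, ee a % 8893 ≠ 0 ∧ (ee a + ee b) % 8893 ≠ 0 ∧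
    (a = b ∨ (ee a - ee b) % 8893 ≠ 0) := by decide +kernel
theorem chk_rel : ∀ a b, a = b ∨ (21 * (ee a * ee b) - chi (vdet (pts a) (pts b)) *
    n6 8893 (rr a) (rr b) 249 dS) % 8893 = 0 := by decide +kernel
theorem chk_rS : ∀ a b, a = b ∨ chi (vdet (pts a) (pts b)) ≠ 0 := by decide +kernel

abbrev Idx := Fin 8 × Bool × Bool
def wres (i : Bool) : ℤ := if i then 249 else -250
def yres (x : Idx) : ℤ := (if x.2.2 then 1 else -1) * (if x.2.1 then ee x.1 else ff x.1)
def res (x : Idx) : ℤ := nE 8893 (rr x.1) (wres x.2.1) dA0 + yres x *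
  nE 8893 (rr x.1) (wres x.2.1) dA1
theorem chk_res : ∀ x y, x = y ∨ (res x - res y) % 8893 ≠ 0 := by decide +kernel

theorem pr8893 : Nat.Prime 8893 := by norm_num

structure Lab {O k : Type*} [CommRing O] [Field k] (q : O →+* k) where
  w : O
  t : Fin 8 → O
  Y : Fin 8 → O
  Z : Fin 8 → O
  hw : w ^ 2 + w + 1 = 0
  ht : ∀ a, evT (t a) dN = 0
  hY : ∀ a, Y a ^ 2 = evE (t a) w dB
  hZ : ∀ a, Z a ^ 2 = evE (t a) (-1 - w) dB
  YZ : ∀ a, Y a * Z a = (1 + 2 * w) * evT (t a) dC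
  qw : q w = (249 : ℤ)
  qt : ∀ a, q (t a) = rr a
  qY : ∀ a, q (Y a) = ee a
  all : ∀ x, evT x dN = 0 → ∃ a, x = t a
  prod : ∀ x, evT x dN = ∏ a, (x - t a)

theorem mkLab {O k : Type*} [CommRing O] [IsDomain O] [Field k] (q : O →+* k)
    (hp : ((8893 : ℕ) : k) = 0) (spl : ∃ m : Multiset O, Multiset.card m = 8 ∧
      ∀ x : O, evT x dN = (m.map fun y => x - y).prod)
    (exw : ∃ w : O, w ^ 2 + w + 1 = 0)
    (exy : ∀ t w : O, evT t dN = 0 → w ^ 2 + w + 1 = 0 → ∃ y, y ^ 2 = evE t w dB) :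
    Nonempty (Lab q) := by
  have hpz : ((8893 : ℤ) : k) = 0 := by exact_mod_cast hp
  obtain ⟨w, hw, qw⟩ : ∃ w : O, w ^ 2 + w + 1 = 0 ∧ q w = (249 : ℤ) := by
    obtain ⟨w, hw⟩ := exw
    have h1 := congrArg q hw
    simp only [map_add, map_pow, map_one, map_zero] at h1
    have h2 : (q w - (249 : ℤ)) * (q w + (250 : ℤ)) = 0 := by
      push_cast at hpz ⊢
      linear_combination h1 - 7 * hpz
    rcases mul_eq_zero.1 h2 with h | h
    · exact ⟨w, hw, sub_eq_zero.1 h⟩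
    · refine ⟨-1 - w, by linear_combination hw, ?_⟩
      rw [map_sub, map_neg, map_one]
      push_cast at h ⊢
      linear_combination -h
  obtain ⟨m, hm, spl⟩ := spl
  have ext : ∀ a, ∃ t ∈ m, q t = rr a := by
    intro a
    have h1 : q (evT ((rr a : ℤ) : O) dN) = 0 := by
      rw [evT_map, map_intCast, ← nT_sem hpz]
      exact zero_int hp (chk_r a)
    rw [spl, map_multiset_prod, Multiset.map_map, Multiset.prod_eq_zero_iff] at h1
    obtain ⟨t, htm, h⟩ := Multiset.mem_map.1 h1
    refine ⟨t, htm, ?_⟩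
    simp only [Function.comp, map_sub, map_intCast] at h
    exact (sub_eq_zero.1 h).symm
  choose t htm qt using ext
  have tinj : Function.Injective t := by
    intro a b hab
    by_contra hne
    refine (chk_rd a b).resolve_left hne ?_
    refine int_zero pr8893 hp (k := k) ?_
    push_cast
    rw [← qt, ← qt, hab, sub_self]
  have hroot : ∀ x, evT x dN = 0 ↔ x ∈ m := by
    intro x
    rw [spl, Multiset.prod_eq_zero_iff, Multiset.mem_map]
    constructor
    · rintro ⟨y, hy, h⟩
      rwa [sub_eq_zero.1 h]
    · intro h; exact ⟨x, h, sub_self x⟩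
  have ht : ∀ a, evT (t a) dN = 0 := fun a => (hroot _).2 (htm a)
  have hmeq : (Finset.univ.val.map t) = m := by
    apply Multiset.eq_of_le_of_card_le
    · rw [Multiset.le_iff_subset (Finset.univ.nodup.map tinj)]
      intro x hx
      obtain ⟨a, -, rfl⟩ := Multiset.mem_map.1 hx
      exact htm a
    · rw [hm, Multiset.card_map]; simp
  have exY : ∀ a, ∃ y, y ^ 2 = evE (t a) w dB ∧ q y = ee a := by
    intro a
    obtain ⟨y, hy⟩ := exy (t a) w (ht a) hw
    have h1 := congrArg q hy
    rw [map_pow, evE_map, qt, qw, ← nE_sem hpz] at h1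
    have h2 := zero_int hp (chk_e a) (k := k)
    push_cast at h2
    have h3 : (q y - ee a) * (q y + ee a) = 0 := by linear_combination h1 - h2
    rcases mul_eq_zero.1 h3 with h | h
    · exact ⟨y, hy, sub_eq_zero.1 h⟩
    · exact ⟨-y, by rw [neg_sq, hy], by rw [map_neg]; linear_combination -h⟩
  choose Y hY qY using exY
  have exZ : ∀ a, ∃ z, z ^ 2 = evE (t a) (-1 - w) dB ∧
      Y a * z = (1 + 2 * w) * evT (t a) dC := by
    intro a
    obtain ⟨z, hz⟩ := exy (t a) (-1 - w) (ht a) (by linear_combination hw)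
    have h2 : (Y a * z) ^ 2 = ((1 + 2 * w) * evT (t a) dC) ^ 2 := by
      rw [← fact_C (ht a) hw, ← hY, ← hz]; ring
    rcases sq_eq_sq_iff_eq_or_eq_neg.1 h2 with h | h
    · exact ⟨z, hz, h⟩
    · exact ⟨-z, by rw [neg_sq, hz], by rw [mul_neg, h, neg_neg]⟩
  choose Z hZ YZ using exZ
  refine ⟨⟨w, t, Y, Z, hw, ht, hY, hZ, YZ, qw, qt, qY, ?_, fun x => by
    rw [spl, ← hmeq, Multiset.map_map]; rfl⟩⟩
  intro x hx
  have := (hroot x).1 hx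
  rw [← hmeq] at this
  obtain ⟨a, -, h⟩ := Multiset.mem_map.1 this
  exact ⟨a, h.symm⟩

namespace Lab
variable {O k : Type*} [CommRing O] [IsDomain O] [Field k] {q : O →+* k} (D : Lab q)
  (hp : ((8893 : ℕ) : k) = 0)

def W (i : Bool) : O := if i then D.w else -1 - D.w
def T (x : Idx) : O := D.t x.1
def YY (x : Idx) : O := (if x.2.2 then 1 else -1) * (if x.2.1 then D.Y x.1 else D.Z x.1)
def A (x : Idx) : O := A18 (D.t x.1) (D.W x.2.1) (D.YY x)

theorem hW (i : Bool) : D.W i ^ 2 + D.W i + 1 = 0 := by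
  cases i
  · simp only [W]; simp; linear_combination D.hw
  · simp only [W]; simp; exact D.hw

theorem hYY (x : Idx) : D.YY x ^ 2 = evE (D.t x.1) (D.W x.2.1) dB := by
  obtain ⟨a, i, s⟩ := x
  cases i <;> cases s <;> simp [YY, W, D.hY, D.hZ]

theorem tinj (hp : ((8893 : ℕ) : k) = 0) : Function.Injective D.t := by
  intro a b hab
  by_contra hne
  refine (chk_rd a b).resolve_left hne ?_
  refine int_zero pr8893 hp (k := k) ?_
  push_cast
  rw [← D.qt, ← D.qt, hab, sub_self]

theorem Ainj (hp : ((8893 : ℕ) : k) = 0) : Function.Injective D.A := by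
  have hpz : ((8893 : ℤ) : k) = 0 := by exact_mod_cast hp
  have qZ : ∀ a, q (D.Z a) = ff a := by
    intro a
    have h1 := congrArg q (D.YZ a)
    rw [map_mul, D.qY, map_mul, evT_map, D.qt, ← nT_sem hpz, map_add, map_mul, D.qw, map_one,
      map_ofNat] at h1
    have h2 := zero_int hp (chk_ff a) (k := k)
    push_cast at h1 h2
    have h0 : ((ee a : ℤ) : k) ≠ 0 := fun h => (chk_ed a a).1 (int_zero pr8893 hp h)
    apply mul_left_cancel₀ h0
    linear_combination h1 - h2
  have qW : ∀ i, q (D.W i) = wres i := by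
    intro i
    cases i
    · simp only [W, wres]; simp [D.qw]; norm_num
    · simp only [W, wres]; simp [D.qw]
  have qYY : ∀ x, q (D.YY x) = yres x := by
    rintro ⟨a, i, s⟩
    cases i <;> cases s <;> simp [YY, yres, D.qY, qZ]
  have qA : ∀ x, q (D.A x) = res x := by
    intro x
    rw [A, A18, evK_map, D.qt, qW, qYY]
    simp only [evK, leval, res]
    push_cast
    rw [nE_sem hpz, nE_sem hpz]
    ring
  intro x y hxy
  by_contra hne
  refine (chk_res x y).resolve_left hne ?_
  refine int_zero pr8893 hp (k := k) ?_
  push_cast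
  rw [← qA, ← qA, hxy, sub_self]

/-- every triple is a labelled one -/
theorem triple {t w y : O} (ht : evT t dN = 0) (hw : w ^ 2 + w + 1 = 0)
    (hy : y ^ 2 = evE t w dB) : ∃ x : Idx, t = D.t x.1 ∧ w = D.W x.2.1 ∧ y = D.YY x := by
  obtain ⟨a, rfl⟩ := D.all t ht
  have h1 : (w - D.w) * (w - (-1 - D.w)) = 0 := by linear_combination hw - D.hw
  rcases mul_eq_zero.1 h1 with h | h
  · have := sub_eq_zero.1 h
    subst this
    rw [← D.hY] at hy
    rcases sq_eq_sq_iff_eq_or_eq_neg.1 hy with h | h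
    · exact ⟨(a, true, true), rfl, by simp [W], by simp [YY, h]⟩
    · exact ⟨(a, true, false), rfl, by simp [W], by simp [YY, h]⟩
  · have := sub_eq_zero.1 h
    subst this
    rw [← D.hZ] at hy
    rcases sq_eq_sq_iff_eq_or_eq_neg.1 hy with h | h
    · exact ⟨(a, false, true), rfl, by simp [W], by simp [YY, h]⟩
    · exact ⟨(a, false, false), rfl, by simp [W], by simp [YY, h]⟩
end Lab
end S3

namespace S3

def idx (v : V) : Fin 8 := if v.2 == 0 then 0 else
  ⟨((v.1 * v.2⁻¹ : ZMod 7).val + 1) % 8, Nat.mod_lt _ (by norm_num)⟩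
def lam (v : V) : ZMod 7 := if v.2 == 0 then v.1 else v.2

theorem idx_pts : ∀ a, idx (pts a) = a ∧ lam (pts a) = 1 ∧ idx (-pts a) = a ∧ lam (-pts a) = -1 ∧
    pts a ≠ 0 ∧ -pts a ≠ 0 := by
  decide +kernel
theorem v_eq : ∀ v : V, v = lam v • pts (idx v) := by decide +kernel
theorem lam_ne : ∀ v : V, v = 0 ∨ chi (lam v) = 1 ∨ chi (lam v) = -1 := by decide +kernel
theorem chi_mul : ∀ x y : ZMod 7, chi (x * y) = chi x * chi y := by decide +kernel
theorem chi_vals : ∀ x : ZMod 7, chi x = 0 ∨ chi x = 1 ∨ chi x = -1 := by decide +kernel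
theorem chi_eq : ∀ x y : ZMod 7, x = 0 ∨ y = 0 ∨ chi x ≠ chi y ∨ sq (x * y⁻¹) = true ∧
    x = (x * y⁻¹) * y := by decide +kernel
theorem idx_sm : ∀ (s : ZMod 7) (v : V), sq s = false ∨ (idx (s • v) = idx v ∧
    lam (s • v) = s * lam v ∧ chi s = 1) := by
  decide +kernel
theorem lam_zero : ∀ v : V, v = 0 ∨ lam v ≠ 0 := by decide +kernel
theorem chi_neg_one : chi (-1) = -1 ∧ chi 1 = 1 ∧ chi 0 = 0 := by decide +kernel

theorem vdet_smul (x y : ZMod 7) (u v : V) : vdet (x • u) (y • v) = x * y * vdet u v := by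
  simp [vdet]; ring

namespace Lab
variable {O k : Type*} [CommRing O] [IsDomain O] [Field k] {q : O →+* k} (D : Lab q)
variable {G : Type*} [Group G] [MulSemiringAction G O]

theorem perm (g : G) (x : Idx) : ∃ x' : Idx, g • D.t x.1 = D.t x'.1 ∧
    g • D.W x.2.1 = D.W x'.2.1 ∧ g • D.YY x = D.YY x' ∧ g • D.A x = D.A x' := by
  let f := MulSemiringAction.toRingHom G O g
  have hf : ∀ z, f z = g • z := fun z => rfl
  have h1 : evT (f (D.t x.1)) dN = 0 := by rw [← evT_map, D.ht, map_zero]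
  have h2 : (f (D.W x.2.1)) ^ 2 + f (D.W x.2.1) + 1 = 0 := by
    have := congrArg f (D.hW x.2.1)
    simpa using this
  have h3 : (f (D.YY x)) ^ 2 = evE (f (D.t x.1)) (f (D.W x.2.1)) dB := by
    rw [← evE_map, ← D.hYY, map_pow]
  obtain ⟨x', e1, e2, e3⟩ := D.triple h1 h2 h3
  refine ⟨x', e1, e2, e3, ?_⟩
  rw [← hf, A, A18, evK_map, e1, e2, e3]; rfl

theorem Y_ne (hp : ((8893 : ℕ) : k) = 0) (a : Fin 8) : D.Y a ≠ 0 := by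
  intro h
  refine (chk_ed a a).1 (int_zero pr8893 hp (k := k) ?_)
  rw [← D.qY, h, map_zero]

theorem Y_eq (hp : ((8893 : ℕ) : k) = 0) {a b : Fin 8} {x y : ℤ} (hx : x = 1 ∨ x = -1)
    (hy : y = 1 ∨ y = -1) (h : (x : O) * D.Y a = y * D.Y b) : a = b ∧ x = y := by
  have h1 := congrArg q h
  rw [map_mul, map_mul, D.qY, D.qY, map_intCast, map_intCast, ← sub_eq_zero] at h1
  have h2 := chk_ed a b
  have e1 : ∀ n : ℤ, (n : k) = 0 → n % 8893 = 0 := fun n hn => int_zero pr8893 hp hn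
  have e3 : (((x * ee a - y * ee b : ℤ)) : k) = 0 := by push_cast; exact h1
  have e2 := e1 _ e3
  have hs : x = y := by
    rcases hx with rfl | rfl <;> rcases hy with rfl | rfl
    · rfl
    · exact absurd (by rw [← e2]; ring_nf) h2.2.1
    · exfalso; apply h2.2.1; omega
    · rfl
  subst hs
  refine ⟨h2.2.2.resolve_right (not_not.2 ?_), rfl⟩
  rcases hx with rfl | rfl
  · rw [← e2]; ring_nf
  · omega

def Xv (v : V) : O := ((chi (lam v) : ℤ) : O) * D.Y (idx v)

theorem psi (hp : ((8893 : ℕ) : k) = 0) :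
    ∃ Ψ : MulAction.stabilizer G D.w →* SL(2, ZMod 7),
      ∀ g, Ψ g = 1 ↔ ∀ x, g • D.A x = D.A x := by
  have hpz : ((8893 : ℤ) : k) = 0 := by exact_mod_cast hp
  have hlam : ∀ v : V, v ≠ 0 → chi (lam v) = 1 ∨ chi (lam v) = -1 := fun v hv =>
    (lam_ne v).resolve_left hv
  have Xeq : ∀ u v, u ≠ 0 → v ≠ 0 → D.Xv u = D.Xv v → idx u = idx v ∧ chi (lam u) = chi (lam v) :=
    fun u v hu hv h => D.Y_eq hp (hlam u hu) (hlam v hv) h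
  -- action on the `Y a`
  have actY : ∀ (g : MulAction.stabilizer G D.w) (a : Fin 8), ∃ b, ∃ x : ℤ, (x = 1 ∨ x = -1) ∧
      g • D.t a = D.t b ∧ g • D.Y a = x * D.Y b := by
    intro g a
    obtain ⟨x', e1, e2, e3, -⟩ := D.perm (g : G) (a, true, true)
    have e4 : D.W true = D.W x'.2.1 := by
      rw [← e2]; exact g.2.symm
    have e5 : (D.Y a) = D.YY (a, true, true) := by simp [YY]
    refine ⟨x'.1, if x'.2.2 then 1 else -1, ?_, e1, ?_⟩
    · cases x'.2.2 <;> simp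
    · rw [e5]
      refine e3.trans ?_
      have : (D.YY x') ^ 2 = (D.Y x'.1) ^ 2 := by rw [D.hYY, ← e4, D.hY]; rfl
      have h6 : x'.2.1 = true := by
        by_contra hne
        rw [Bool.not_eq_true] at hne
        rw [hne] at e4
        have h7 := congrArg q e4
        simp only [W] at h7
        simp only [if_true, Bool.false_eq_true, if_false, map_sub, map_neg, map_one, D.qw] at h7
        have h8 : ((499 : ℤ) : k) = 0 := by push_cast at h7 ⊢; linear_combination h7
        have := int_zero pr8893 hp h8
        norm_num at this
      rw [YY, h6]
      cases x'.2.2 <;> simp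
  have rel : ∀ a b, a ≠ b → 21 * (D.Y a * D.Y b) =
      ((chi (vdet (pts a) (pts b)) : ℤ) : O) * ev6 (D.t a) (D.t b) D.w dS := by
    intro a b hab
    have hne : D.t a ≠ D.t b := fun h => hab (D.tinj hp h)
    have hS := fact_S (D.ht a) (D.ht b) hne D.hw
    have hc : ((chi (vdet (pts a) (pts b)) : ℤ) : O) ^ 2 = 1 := by
      rcases chi_vals (vdet (pts a) (pts b)) with h | h | h
      · exact absurd h ((chk_rS a b).resolve_left hab)
      · rw [h]; simp
      · rw [h]; simp
    have h2 : (21 * (D.Y a * D.Y b)) ^ 2 =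
        (((chi (vdet (pts a) (pts b)) : ℤ) : O) * ev6 (D.t a) (D.t b) D.w dS) ^ 2 := by
      rw [mul_pow _ (ev6 _ _ _ _), hc, one_mul, hS, ← D.hY, ← D.hY]; ring
    rcases sq_eq_sq_iff_eq_or_eq_neg.1 h2 with h | h
    · exact h
    · exfalso
      have h3 := congrArg q h
      simp only [map_mul, map_neg, ev6_map, D.qY, D.qt, D.qw, map_intCast, map_ofNat] at h3
      rw [← n6_sem hpz] at h3
      have h4 := zero_int hp ((chk_rel a b).resolve_left hab) (k := k)
      push_cast at h4
      have h5 : ((42 * (ee a * ee b) : ℤ) : k) = 0 := by push_cast; linear_combination h3 + h4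
      rw [Int.cast_mul, Int.cast_mul] at h5
      have z1 : ∀ n : ℤ, n % 8893 ≠ 0 → (n : k) ≠ 0 := fun n hn h => hn (int_zero pr8893 hp h)
      exact mul_ne_zero (z1 _ (by norm_num)) (mul_ne_zero (z1 _ (chk_ed a a).1)
        (z1 _ (chk_ed b b).1)) h5
  have relX : ∀ u v, idx u ≠ idx v → 21 * (D.Xv u * D.Xv v) =
      ((chi (vdet u v) : ℤ) : O) * ev6 (D.t (idx u)) (D.t (idx v)) D.w dS := by
    intro u v huv
    have e : vdet u v = lam u * lam v * vdet (pts (idx u)) (pts (idx v)) := by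
      conv_lhs => rw [v_eq u, v_eq v]
      rw [vdet_smul]
    rw [e, chi_mul, chi_mul]
    simp only [Xv]
    push_cast
    linear_combination ((chi (lam u) : ℤ) : O) * ((chi (lam v) : ℤ) : O) * rel _ _ huv
  have det0 : ∀ u v, idx u = idx v → chi (vdet u v) = 0 := by
    intro u v huv
    have e : vdet u v = 0 := by
      rw [v_eq u, v_eq v, vdet_smul, huv]; simp only [vdet]; ring
    rw [e]; exact chi_neg_one.2.2
  have Xpts : ∀ b (x : ℤ), x = 1 ∨ x = -1 → ∃ u : V, u ≠ 0 ∧ idx u = b ∧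
      (x : O) * D.Y b = D.Xv u := by
    intro b x hx
    obtain ⟨i1, l1, i2, l2, n1, n2⟩ := idx_pts b
    rcases hx with rfl | rfl
    · exact ⟨pts b, n1, i1, by rw [Xv, i1, l1, chi_neg_one.2.1]⟩
    · exact ⟨-pts b, n2, i2, by rw [Xv, i2, l2, chi_neg_one.1]⟩
  have smulint : ∀ (g : MulAction.stabilizer G D.w) (n : ℤ) (z : O),
      g • ((n : O) * z) = n * g • z := by
    intro g n z
    have := map_mul (MulSemiringAction.toRingHom G O g) (n : O) z
    rw [map_intCast] at this
    exact this
  have actX : ∀ (g : MulAction.stabilizer G D.w) u, u ≠ 0 → ∃ u', u' ≠ 0 ∧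
      g • D.Xv u = D.Xv u' ∧ g • D.t (idx u) = D.t (idx u') := by
    intro g u hu
    obtain ⟨b, x, hx, e1, e2⟩ := actY g (idx u)
    have : chi (lam u) * x = 1 ∨ chi (lam u) * x = -1 := by
      rcases hx with rfl | rfl <;> rcases hlam u hu with h | h <;> rw [h] <;> norm_num
    obtain ⟨u', h1, h2, h3⟩ := Xpts b _ this
    refine ⟨u', h1, ?_, by rw [h2, e1]⟩
    rw [← h3, Xv, smulint, e2]; push_cast; ring
  obtain ⟨Ψ, hΨ⟩ := sl2_hom (G := MulAction.stabilizer G D.w) D.Xv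
    (by
      intro u v hu hv
      constructor
      · intro h
        obtain ⟨h1, h2⟩ := Xeq u v hu hv h
        rcases chi_eq (lam u) (lam v) with h3 | h3 | h3 | ⟨h3, h4⟩
        · exact absurd h3 ((lam_zero u).resolve_left hu)
        · exact absurd h3 ((lam_zero v).resolve_left hv)
        · exact absurd h2 h3
        · refine ⟨_, h3, ?_⟩
          conv_lhs => rw [v_eq u, h4, mul_smul, h1, ← v_eq v]
      · rintro ⟨s, hs, rfl⟩
        rcases idx_sm s v with h | ⟨h1, h2, h3⟩
        · rw [hs] at h; exact absurd h (by decide)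
        · rw [Xv, h1, h2, chi_mul, h3, one_mul]; rfl)
    (fun g u hu => by
      obtain ⟨u', h1, h2, -⟩ := actX g u hu
      exact ⟨u', h1, h2⟩)
    (by
      intro g u v u' v' hu hv hu' hv' gu gv
      obtain ⟨u1, hu1, gu1, tu⟩ := actX g u hu
      obtain ⟨v1, hv1, gv1, tv⟩ := actX g v hv
      have iu : idx u' = idx u1 := (Xeq u' u1 hu' hu1 (gu.symm.trans gu1)).1
      have iv : idx v' = idx v1 := (Xeq v' v1 hv' hv1 (gv.symm.trans gv1)).1
      rw [← iu] at tu
      rw [← iv] at tv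
      by_cases huv : idx u = idx v
      · rw [det0 u v huv, det0]
        apply D.tinj hp
        rw [← tu, ← tv, huv]
      · have huv' : idx u' ≠ idx v' := by
          intro h
          rw [h, ← tv] at tu
          exact huv (D.tinj hp (smul_left_cancel g tu))
        have r1 := congrArg (MulSemiringAction.toRingHom G O (g : G)) (relX u v huv)
        rw [map_mul, map_mul, map_mul, map_ofNat, map_intCast, ev6_map] at r1
        have r2 := relX u' v' huv'
        have c1 : MulSemiringAction.toRingHom G O (g : G) (D.Xv u) = D.Xv u' := gu
        have c2 : MulSemiringAction.toRingHom G O (g : G) (D.Xv v) = D.Xv v' := gv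
        have c3 : MulSemiringAction.toRingHom G O (g : G) (D.t (idx u)) = D.t (idx u') := tu
        have c4 : MulSemiringAction.toRingHom G O (g : G) (D.t (idx v)) = D.t (idx v') := tv
        have c5 : MulSemiringAction.toRingHom G O (g : G) D.w = D.w := g.2
        rw [c1, c2, c3, c4, c5, r2] at r1
        have s0 : ev6 (D.t (idx u')) (D.t (idx v')) D.w dS ≠ 0 := by
          intro h
          have hr := rel _ _ huv'
          rw [h, mul_zero] at hr
          have h21 : (21 : O) ≠ 0 := by
            intro h
            have := congrArg q h
            rw [map_ofNat, map_zero] at this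
            have h' : ((21 : ℤ) : k) = 0 := by exact_mod_cast this
            have := int_zero pr8893 hp h'
            norm_num at this
          exact mul_ne_zero h21 (mul_ne_zero (D.Y_ne hp _) (D.Y_ne hp _)) hr
        have r3 := mul_right_cancel₀ s0 r1
        have r4 := congrArg q r3
        rw [map_intCast, map_intCast] at r4
        have r5 : ((chi (vdet u' v') - chi (vdet u v) : ℤ) : k) = 0 := by
          push_cast; rw [r4, sub_self]
        have r6 := int_zero pr8893 hp r5
        rcases chi_vals (vdet u' v') with a | a | a <;> rcases chi_vals (vdet u v) with b | b | b <;>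
          rw [a, b] at r6 ⊢ <;> norm_num at r6)
  refine ⟨Ψ, fun g => (hΨ g).trans ⟨?_, ?_⟩⟩
  · intro h x
    have hY : ∀ a, g • D.Y a = D.Y a := by
      intro a
      obtain ⟨i1, l1, -, -, n1, -⟩ := idx_pts a
      have := h (pts a) n1
      rw [Xv, i1, l1, chi_neg_one.2.1] at this
      simpa using this
    have ht : ∀ a, g • D.t a = D.t a := by
      intro a
      obtain ⟨b, y, hy, e1, e2⟩ := actY g a
      rw [hY] at e2
      have := D.Y_eq hp (Or.inl rfl) hy (by simpa using e2)
      rw [e1, this.1]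
    let f := MulSemiringAction.toRingHom G O (g : G)
    have fw : f D.w = D.w := g.2
    have ft : ∀ a, f (D.t a) = D.t a := ht
    have fY : ∀ a, f (D.Y a) = D.Y a := hY
    have fZ : ∀ a, f (D.Z a) = D.Z a := by
      intro a
      have := congrArg f (D.YZ a)
      rw [map_mul, fY, map_mul, evT_map, ft, map_add, map_mul, fw, map_one, map_ofNat,
        ← D.YZ] at this
      exact mul_left_cancel₀ (D.Y_ne hp a) this
    have fW : ∀ i, f (D.W i) = D.W i := by
      intro i
      cases i <;> simp [W, fw]
    have fYY : ∀ x, f (D.YY x) = D.YY x := by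
      rintro ⟨a, i, s⟩
      cases i <;> cases s <;> simp [YY, fY, fZ]
    have : f (D.A x) = D.A x := by rw [A, A18, evK_map, ft, fW, fYY]
    exact this
  · intro h v hv
    obtain ⟨x', -, -, e3, e4⟩ := D.perm (g : G) (idx v, true, true)
    have := D.Ainj hp (e4.symm.trans (h _))
    rw [this] at e3
    have e5 : D.YY (idx v, true, true) = D.Y (idx v) := by simp [YY]
    rw [e5] at e3
    rw [Xv, smulint]
    exact congrArg _ e3

end Lab
end S3

namespace S3

def fcomp (o : Ops (List ℤ)) : ℕ → List ℤ → List ℤ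
  | 0, F => F
  | n + 1, F => fcomp o n (hev o (fun c => [c]) F F)
def M7 : List ℤ := [1,1,3,1,3,1,3]
def M6 : List ℤ := [10,12,2,5,3,6]
def o5 := ext (opsM 5) 7 M7
def o17 := ext (opsM 17) 6 M6
theorem chk5 : o5.eqb (o5.mul (o5.add (fcomp o5 5 (ofrob o5 5 [0,1] 15)) [0,-1])
  [2,0,3,2,2,0,4]) [1] = true := by decide +kernel
theorem chk17 : o17.eqb (o17.mul (o17.add (fcomp o17 5 (ofrob o17 17 [0,1] 7)) [0,-1])
  [7,4,8,7,12,5]) [1] = true := by decide +kernel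

theorem charP_of {k : Type*} [Field k] {p : ℕ} (hp : p.Prime) (h0 : (p : k) = 0) : CharP k p := by
  refine ⟨fun n => ⟨fun h => ?_, fun ⟨c, h⟩ => by rw [h]; simp [h0]⟩⟩
  have h1 := int_zero hp h0 (n := (n : ℤ)) (by simpa using h)
  exact_mod_cast Int.dvd_of_emod_eq_zero h1

theorem sem_fcomp {k : Type*} [Field k] {p : ℕ} (hp : p.Prime) (h0 : (p : k) = 0)
    {o : Ops (List ℤ)} {s : k} (h : Sem o (evT s)) (n : ℕ) : ∀ (F : List ℤ) (m : ℕ),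
    evT s F = s ^ (p ^ m) → evT s (fcomp o n F) = s ^ (p ^ (m * 2 ^ n)) := by
  have := charP_of hp h0
  have : Fact p.Prime := ⟨hp⟩
  induction n with
  | zero => intro F m hF; simpa [fcomp] using hF
  | succ n ih =>
    intro F m hF
    rw [fcomp, ih _ (2 * m), pow_succ]
    · ring_nf
    · rw [h.hev, hF]
      have e1 : (fun x : ℤ => evT s [x]) = fun x : ℤ => (x : k) := by
        funext x; rw [evT_const]
      rw [e1]
      have e2 := evT_map (iterateFrobenius k p m) s F
      rw [hF, iterateFrobenius_def, iterateFrobenius_def] at e2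
      rw [show leval (fun x : ℤ => (x : k)) (s ^ p ^ m) F = evT (s ^ p ^ m) F from rfl, ← e2,
        ← pow_mul, ← pow_add, two_mul]

theorem move5 {k : Type*} [Field k] (h0 : ((5 : ℕ) : k) = 0) {s : k} (hs : s ^ 7 = evT s M7) :
    ∀ E, E = 480 → s ^ (5 ^ E) ≠ s := by
  intro E hE h
  have h0' : ((5 : ℤ) : k) = 0 := by exact_mod_cast h0
  have hS : Sem o5 (evT s) := sem_ext (semM h0') s hs
  have e0 : evT s [0, 1] = s := by simp [evT, leval]
  have e1 := hS.eq chk5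
  have e2 := sem_fcomp (by norm_num) h0 hS 5 (ofrob o5 5 [0,1] 15) 15 (by rw [hS.frob, e0])
  rw [hS.mul, hS.add, e2] at e1
  rw [show _ * 2 ^ 5 = E from hE.symm, h] at e1
  simp [evT, leval] at e1

theorem move17 {k : Type*} [Field k] (h0 : ((17 : ℕ) : k) = 0) {s : k} (hs : s ^ 6 = evT s M6) :
    ∀ E, E = 224 → s ^ (17 ^ E) ≠ s := by
  intro E hE h
  have h0' : ((17 : ℤ) : k) = 0 := by exact_mod_cast h0
  have hS : Sem o17 (evT s) := sem_ext (semM h0') s hs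
  have e0 : evT s [0, 1] = s := by simp [evT, leval]
  have e1 := hS.eq chk17
  have e2 := sem_fcomp (by norm_num) h0 hS 5 (ofrob o17 17 [0,1] 7) 7 (by rw [hS.frob, e0])
  rw [hS.mul, hS.add, e2] at e1
  rw [show _ * 2 ^ 5 = E from hE.symm, h] at e1
  simp [evT, leval] at e1
end S3

namespace S3

theorem perm8 (π : Equiv.Perm (Fin 8)) (a0 : Fin 8) (h0 : π a0 = a0)
    (h : ∀ a, a ≠ a0 → (π ^ 480) a ≠ a) (a b : Fin 8) (ha : a ≠ a0) (hb : b ≠ a0) :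
    ∃ n : ℕ, (π ^ n) a = b := by
  set s := (π.cycleOf a).support with hs
  have hfix : ∀ n : ℕ, (π ^ n) a0 = a0 := fun n => Equiv.Perm.pow_apply_eq_self_of_apply_eq_self h0 n
  have hsub : s ⊆ Finset.univ.erase a0 := by
    intro c hc
    rw [Finset.mem_erase]
    refine ⟨?_, Finset.mem_univ _⟩
    rintro rfl
    rw [hs, Equiv.Perm.mem_support_cycleOf_iff] at hc
    exact ha ((Equiv.Perm.SameCycle.apply_eq_self_iff hc.1).2 h0 |> fun h' => by
      obtain ⟨n, hn⟩ := hc.1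
      have : (π ^ n) a = a := Equiv.Perm.zpow_apply_eq_self_of_apply_eq_self h' n
      rw [← hn, this])
  have hcard : s.card ≤ 7 := by
    have := Finset.card_le_card hsub
    simpa using this
  have hnd : ¬ s.card ∣ 480 := by
    rintro ⟨c, hc⟩
    apply h a ha
    rw [← Equiv.Perm.pow_mod_card_support_cycleOf_self_apply]
    rw [← hs, hc, Nat.mul_mod_right]; rfl
  have h7 : s.card = 7 := by
    by_contra hne
    have : s.card < 7 := by omega
    apply hnd
    have h00 : s.card ≠ 0 := by
      intro h00
      rw [Finset.card_eq_zero, hs, Equiv.Perm.support_eq_empty_iff, Equiv.Perm.cycleOf_eq_one_iff] at h00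
      exact h a ha (Equiv.Perm.pow_apply_eq_self_of_apply_eq_self h00 480)
    interval_cases s.card
    all_goals first | exact absurd rfl h00 | norm_num
  have heq : s = Finset.univ.erase a0 := Finset.eq_of_subset_of_card_le hsub (by rw [h7]; simp)
  have hb' : b ∈ s := by rw [heq]; simp [hb]
  rw [hs, Equiv.Perm.mem_support_cycleOf_iff] at hb'
  obtain ⟨n, -, hn⟩ := hb'.1.exists_pow_eq'
  exact ⟨n, hn⟩

namespace Lab
variable {O k : Type*} [CommRing O] [IsDomain O] [Field k] {q : O →+* k} (D : Lab q)
variable {G : Type*} [Group G] [MulSemiringAction G O]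

theorem smulA {g : G} {x x' : Idx} (h1 : g • D.t x.1 = D.t x'.1) (h2 : g • D.W x.2.1 = D.W x'.2.1)
    (h3 : g • D.YY x = D.YY x') : g • D.A x = D.A x' := by
  have := evK_map (MulSemiringAction.toRingHom G O g) (D.t x.1) (D.W x.2.1) (D.YY x) [dA0, dA1]
  simp only [MulSemiringAction.toRingHom_apply] at this
  rw [A, A18, this, h1, h2, h3]; rfl

theorem fixA (hp : ((8893 : ℕ) : k) = 0) {g : G} {x : Idx} (h : g • D.A x = D.A x) :
    g • D.t x.1 = D.t x.1 ∧ g • D.W x.2.1 = D.W x.2.1 ∧ g • D.YY x = D.YY x := by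
  obtain ⟨x', h1, h2, h3, h4⟩ := D.perm g x
  rw [h] at h4
  have := D.Ainj hp h4
  subst this
  exact ⟨h1, h2, h3⟩

theorem permt (hp : ((8893 : ℕ) : k) = 0) (g : G) : ∃ π : Equiv.Perm (Fin 8),
    ∀ (n : ℕ) a, g ^ n • D.t a = D.t ((π ^ n) a) := by
  have h1 : ∀ a, ∃ b, g • D.t a = D.t b := by
    intro a
    obtain ⟨x', h, -⟩ := D.perm g (a, true, true)
    exact ⟨x'.1, h⟩
  choose f hf using h1
  have hinj : Function.Injective f := by
    intro a b hab
    apply D.tinj hp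
    apply MulAction.injective g
    simp only [hf, hab]
  refine ⟨Equiv.ofBijective f (Finite.injective_iff_bijective.1 hinj), ?_⟩
  intro n
  induction n with
  | zero => intro a; simp
  | succ n ih =>
    intro a
    rw [pow_succ, mul_smul, hf, ih, pow_succ, Equiv.Perm.mul_apply]; rfl

theorem YYneg (a : Fin 8) (i s : Bool) : D.YY (a, i, !s) = - D.YY (a, i, s) := by
  cases i <;> cases s <;> simp [YY]

theorem core5 (hp : ((8893 : ℕ) : k) = 0) {k5 : Type*} [Field k5] (q5 : O →+* k5)
    (h5 : ((5 : ℕ) : k5) = 0) (σ : G) (hσ : ∀ x, q5 (σ • x) = q5 x ^ 5) :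
    ∃ a0, σ • D.t a0 = D.t a0 ∧ (∀ a b, a ≠ a0 → b ≠ a0 → ∃ g : G, g • D.t a = D.t b) ∧
      (∀ i, σ • D.W i = D.W (!i)) ∧
      (∀ i s, σ ^ 2 • D.YY (a0, i, s) = D.YY (a0, i, !s)) ∧
      (∀ a, a ≠ a0 → σ ^ 480 • D.t a ≠ D.t a) := by
  have h5' : (5 : k5) = 0 := by exact_mod_cast h5
  have hpow : ∀ (n : ℕ) x, q5 (σ ^ n • x) = q5 x ^ (5 ^ n) := by
    intro n
    induction n with
    | zero => intro x; simp
    | succ n ih => intro x; rw [pow_succ, mul_smul, ih, hσ, ← pow_mul, pow_succ']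
  have hint : ∀ n : ℤ, n % 5 ≠ 0 → (n : k5) ≠ 0 := fun n hn h => hn (int_zero (by norm_num) h5 h)
  have hroot : ∀ a, q5 (D.t a) = 1 ∨ q5 (D.t a) ^ 7 = evT (q5 (D.t a)) M7 := by
    intro a
    have hN := congrArg q5 (D.ht a)
    rw [evT_map, map_zero] at hN
    set x := q5 (D.t a)
    have : (x - 1) * (x ^ 7 - evT x M7) = 0 := by
      simp only [evT, leval, dN, M7] at hN ⊢
      push_cast at hN ⊢
      linear_combination hN - (x^6-x^5+x^4-x^3+x^2+x) * h5'
    rcases mul_eq_zero.1 this with h | h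
    · left; exact sub_eq_zero.1 h
    · right; exact sub_eq_zero.1 h
  have huniq : ∀ a b, q5 (D.t a) = 1 → q5 (D.t b) = 1 → a = b := by
    intro a b ha hb
    by_contra hne
    have h1 := congrArg q5 (fact_N1 (D.ht a) (D.ht b) fun h => hne (D.tinj hp h))
    rw [ev2_map, map_pow, ha, hb] at h1
    simp only [ev2, evT, leval, lowN1] at h1
    push_cast at h1
    refine hint 3 (by norm_num) ?_
    push_cast
    linear_combination h1 - 2 * h5'
  obtain ⟨a0, ha0⟩ : ∃ a0, q5 (D.t a0) = 1 := by
    have h1 := congrArg q5 (D.prod 1)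
    rw [evT_map, map_one, map_prod] at h1
    have h2 : evT (1 : k5) dN = 0 := by
      simp only [evT, leval, dN]
      push_cast
      linear_combination 2 * h5'
    rw [h2] at h1
    obtain ⟨a, -, h⟩ := Finset.prod_eq_zero_iff.1 h1.symm
    refine ⟨a, ?_⟩
    rw [map_sub, map_one] at h
    exact (sub_eq_zero.1 h).symm
  obtain ⟨π, hπ⟩ := D.permt hp σ
  have hπ1 : ∀ a, σ • D.t a = D.t (π a) := fun a => by simpa using hπ 1 a
  have hfix : π a0 = a0 := by
    apply huniq _ _ _ ha0
    rw [← hπ1, hσ, ha0, one_pow]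
  have hmove : ∀ a, a ≠ a0 → σ ^ 480 • D.t a ≠ D.t a := by
    intro a ha h
    have h1 := hpow 480 (D.t a)
    rw [h] at h1
    refine move5 h5 ((hroot a).resolve_left fun h => ha (huniq _ _ h ha0)) 480 rfl h1.symm
  have hwσ : σ • D.w = -1 - D.w := by
    obtain ⟨x', -, h2, -⟩ := D.perm σ (a0, true, true)
    rcases hx : x'.2.1 with _ | _
    · rw [hx] at h2; simpa [W] using h2
    · rw [hx] at h2
      exfalso
      have h3 : σ • D.w = D.w := by simpa [W] using h2
      have h4 := hσ D.w
      rw [h3] at h4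
      have h6 := congrArg q5 D.hw
      simp only [map_add, map_pow, map_one, map_zero] at h6
      set z := q5 D.w
      have h7 : z = -1 - z := by
        rw [h4.trans (show z ^ 5 = -1 - z by linear_combination (z^3 - z^2 + 1) * h6)]
        linear_combination (-1) * h4 - (z^3 - z^2 + 1) * h6
      refine hint 3 (by norm_num) ?_
      push_cast
      linear_combination 4 * h6 - (2 * z + 1) * h7
  have hW : ∀ i, σ • D.W i = D.W (!i) := by
    intro i
    cases i
    · simp only [W]
      simp only [smul_sub, smul_neg, smul_one, hwσ, Bool.not_false, if_true]
      simp [smul_sub, smul_neg, smul_one, hwσ]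
    · simp [W, hwσ]
  refine ⟨a0, by rw [hπ1, hfix], ?_, hW, ?_, hmove⟩
  · intro a b ha hb
    obtain ⟨n, hn⟩ := perm8 π a0 hfix (fun c hc h => hmove c hc (by rw [hπ, h])) a b ha hb
    exact ⟨σ ^ n, by rw [hπ, hn]⟩
  · intro i s
    have e1 : σ ^ 2 • D.t a0 = D.t a0 := by rw [hπ, pow_two, Equiv.Perm.mul_apply, hfix, hfix]
    have e2 : σ ^ 2 • D.W i = D.W i := by rw [pow_two, mul_smul, hW, hW, Bool.not_not]
    have hy := D.hYY (a0, i, s)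
    have e3 : (σ ^ 2 • D.YY (a0, i, s)) ^ 2 = D.YY (a0, i, s) ^ 2 := by
      rw [← smul_pow', hy]
      have := evE_map (MulSemiringAction.toRingHom G O (σ ^ 2)) (D.t a0) (D.W i) dB
      simp only [MulSemiringAction.toRingHom_apply] at this
      simp only
      rw [this, e1, e2]
    have h1 := congrArg q5 hy
    rw [evE_map, map_pow] at h1
    have h6 := congrArg q5 (D.hW i)
    simp only [map_add, map_pow, map_one, map_zero] at h6
    simp only [ha0] at h1
    have h2 := hpow 2 (D.YY (a0, i, s))
    set y := q5 (D.YY (a0, i, s))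
    set z := q5 (D.W i)
    have hz3 : z ^ 3 = 1 := by linear_combination (z - 1) * h6
    have hB : y ^ 2 = 2 + 3 * z := by
      rw [h1]
      simp only [evE, evT, leval, dB]
      push_cast
      linear_combination (15 + 14 * z) * h5'
    have hB4 : y ^ 4 = 3 * z := by
      linear_combination (y ^ 2 + 2 + 3 * z) * hB + 9 * h6 - h5'
    have hB24 : y ^ 24 = -1 := by
      have : y ^ 24 = 729 * (z ^ 3) ^ 2 := by
        rw [show y ^ 24 = (y ^ 4) ^ 6 by ring, hB4]; ring
      rw [this, hz3]
      linear_combination 146 * h5'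
    rw [YYneg]
    rcases sq_eq_sq_iff_eq_or_eq_neg.1 e3 with h | h
    · exfalso
      rw [h] at h2
      have h3 : y = - y := by
        linear_combination h2 + y * hB24
      have hy0 : (2 : k5) * y = 0 := by linear_combination h3
      have h20 : (2 : k5) ≠ 0 := by exact_mod_cast hint 2 (by norm_num)
      have := (mul_eq_zero.1 hy0).resolve_left h20
      rw [this] at hB24
      norm_num at hB24
    · exact h

theorem core17 (hp : ((8893 : ℕ) : k) = 0) {k5 : Type*} [Field k5] (q5 : O →+* k5)
    (h5 : ((17 : ℕ) : k5) = 0) (σ : G) (hσ : ∀ x, q5 (σ • x) = q5 x ^ 17) :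
    ∃ a, σ ^ 224 • D.t a ≠ D.t a := by
  have h5' : (17 : k5) = 0 := by exact_mod_cast h5
  have hpow : ∀ (n : ℕ) x, q5 (σ ^ n • x) = q5 x ^ (17 ^ n) := by
    intro n
    induction n with
    | zero => intro x; simp
    | succ n ih => intro x; rw [pow_succ, mul_smul, ih, hσ, ← pow_mul, pow_succ']
  have hint : ∀ n : ℤ, n % 17 ≠ 0 → (n : k5) ≠ 0 := fun n hn h => hn (int_zero (by norm_num) h5 h)
  have hroot : ∀ a, q5 (D.t a) = 7 ∨ q5 (D.t a) = 8 ∨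
      q5 (D.t a) ^ 6 = evT (q5 (D.t a)) M6 := by
    intro a
    have hN := congrArg q5 (D.ht a)
    rw [evT_map, map_zero] at hN
    set x := q5 (D.t a)
    have : (x - 7) * ((x - 8) * (x ^ 6 - evT x M6)) = 0 := by
      simp only [evT, leval, dN, M6] at hN ⊢
      push_cast at hN ⊢
      linear_combination hN + (-33 - 31*x + 3*x^2 - 15*x^3 - 6*x^4 - 17*x^5 + 8*x^6 - x^7) * h5'
    rcases mul_eq_zero.1 this with h | h
    · left; exact sub_eq_zero.1 h
    · right
      rcases mul_eq_zero.1 h with h | h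
      · left; exact sub_eq_zero.1 h
      · right; exact sub_eq_zero.1 h
  have huniq : ∀ a b, q5 (D.t a) = q5 (D.t b) → (q5 (D.t a) = 7 ∨ q5 (D.t a) = 8) → a = b := by
    intro a b hab ha
    by_contra hne
    have h1 := congrArg q5 (fact_N1 (D.ht a) (D.ht b) fun h => hne (D.tinj hp h))
    rw [ev2_map, map_pow, ← hab] at h1
    rcases ha with ha | ha
    · rw [ha] at h1
      simp only [ev2, evT, leval, lowN1] at h1
      push_cast at h1
      refine hint 3924709 (by norm_num) ?_
      push_cast
      linear_combination h1
    · rw [ha] at h1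
      simp only [ev2, evT, leval, lowN1] at h1
      push_cast at h1
      refine hint 10683189 (by norm_num) ?_
      push_cast
      linear_combination h1
  by_contra hcon
  push Not at hcon
  have hr : ∀ a, q5 (D.t a) = 7 ∨ q5 (D.t a) = 8 := by
    intro a
    rcases hroot a with h | h | h
    · exact Or.inl h
    · exact Or.inr h
    · exfalso
      have h1 := hpow 224 (D.t a)
      rw [hcon] at h1
      exact move17 h5 h 224 rfl h1.symm
  have h01 : (0 : Fin 8) ≠ 1 := by decide
  have h02 : (0 : Fin 8) ≠ 2 := by decide
  have h12 : (1 : Fin 8) ≠ 2 := by decide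
  rcases hr 0 with a | a <;> rcases hr 1 with b | b <;> rcases hr 2 with c | c
  all_goals first
    | exact h01 (huniq _ _ (a.trans b.symm) (hr 0))
    | exact h02 (huniq _ _ (a.trans c.symm) (hr 0))
    | exact h12 (huniq _ _ (b.trans c.symm) (hr 1))

theorem trans [CharZero O] (hp : ((8893 : ℕ) : k) = 0) {k5 : Type*} [Field k5] (q5 : O →+* k5)
    (h5 : ((5 : ℕ) : k5) = 0) (σ : G) (hσ : ∀ x, q5 (σ • x) = q5 x ^ 5)
    (inv : ∀ x : O, (∀ g : G, g • x = x) → ∃ n : ℤ, x = n) :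
    ∃ x0, ∀ x, ∃ g : G, g • D.A x0 = D.A x := by
  obtain ⟨a0, h1, h2, h3, h4, -⟩ := D.core5 hp q5 h5 σ hσ
  have ex : ∃ (g : G) (b : Fin 8), b ≠ a0 ∧ g • D.t a0 = D.t b := by
    by_contra hcon
    push Not at hcon
    obtain ⟨n, hn⟩ := inv (D.t a0) (by
      intro g
      obtain ⟨x', h, -⟩ := D.perm g (a0, true, true)
      by_cases hx : x'.1 = a0
      · rw [hx] at h; exact h
      · exact absurd h (hcon g _ hx))
    have h0 := D.ht a0
    rw [hn] at h0
    have h6 : evT n dN = 0 := by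
      have := evT_map (Int.castRingHom O) n dN
      simp only [eq_intCast, h0] at this
      exact_mod_cast this
    have hu : IsUnit n := by
      refine IsUnit.of_mul_eq_one (-(evT n [5, 7, -7, 7, -7, 7, -4, 1])) ?_
      simp only [evT, leval, dN] at h6 ⊢
      push_cast at h6 ⊢
      linear_combination -h6
    rcases Int.isUnit_iff.1 hu with rfl | rfl
    · exact absurd h6 (by decide)
    · exact absurd h6 (by decide)
  have tt : ∀ a, ∃ g : G, g • D.t a0 = D.t a := by
    intro a
    by_cases ha : a = a0
    · exact ⟨1, by rw [one_smul, ha]⟩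
    · obtain ⟨g, b, hb, hg⟩ := ex
      obtain ⟨g', hg'⟩ := h2 b a hb ha
      exact ⟨g' * g, by rw [mul_smul, hg, hg']⟩
  have hs2 : ∀ i s, σ ^ 2 • D.A (a0, i, s) = D.A (a0, i, !s) := by
    intro i s
    refine D.smulA ?_ ?_ (h4 i s)
    · rw [pow_two, mul_smul, h1, h1]
    · simp only [pow_two, mul_smul, h3, Bool.not_not]
  have hs1 : ∃ s1, σ • D.A (a0, true, true) = D.A (a0, false, s1) := by
    obtain ⟨x', e1, e2, e3, e4⟩ := D.perm σ (a0, true, true)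
    simp only [h1, h3] at e1 e2
    have e5 := D.tinj hp e1
    have e6 : x'.2.1 = false := by
      rcases hx : x'.2.1 with _ | _
      · rfl
      · rw [hx] at e2
        have h7 := h3 true
        rw [e2] at h7
        exfalso
        have h8 : σ ^ 1 • D.A (a0, true, x'.2.2) = D.A (a0, true, x'.2.2) → False := by
          intro h8
          have h9 := hs2 true x'.2.2
          rw [pow_one] at h8
          rw [pow_two, mul_smul, h8, h8] at h9
          have := D.Ainj hp h9
          simp at this
        have e7 : D.w = -1 - D.w := by simpa [W] using e2.symm
        have e8 := congrArg q e7
        rw [map_sub, map_neg, map_one, D.qw] at e8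
        have : ((499 : ℤ) : k) = 0 := by
          push_cast at e8 ⊢
          linear_combination e8
        exact absurd (int_zero pr8893 hp this) (by norm_num)
    refine ⟨x'.2.2, ?_⟩
    rw [e4]
    obtain ⟨u, v, z⟩ := x'
    simp only at e5 e6
    rw [e5, e6]
  have h32 : ∀ i s, ∃ g : G, g • D.A (a0, true, true) = D.A (a0, i, s) := by
    intro i s
    obtain ⟨s1, hs1⟩ := hs1
    cases i
    · by_cases hss : s = s1
      · exact ⟨σ, by rw [hs1, hss]⟩
      · refine ⟨σ ^ 2 * σ, ?_⟩
        rw [mul_smul, hs1, hs2]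
        congr
        cases s <;> cases s1 <;> simp_all
    · cases s
      · exact ⟨σ ^ 2, hs2 true true⟩
      · exact ⟨1, one_smul _ _⟩
  refine ⟨(a0, true, true), fun x => ?_⟩
  obtain ⟨h, hh⟩ := tt x.1
  obtain ⟨x', e1, e2, e3, e4⟩ := D.perm h⁻¹ x
  rw [← hh, inv_smul_smul] at e1
  have e5 := D.tinj hp e1
  obtain ⟨g, hg⟩ := h32 x'.2.1 x'.2.2
  refine ⟨h * g, ?_⟩
  rw [mul_smul, hg, show ((a0, x'.2.1, x'.2.2) : Idx) = x' from by rw [e5], ← e4, smul_inv_smul]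

theorem wind (hp : ((8893 : ℕ) : k) = 0) {k5 : Type*} [Field k5] (q5 : O →+* k5)
    (h5 : ((5 : ℕ) : k5) = 0) (σ : G) (hσ : ∀ x, q5 (σ • x) = q5 x ^ 5) :
    (MulAction.stabilizer G D.w).index = 2 := by
  obtain ⟨a0, h1, h2, h3, h4, -⟩ := D.core5 hp q5 h5 σ hσ
  have hne : D.w ≠ -1 - D.w := by
    intro e7
    have e8 := congrArg q e7
    rw [map_sub, map_neg, map_one, D.qw] at e8
    have : ((499 : ℤ) : k) = 0 := by
      push_cast at e8 ⊢
      linear_combination e8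
    exact absurd (int_zero pr8893 hp this) (by norm_num)
  rw [MulAction.index_stabilizer]
  have : MulAction.orbit G D.w = {D.w, -1 - D.w} := by
    ext z
    constructor
    · rintro ⟨g, rfl⟩
      obtain ⟨x', -, h2, -⟩ := D.perm g (a0, true, true)
      simp only [W, if_true] at h2
      simp only
      rw [h2]
      split_ifs <;> simp
    · rintro (rfl | rfl)
      · exact MulAction.mem_orbit_self _
      · exact ⟨σ, by simpa [W] using h3 true⟩
  rw [this]
  exact Set.ncard_pair hne

theorem order {Γ : Type*} [Group Γ] [Finite Γ] (ρ : G →* Γ)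
    (hρ : ∀ g, ρ g = 1 ↔ ∀ x, g • D.A x = D.A x)
    (hp : ((8893 : ℕ) : k) = 0) {k5 : Type*} [Field k5] (q5 : O →+* k5)
    (h5 : ((5 : ℕ) : k5) = 0) (σ : G) (hσ : ∀ x, q5 (σ • x) = q5 x ^ 5)
    {k17 : Type*} [Field k17] (q17 : O →+* k17)
    (h17 : ((17 : ℕ) : k17) = 0) (τ : G) (hτ : ∀ x, q17 (τ • x) = q17 x ^ 17)
    (h32 : 32 ∣ Nat.card Γ) (hd : Nat.card Γ ∣ 672) : 672 ∣ Nat.card Γ := by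
  have key : ∀ (g : G) (n : ℕ), Nat.card Γ ∣ n → ∀ a, g ^ n • D.t a = D.t a := by
    intro g n hn a
    have h1 : ρ (g ^ n) = 1 := by
      obtain ⟨c, rfl⟩ := hn
      rw [map_pow, pow_mul, pow_card_eq_one', one_pow]
    exact (D.fixA hp ((hρ _).1 h1 (a, true, true))).1
  have h7 : 7 ∣ Nat.card Γ := by
    by_contra h
    have hc : Nat.Coprime (Nat.card Γ) 7 := ((Nat.Prime.coprime_iff_not_dvd (by norm_num)).2 h).symm
    have h96 : Nat.card Γ ∣ 96 := hc.dvd_of_dvd_mul_left (by simpa using hd)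
    obtain ⟨a0, -, -, -, -, h5⟩ := D.core5 hp q5 h5 σ hσ
    obtain ⟨a, ha⟩ := exists_ne a0
    exact h5 a ha (key σ 480 (h96.trans (by norm_num)) a)
  have h3 : 3 ∣ Nat.card Γ := by
    by_contra h
    have hc : Nat.Coprime (Nat.card Γ) 3 := ((Nat.Prime.coprime_iff_not_dvd (by norm_num)).2 h).symm
    have h96 : Nat.card Γ ∣ 224 := hc.dvd_of_dvd_mul_left (by simpa using hd)
    obtain ⟨a, ha⟩ := D.core17 hp q17 h17 τ hτ
    exact ha (key τ 224 h96 a)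
  omega
end Lab
end S3

namespace S3

section
variable (L : Type) [Field L] [NumberField L] [IsGalois ℚ L]

theorem smul_coe (g : L ≃ₐ[ℚ] L) (x : 𝓞 L) : ((g • x : 𝓞 L) : L) = g (x : L) := rfl

theorem invO (x : 𝓞 L) (h : ∀ g : L ≃ₐ[ℚ] L, g • x = x) : ∃ n : ℤ, x = n := by
  have h1 : (x : L) ∈ (⊥ : IntermediateField ℚ L) := by
    rw [IsGalois.mem_bot_iff_fixed]
    intro g
    rw [← smul_coe, h]
  obtain ⟨r, hr⟩ := IntermediateField.mem_bot.1 h1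
  have h2 : IsIntegral ℤ r := by
    have : IsIntegral ℤ (x : L) := NumberField.RingOfIntegers.isIntegral_coe x
    rw [← hr] at this
    exact (isIntegral_algebraMap_iff (algebraMap ℚ L).injective).1 this
  obtain ⟨n, hn⟩ := IsIntegrallyClosed.isIntegral_iff.1 h2
  refine ⟨n, ?_⟩
  apply NumberField.RingOfIntegers.ext
  rw [← hr, ← hn]
  simp

theorem exFrob (p : ℕ) (hp : p.Prime) : ∃ (k : Type) (_ : Field k) (q : 𝓞 L →+* k),
    (p : k) = 0 ∧ ∃ σ : L ≃ₐ[ℚ] L, ∀ x, q (σ • x) = q x ^ p := by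
  have : Algebra.IsInvariant ℤ (𝓞 L) (L ≃ₐ[ℚ] L) := ⟨fun x h => by
    obtain ⟨n, hn⟩ := invO L x h
    exact ⟨n, by rw [hn]; simp⟩⟩
  have hpp := Nat.prime_iff_prime_int.1 hp
  let P : Ideal ℤ := Ideal.span {(p : ℤ)}
  have : P.IsMaximal := PrincipalIdealRing.isMaximal_of_irreducible hpp.irreducible
  obtain ⟨Q, hQ, hQP⟩ := Ideal.exists_maximal_ideal_liesOver_of_isIntegral (S := 𝓞 L) P
  have hQ0 : Q ≠ ⊥ := by
    apply Ideal.ne_bot_of_liesOver_of_ne_bot (p := P)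
    simp [P, hp.ne_zero]
  have : Finite (𝓞 L ⧸ Q) := Ideal.finiteQuotientOfFreeOfNeBot Q hQ0
  obtain ⟨σ, hσ⟩ := IsArithFrobAt.exists_of_isInvariant ℤ (L ≃ₐ[ℚ] L) Q
  have hu : Q.under ℤ = P := (Ideal.over_def Q P).symm
  have hc : Nat.card (ℤ ⧸ Q.under ℤ) = p := by
    rw [hu]
    have := Nat.card_congr (Int.quotientSpanNatEquivZMod p).toEquiv
    rw [this, Nat.card_zmod]
  refine ⟨𝓞 L ⧸ Q, Ideal.Quotient.field Q, Ideal.Quotient.mk Q, ?_, σ, fun x => ?_⟩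
  · have : (p : ℤ) ∈ Q.under ℤ := by rw [hu]; exact Ideal.mem_span_singleton_self _
    rw [Ideal.mem_comap] at this
    have := Ideal.Quotient.eq_zero_iff_mem.2 this
    simpa using this
  · have := hσ.mk_apply x
    rw [hc] at this
    exact this
end
end S3

namespace S3

theorem deg_f3 : f3.natDegree = 32 := by unfold f3; compute_degree!
theorem monic_f3 : f3.Monic := by unfold f3; monicity!

theorem mainL (L : Type) [Field L] [NumberField L] [IsGalois ℚ L]
    (spl : ∃ m : Multiset (𝓞 L), Multiset.card m = 8 ∧
      ∀ x : 𝓞 L, evT x dN = (m.map fun y => x - y).prod)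
    (exw : ∃ w : 𝓞 L, w ^ 2 + w + 1 = 0)
    (exy : ∀ t w : 𝓞 L, evT t dN = 0 → w ^ 2 + w + 1 = 0 → ∃ y, y ^ 2 = evE t w dB) :
    Irreducible f3 ∧ (Nat.card f3.Gal = 672 ∧
      ∃ H : Subgroup f3.Gal, H.index = 2 ∧ Nonempty (H ≃* SL(2, ZMod 7))) ∧
    ∃ t w y α : L, aeval α f3 = 0 ∧ evT t dN = 0 ∧ w ^ 2 + w + 1 = 0 ∧ y ^ 2 = evE t w dB ∧
      18 * α = A18 t w y ∧ t ∈ ℚ⟮α⟯ ∧ w ∈ ℚ⟮α⟯ ∧ y ∈ ℚ⟮α⟯ := by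
  obtain ⟨k, _, q, hp, -⟩ := exFrob L 8893 pr8893
  obtain ⟨k5, _, q5, h5, σ, hσ⟩ := exFrob L 5 (by norm_num)
  obtain ⟨k17, _, q17, h17, τ, hτ⟩ := exFrob L 17 (by norm_num)
  obtain ⟨D⟩ := mkLab q hp spl exw exy
  obtain ⟨x0, htr⟩ := D.trans hp q5 h5 σ hσ (invO L)
  set ι : 𝓞 L →+* L := algebraMap (𝓞 L) L with hι
  have ιinj : Function.Injective ι := NumberField.RingOfIntegers.coe_injective
  have ιs : ∀ (g : L ≃ₐ[ℚ] L) x, ι (g • x) = g (ι x) := fun g x => rfl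
  let al : Idx → L := fun x => ι (D.A x) / 18
  have hA : ∀ x, 18 * al x = A18 (ι (D.t x.1)) (ι (D.W x.2.1)) (ι (D.YY x)) := by
    intro x
    rw [show 18 * al x = ι (D.A x) by simp only [al]; field_simp, Lab.A, A18, evK_map]; rfl
  have ht : ∀ a, evT (ι (D.t a)) dN = 0 := fun a => by rw [← evT_map, D.ht, map_zero]
  have hw : ∀ i, (ι (D.W i)) ^ 2 + ι (D.W i) + 1 = 0 := fun i => by
    have := congrArg ι (D.hW i)
    simpa only [map_add, map_pow, map_one, map_zero] using this
  have hy : ∀ x : Idx, ι (D.YY x) ^ 2 = evE (ι (D.t x.1)) (ι (D.W x.2.1)) dB := fun x => by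
    rw [← evE_map, ← D.hYY, map_pow]
  have hroot : ∀ x, aeval (al x) f3 = 0 := fun x => by
    rw [aeval_f3]
    exact fact_f (ht _) (hw _) (hy _) (hA x)
  have alinj : Function.Injective al := by
    intro x y hxy
    apply D.Ainj hp
    apply ιinj
    simp only [al] at hxy
    field_simp at hxy
    exact hxy
  have galal : ∀ (g : L ≃ₐ[ℚ] L) x y, g • D.A x = D.A y ↔ g (al x) = al y := by
    intro g x y
    simp only [al, map_div₀, ← ιs, map_ofNat]
    rw [div_left_inj' (by norm_num), ιinj.eq_iff]
  have hcard : ∀ p : ℚ[X], p ≠ 0 → (∀ x, aeval (al x) p = 0) →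
      Finset.univ.image al ⊆ (p.map (algebraMap ℚ L)).roots.toFinset := by
    intro p hp h z hz
    obtain ⟨x, -, rfl⟩ := Finset.mem_image.1 hz
    rw [Multiset.mem_toFinset, mem_roots (map_ne_zero hp), IsRoot, eval_map_algebraMap]
    exact h x
  have h32 : (Finset.univ.image al).card = 32 := by
    rw [Finset.card_image_of_injective _ alinj]; rfl
  have hdeg : ∀ p : ℚ[X], p ≠ 0 → (∀ x, aeval (al x) p = 0) → 32 ≤
      Multiset.card (p.map (algebraMap ℚ L)).roots := by
    intro p hp h
    have h1 := Finset.card_le_card (hcard p hp h)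
    rw [h32] at h1
    exact h1.trans (Multiset.toFinset_card_le _)
  have hf0 : f3 ≠ 0 := monic_f3.ne_zero
  have hint : IsIntegral ℚ (al x0) := Algebra.IsIntegral.isIntegral _
  have hmin : f3 = minpoly ℚ (al x0) := by
    refine eq_of_monic_of_dvd_of_natDegree_le (minpoly.monic hint) monic_f3
      (minpoly.dvd _ _ (hroot x0)) ?_ 
    rw [deg_f3]
    refine (hdeg _ (minpoly.ne_zero hint) fun x => ?_).trans ((card_roots' _).trans
      (natDegree_map_le))
    obtain ⟨g, hg⟩ := htr x
    rw [galal] at hg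
    rw [← hg]
    have := aeval_algHom_apply g.toAlgHom (al x0) (minpoly ℚ (al x0))
    rw [minpoly.aeval, map_zero] at this
    exact this
  have hirr : Irreducible f3 := by rw [hmin]; exact minpoly.irreducible hint
  have hspl : (f3.map (algebraMap ℚ L)).Splits := by
    rw [splits_iff_card_roots]
    apply le_antisymm (card_roots' _)
    rw [natDegree_map, deg_f3]
    exact hdeg f3 hf0 hroot
  have : Fact ((f3.map (algebraMap ℚ L)).Splits) := ⟨hspl⟩
  have hallr : ∀ z ∈ f3.rootSet L, ∃ x, al x = z := by
    have h1 : Finset.univ.image al = (f3.map (algebraMap ℚ L)).roots.toFinset := by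
      apply Finset.eq_of_subset_of_card_le (hcard f3 hf0 hroot)
      rw [h32]
      refine (Multiset.toFinset_card_le _).trans ((card_roots' _).trans ?_)
      rw [natDegree_map, deg_f3]
    intro z hz
    have : z ∈ (f3.map (algebraMap ℚ L)).roots.toFinset := by
      rw [Multiset.mem_toFinset, mem_roots (map_ne_zero hf0), IsRoot, eval_map_algebraMap]
      exact (mem_rootSet.1 hz).2
    rw [← h1] at this
    obtain ⟨x, -, hx⟩ := Finset.mem_image.1 this
    exact ⟨x, hx⟩
  let ρ := Gal.restrict f3 L
  have hρ : ∀ g, ρ g = 1 ↔ ∀ x, g • D.A x = D.A x := by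
    intro g
    constructor
    · intro h x
      rw [galal]
      have h1 := Gal.restrict_smul g (⟨al x, mem_rootSet.2 ⟨hf0, hroot x⟩⟩ : f3.rootSet L)
      rw [show Gal.restrict f3 L g = 1 from h, one_smul] at h1
      exact h1.symm
    · intro h
      apply Gal.galActionHom_injective f3 L
      rw [map_one]
      ext z
      obtain ⟨x, hx⟩ := hallr z.1 z.2
      have h1 := Gal.restrict_smul g z
      rw [← hx, (galal g x x).1 (h x), hx] at h1
      exact h1
  obtain ⟨Ψ, hΨ⟩ := D.psi (G := L ≃ₐ[ℚ] L) hp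
  have hw' : ∀ g : L ≃ₐ[ℚ] L, (∀ x, g • D.A x = D.A x) → g • D.w = D.w := by
    intro g h
    have := (D.fixA hp (h (0, true, true))).2.1
    simpa [Lab.W] using this
  refine ⟨hirr, ?_, ι (D.t x0.1), ι (D.W x0.2.1), ι (D.YY x0), al x0, hroot x0, ht _, hw _, hy _,
    hA _, ?_⟩
  · refine grp ρ (Gal.restrict_surjective f3 L) (MulAction.stabilizer (L ≃ₐ[ℚ] L) D.w)
      (D.wind hp q5 h5 σ hσ) ?_ Ψ ?_ card_sl ?_
    · intro g hg
      exact hw' g ((hρ g).1 hg)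
    · intro g
      rw [hΨ, hρ]; rfl
    · refine D.order ρ hρ hp q5 h5 σ hσ q17 h17 τ hτ ?_
      have e1 := Gal.card_of_separable hirr.separable
      rw [e1]
      have hs : Splits (f3.map (algebraMap ℚ f3.SplittingField)) := SplittingField.splits f3
      have hne : (f3.map (algebraMap ℚ f3.SplittingField)).degree ≠ 0 := by
        rw [degree_map, degree_eq_natDegree hf0, deg_f3]; norm_num
      obtain ⟨β, hβ⟩ := hs.exists_eval_eq_zero hne
      rw [eval_map_algebraMap] at hβ
      have hm := minpoly.eq_of_irreducible_of_monic hirr hβ monic_f3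
      have := Module.finrank_mul_finrank ℚ ℚ⟮β⟯ f3.SplittingField
      rw [adjoin.finrank (Algebra.IsIntegral.isIntegral β), ← hm, deg_f3] at this
      exact ⟨_, this.symm⟩
  · have key : ∀ z : 𝓞 L, (∀ g : L ≃ₐ[ℚ] L, g • D.A x0 = D.A x0 → g • z = z) →
        ι z ∈ ℚ⟮al x0⟯ := by
      intro z hz
      rw [← IsGalois.fixedField_fixingSubgroup ℚ⟮al x0⟯, IntermediateField.mem_fixedField_iff]
      intro g hg
      rw [← ιs, hz]
      rw [galal]
      exact (IntermediateField.mem_fixingSubgroup_iff _ _).1 hg (al x0) (mem_adjoin_simple_self ℚ _)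
    exact ⟨key _ fun g hg => (D.fixA hp hg).1, key _ fun g hg => (D.fixA hp hg).2.1,
      key _ fun g hg => (D.fixA hp hg).2.2⟩
end S3

namespace S3

def lpoly (l : List ℤ) : ℤ[X] := evT X l
theorem aeval_lpoly {S : Type*} [CommRing S] (x : S) (l : List ℤ) : aeval x (lpoly l) = evT x l := by
  have := evT_map (aeval (R := ℤ) x).toRingHom X l
  simpa [lpoly] using this
def pN : ℤ[X] := lpoly dN
theorem pN_eq : pN = X ^ 8 - 4 * X ^ 7 + 7 * X ^ 6 - 7 * X ^ 5 + 7 * X ^ 4 - 7 * X ^ 3 + 7 * X ^ 2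
    + 5 * X + 1 := by
  simp only [pN, lpoly, evT, leval, dN]
  push_cast
  ring
theorem pN_deg : pN.natDegree = 8 := by rw [pN_eq]; compute_degree!
theorem pN_monic : pN.Monic := by rw [pN_eq]; monicity!

theorem int_t {S : Type*} [CommRing S] {t : S} (ht : evT t dN = 0) : IsIntegral ℤ t :=
  ⟨pN, pN_monic, by rw [← aeval_def, pN, aeval_lpoly, ht]⟩
theorem int_w {S : Type*} [CommRing S] {w : S} (hw : w ^ 2 + w + 1 = 0) : IsIntegral ℤ w :=
  ⟨X ^ 2 + X + 1, by monicity!, by rw [← aeval_def]; simpa using hw⟩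
theorem int_evT {S : Type*} [CommRing S] {t : S} (ht : IsIntegral ℤ t) (l : List ℤ) :
    IsIntegral ℤ (evT t l) := by
  induction l with
  | nil => exact isIntegral_zero
  | cons c l ih => exact (isIntegral_algebraMap (R := ℤ) (x := c)).add (ht.mul ih)
theorem int_evE {S : Type*} [CommRing S] {t w : S} (ht : IsIntegral ℤ t) (hw : IsIntegral ℤ w)
    (l : List (List ℤ)) : IsIntegral ℤ (evE t w l) := by
  induction l with
  | nil => exact isIntegral_zero
  | cons c l ih => exact (int_evT ht c).add (hw.mul ih)

theorem exL (Ω : Type) [Field Ω] [CharZero Ω] [IsAlgClosed Ω] [Algebra.IsAlgebraic ℚ Ω] : ∃ L : IntermediateField ℚ Ω, ∃ (_ : NumberField L) (_ : IsGalois ℚ L),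
    (∃ m : Multiset (𝓞 L), Multiset.card m = 8 ∧
      ∀ x : 𝓞 L, evT x dN = (m.map fun y => x - y).prod) ∧
    (∃ w : 𝓞 L, w ^ 2 + w + 1 = 0) ∧
    (∀ t w : 𝓞 L, evT t dN = 0 → w ^ 2 + w + 1 = 0 → ∃ y, y ^ 2 = evE t w dB) := by
  have hsq : ∀ z : Ω, ∃ y, y ^ 2 = z := fun z => IsAlgClosed.exists_pow_nat_eq z (by norm_num)
  choose r hr using hsq
  obtain ⟨w0, hw0⟩ : ∃ w0 : Ω, w0 ^ 2 + w0 + 1 = 0 := by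
    refine ⟨(r (-3) - 1) / 2, ?_⟩
    have := hr (-3)
    field_simp
    linear_combination this
  let T : Multiset Ω := (pN.map (algebraMap ℤ Ω)).roots
  have hTs : (pN.map (algebraMap ℤ Ω)).Splits := IsAlgClosed.splits _
  have hTcard : Multiset.card T = 8 := by
    rw [← hTs.natDegree_eq_card_roots, pN_monic.natDegree_map, pN_deg]
  have hTprod : ∀ x : Ω, evT x dN = (T.map fun y => x - y).prod := by
    intro x
    have h1 := hTs.eval_eq_prod_roots_of_monic (pN_monic.map _) x
    rw [eval_map_algebraMap, pN, aeval_lpoly] at h1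
    exact h1
  have hT : ∀ x : Ω, evT x dN = 0 ↔ x ∈ T := by
    intro x
    rw [hTprod, Multiset.prod_eq_zero_iff, Multiset.mem_map]
    constructor
    · rintro ⟨y, hy, h⟩
      rwa [sub_eq_zero.1 h]
    · intro h; exact ⟨x, h, sub_self x⟩
  let W : Finset Ω := {w0, -1 - w0}
  have hW : ∀ w : Ω, w ^ 2 + w + 1 = 0 → w ∈ W := by
    intro w hw
    have : (w - w0) * (w - (-1 - w0)) = 0 := by linear_combination hw - hw0
    simp only [W, Finset.mem_insert, Finset.mem_singleton]
    rcases mul_eq_zero.1 this with h | h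
    · left; exact sub_eq_zero.1 h
    · right; exact sub_eq_zero.1 h
  let S : Finset Ω := T.toFinset ∪ W ∪ (T.toFinset ×ˢ W).image fun p => r (evE p.1 p.2 dB)
  have : FiniteDimensional ℚ (adjoin ℚ (S : Set Ω)) :=
    finiteDimensional_adjoin fun x _ => Algebra.IsIntegral.isIntegral x
  let L : IntermediateField ℚ Ω := normalClosure ℚ (adjoin ℚ (S : Set Ω)) Ω
  have hSL : ∀ x ∈ S, x ∈ L := fun x hx =>
    (IntermediateField.le_normalClosure _) (subset_adjoin ℚ _ (Finset.mem_coe.2 hx))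
  have hNF : NumberField L := ⟨⟩
  have : IsAlgClosure ℚ Ω := ⟨inferInstance, inferInstance⟩
  have : Normal ℚ Ω := IsAlgClosure.normal ℚ Ω
  have hno : Normal ℚ L := normalClosure.normal ℚ (adjoin ℚ (S : Set Ω)) Ω
  have hGal : IsGalois ℚ L := ⟨⟩
  let ι : 𝓞 L →+* Ω := (algebraMap L Ω).comp (algebraMap (𝓞 L) L)
  have ιinj : Function.Injective ι :=
    (algebraMap L Ω).injective.comp NumberField.RingOfIntegers.coe_injective
  have hι : ∀ z, z ∈ L → IsIntegral ℤ z → ∃ o, ι o = z := by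
    intro z hz hi
    have : IsIntegral ℤ (⟨z, hz⟩ : L) :=
      (isIntegral_algebraMap_iff (algebraMap L Ω).injective).1 hi
    exact ⟨⟨⟨z, hz⟩, this⟩, rfl⟩
  refine ⟨L, hNF, hGal, ?_, ?_, ?_⟩
  · have h1 : ∀ z, ∃ o, z ∈ T → ι o = z := by
      intro z
      by_cases hz : z ∈ T
      · obtain ⟨o, ho⟩ := hι z (hSL z (by simp [S, hz])) (int_t ((hT z).2 hz))
        exact ⟨o, fun _ => ho⟩
      · exact ⟨0, fun h => absurd h hz⟩
    choose f hf using h1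
    refine ⟨T.map f, by rw [Multiset.card_map, hTcard], fun x => ιinj ?_⟩
    rw [evT_map, hTprod, map_multiset_prod, Multiset.map_map, Multiset.map_map]
    congr 1
    apply Multiset.map_congr rfl
    intro z hz
    simp [hf z hz]
  · obtain ⟨o, ho⟩ := hι w0 (hSL w0 (by simp [S, W])) (int_w hw0)
    refine ⟨o, ιinj ?_⟩
    simp only [map_add, map_pow, map_one, map_zero, ho, hw0]
  · intro t w ht hw
    have ht' : evT (ι t) dN = 0 := by rw [← evT_map, ht, map_zero]
    have hw' : (ι w) ^ 2 + ι w + 1 = 0 := by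
      have := congrArg ι hw
      simpa only [map_add, map_pow, map_one, map_zero] using this
    obtain ⟨o, ho⟩ := hι (r (evE (ι t) (ι w) dB)) (hSL _ (by
      apply Finset.mem_union_right
      apply Finset.mem_image.2 ⟨(ι t, ι w), ?_, rfl⟩
      rw [Finset.mem_product]
      exact ⟨Multiset.mem_toFinset.2 ((hT _).1 ht'), hW _ hw'⟩)) (by
        apply IsIntegral.of_pow (n := 2) (by norm_num)
        rw [hr]
        exact int_evE (int_t ht') (int_w hw') _)
    refine ⟨o, ιinj ?_⟩
    rw [map_pow, ho, hr, evE_map]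
end S3

namespace S3

theorem diff_mem {F M : Type} [Field F] [NumberField F] [Field M] [NumberField M] [Algebra F M]
    (x : 𝓞 M) (hx : Algebra.adjoin F {(x : M)} = ⊤) (g : (𝓞 F)[X]) (hg : aeval x g = 0) :
    aeval x (derivative g) ∈ differentIdeal (𝓞 F) (𝓞 M) := by
  have h1 := aeval_derivative_mem_differentIdeal (𝓞 F) F M x hx
  have hi : IsIntegral (𝓞 F) x := IsIntegralClosure.isIntegral (𝓞 F) M x
  obtain ⟨q, rfl⟩ := minpoly.isIntegrallyClosed_dvd hi hg
  rw [derivative_mul, map_add, map_mul, map_mul, minpoly.aeval, zero_mul, add_zero]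
  exact Ideal.mul_mem_right _ _ h1

theorem disc_tower {F M : Type} [Field F] [NumberField F] [Field M] [NumberField M] [Algebra F M]
    (x : 𝓞 M) (hx : Algebra.adjoin F {(x : M)} = ⊤) (a b : 𝓞 F)
    (h : x ^ 2 - algebraMap (𝓞 F) (𝓞 M) a * x + algebraMap (𝓞 F) (𝓞 M) b = 0)
    (hu : IsUnit (2 * x - algebraMap (𝓞 F) (𝓞 M) a)) (h2 : Module.finrank F M = 2) :
    (NumberField.discr M).natAbs = (NumberField.discr F).natAbs ^ 2 := by
  have h3 := NumberField.natAbs_discr_eq_absNorm_differentIdeal_mul_natAbs_discr_pow F (𝓞 F) M (𝓞 M)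
  have h4 := diff_mem x hx (X ^ 2 - C a * X + C b) (by simpa using h)
  have h5 : aeval x (derivative (X ^ 2 - C a * X + C b)) = 2 * x - algebraMap (𝓞 F) (𝓞 M) a := by
    simp; norm_num
  rw [h5] at h4
  rw [Ideal.eq_top_of_isUnit_mem _ h4 hu, Ideal.absNorm_top, h2, one_mul] at h3
  exact h3

theorem int_quad {S : Type*} [CommRing S] {x a b : S} (ha : IsIntegral ℤ a) (hb : IsIntegral ℤ b)
    (h : x ^ 2 - a * x + b = 0) : IsIntegral ℤ x := by
  let A := integralClosure ℤ S
  have h1 : IsIntegral A x := by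
    refine ⟨X ^ 2 - C (⟨a, ha⟩ : A) * X + C (⟨b, hb⟩ : A), by monicity!, ?_⟩
    rw [← aeval_def]
    simpa [Subalgebra.algebraMap_def] using h
  exact isIntegral_trans (R := ℤ) (A := A) x h1

theorem disc_tower' {F M : Type} [Field F] [NumberField F] [Field M] [NumberField M] [Algebra F M]
    {x v : M} {a b : F} (hx : F⟮x⟯ = ⊤) (ha : IsIntegral ℤ a) (hb : IsIntegral ℤ b)
    (hv : IsIntegral ℤ v)
    (h : x ^ 2 - algebraMap F M a * x + algebraMap F M b = 0)
    (hu : (2 * x - algebraMap F M a) * v = 1) (h2 : Module.finrank F M = 2) :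
    (NumberField.discr M).natAbs = (NumberField.discr F).natAbs ^ 2 := by
  have hxi : IsIntegral ℤ x := int_quad (ha.algebraMap) (hb.algebraMap) h
  have c : ∀ z : 𝓞 F, ((algebraMap (𝓞 F) (𝓞 M) z : 𝓞 M) : M) = algebraMap F M (z : F) := fun z => rfl
  refine disc_tower (F := F) (M := M) ⟨x, hxi⟩ ?_ ⟨a, ha⟩ ⟨b, hb⟩ ?_ ?_ h2
  · have h3 := adjoin_simple_toSubalgebra_of_isAlgebraic (F := F) (α := x)
      (Algebra.IsAlgebraic.isAlgebraic x)
    rw [hx] at h3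
    exact h3.symm
  · apply NumberField.RingOfIntegers.coe_injective
    simp only [map_add, map_sub, map_mul, map_pow, map_zero]
    exact h
  · refine IsUnit.of_mul_eq_one ⟨v, hv⟩ ?_
    apply NumberField.RingOfIntegers.coe_injective
    simp only [map_sub, map_mul, map_ofNat, map_one]
    exact hu

section
variable {S : Type*} [Field S] [CharZero S] {t w : S}

theorem int_U (ht : evT t dN = 0) : IsIntegral ℤ (evT t dU / 3) := by
  have hT := semT ht
  have h := hT.isz _ chk_U
  rw [hT.hev] at h
  have e2 : (fun c : ℤ => evT t [c]) = fun c : ℤ => (c : S) := by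
    funext c; exact evT_const t c
  rw [e2] at h
  have h3 : evT t dU = 3 * (evT t dU / 3) := by field_simp
  rw [h3] at h
  have := leval_scale (3 : S) (evT t dU / 3) 3 (by norm_num) dUP
  rw [h, mul_zero] at this
  have h4 : evT (evT t dU / 3) dUP = 0 :=
    (mul_eq_zero.1 this.symm).resolve_left (pow_ne_zero _ (by norm_num))
  refine ⟨lpoly dUP, ?_, by rw [← aeval_def, aeval_lpoly, h4]⟩
  have : lpoly dUP = X ^ 8 + 16 * X ^ 7 + 7 * X ^ 6 - 2359 * X ^ 5 + 15365 * X ^ 4 - 20062 * X ^ 3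
      + 11851 * X ^ 2 - 3344 * X + 361 := by
    simp only [lpoly, evT, leval, dUP]
    push_cast
    ring
  rw [this]
  monicity!

theorem int_rep3 (ht : evT t dN = 0) {v a b : List ℤ} (h : rep3 v a b = true) :
    IsIntegral ℤ (evT t v / 3) := by
  have hT := semT ht
  have := hT.eq h
  rw [hT.add, hT.mul, hT.mul, evT_const] at this
  have e : evT t v / 3 = evT t a + evT t dU / 3 * evT t b := by
    rw [this]; push_cast; field_simp
  rw [e]
  have hi := int_t ht
  exact (int_evT hi a).add ((int_U ht).mul (int_evT hi b))

theorem eq_G (ht : evT t dN = 0) (hw : w ^ 2 + w + 1 = 0) :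
    (evE t w dG / 9) ^ 2 - (evT t dTR / 3) * (evE t w dG / 9) + evT t dNM / 3 = 0 := by
  have h := semE ht hw
  have := h.isz _ chk_G
  simp only [h.add, h.mul, evE_const, evT_const] at this
  push_cast at this
  linear_combination (1 / 81) * this

theorem int_G (ht : evT t dN = 0) (hw : w ^ 2 + w + 1 = 0) : IsIntegral ℤ (evE t w dG / 9) :=
  int_quad (int_rep3 ht chk_TR) (int_rep3 ht chk_NM) (eq_G ht hw)

theorem int_rep9 (ht : evT t dN = 0) (hw : w ^ 2 + w + 1 = 0) {v : List (List ℤ)} {a b c e : List ℤ}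
    (h : rep9 v a b c e = true) : IsIntegral ℤ (evE t w v / 9) := by
  have hT := semT ht
  have hE := semE ht hw
  have := hE.eq h
  simp only [hE.add, hE.mul, evE_const, hT.add, hT.mul, evT_const] at this
  push_cast at this
  have e : evE t w v / 9 = (evT t a + evT t dU / 3 * evT t b) +
      (evT t c + evT t dU / 3 * evT t e) * (evE t w dG / 9) := by
    linear_combination (1 / 27) * this
  rw [e]
  have hi := int_t ht
  exact ((int_evT hi a).add ((int_U ht).mul (int_evT hi b))).add
    (((int_evT hi c).add ((int_U ht).mul (int_evT hi _))).mul (int_G ht hw))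
end

def dG0 : List ℤ := [-5, -53, 54, -52, 53, -45, 22, -5]
def dG1 : List ℤ := [-4, -7, 0, -2, 7, -9, 5, -1]
def dG2 : List ℤ := [-4, 20, -15, 22, -17, 12, -7, 2]
theorem chk_g1 : oT.eqb (oT.mul dG1 dG2) [27] = true := by decide +kernel

theorem discE {F M : Type} [Field F] [NumberField F] [Field M] [NumberField M] [Algebra F M]
    {t : F} {w : M} (ht : evT t dN = 0) (hw : w ^ 2 + w + 1 = 0) (hx : F⟮w⟯ = ⊤)
    (h2 : Module.finrank F M = 2) :
    (NumberField.discr M).natAbs = (NumberField.discr F).natAbs ^ 2 := by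
  have ht' : evT (algebraMap F M t) dN = 0 := by rw [← evT_map, ht, map_zero]
  have h3 := eq_G ht' hw
  have hd := (semT ht').eq chk_dg
  have hT := semT ht'
  simp only [hT.mul, hT.add, evT_const] at hd
  push_cast at hd
  set tr := evT (algebraMap F M t) dTR
  set nm := evT (algebraMap F M t) dNM
  set di := evT (algebraMap F M t) dDI
  set γ := evE (algebraMap F M t) w dG / 9 with hγ
  have itr : IsIntegral ℤ (tr / 3) := int_rep3 ht' chk_TR
  have idi : IsIntegral ℤ (di / 3) := int_rep3 ht' chk_DI
  have ig : IsIntegral ℤ γ := int_G ht' hw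
  have etr : algebraMap F M (evT t dTR / 3) = tr / 3 := by rw [map_div₀, evT_map, map_ofNat]
  have enm : algebraMap F M (evT t dNM / 3) = nm / 3 := by rw [map_div₀, evT_map, map_ofNat]
  have iv : IsIntegral ℤ ((2 * γ - tr / 3) * (di / 3)) :=
    by
    rw [two_mul]; exact (((ig.add ig).sub itr).mul idi)
  have hu : (2 * γ - tr / 3) * ((2 * γ - tr / 3) * (di / 3)) = 1 := by
    linear_combination (4 * di / 3) * h3 + (1 / 27) * hd
  refine disc_tower' (x := γ) (a := evT t dTR / 3) (b := evT t dNM / 3) ?_ (int_rep3 ht chk_TR)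
    (int_rep3 ht chk_NM) iv ?_ ?_ h2
  · have hi := hT.eq chk_g1
    rw [hT.mul, evT_const] at hi
    push_cast at hi
    have hm : γ ∈ F⟮γ⟯ := mem_adjoin_simple_self F γ
    have hg : 9 * γ = evT (algebraMap F M t) dG0 + w * evT (algebraMap F M t) dG1 := by
      rw [hγ, mul_div_cancel₀ _ (by norm_num : (9 : M) ≠ 0)]
      simp [evE, leval, dG, dG0, dG1]
    have hz : w = (9 * γ - algebraMap F M (evT t dG0)) * algebraMap F M (evT t dG2 / 27) := by
      rw [hg, map_div₀, evT_map, evT_map, map_ofNat]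
      linear_combination (- w / 27) * hi
    rw [eq_top_iff, ← hx, adjoin_simple_le_iff, hz]
    exact mul_mem (sub_mem (mul_mem (ofNat_mem _ 9) hm) (F⟮γ⟯.algebraMap_mem _)) (F⟮γ⟯.algebraMap_mem _)
  · rw [etr, enm]; exact h3
  · rw [etr]; exact hu

theorem discM {F M : Type} [Field F] [NumberField F] [Field M] [NumberField M] [Algebra F M]
    {t w : F} {y : M} (ht : evT t dN = 0) (hw : w ^ 2 + w + 1 = 0)
    (hy : y ^ 2 = algebraMap F M (evE t w dB)) (hx : F⟮y⟯ = ⊤)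
    (h2 : Module.finrank F M = 2) :
    (NumberField.discr M).natAbs = (NumberField.discr F).natAbs ^ 2 := by
  have hE := semE ht hw
  have h1 := congrArg (algebraMap F M) (hE.eq chk_bbi)
  have h3 := congrArg (algebraMap F M) (hE.eq chk_q4)
  simp only [hE.mul, hE.add, evE_const, evT_const, map_mul, map_add, map_intCast] at h1 h3
  push_cast at h1 h3
  have ie : IsIntegral ℤ (evE t w de) := int_evE (int_t ht) (int_w hw) _
  have iq : IsIntegral ℤ (evE t w dQ4 / 9) := int_rep9 ht hw chk_Q4
  have ib : IsIntegral ℤ (evE t w dBI / 9) := int_rep9 ht hw chk_BI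
  have eq4 : algebraMap F M (evE t w dQ4 / 9) = algebraMap F M (evE t w dQ4) / 9 := by
    rw [map_div₀, map_ofNat]
  have ebi : algebraMap F M (evE t w dBI / 9) = algebraMap F M (evE t w dBI) / 9 := by
    rw [map_div₀, map_ofNat]
  obtain ⟨ρ, hρ⟩ : ∃ ρ : M, ρ = (algebraMap F M (evE t w de) + y / 3) / 2 := ⟨_, rfl⟩
  have hq : ρ ^ 2 - algebraMap F M (evE t w de) * ρ + algebraMap F M (evE t w dQ4 / 9) = 0 := by
    rw [eq4, hρ]
    linear_combination (1 / 36) * hy - (1 / 36) * h3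
  have hy3 : 2 * ρ - algebraMap F M (evE t w de) = y / 3 := by rw [hρ]; ring
  have ir : IsIntegral ℤ ρ := int_quad ie.algebraMap iq.algebraMap hq
  have iy : IsIntegral ℤ (y / 3) := by
    rw [← hy3, two_mul]; exact (ir.add ir).sub ie.algebraMap
  refine disc_tower' (x := ρ) (v := y / 3 * algebraMap F M (evE t w dBI / 9)) ?_ ie iq
    (iy.mul ib.algebraMap) hq ?_ h2
  · rw [eq_top_iff, ← hx, adjoin_simple_le_iff]
    have hz : y = 3 * (2 * ρ - algebraMap F M (evE t w de)) := by rw [hy3]; ring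
    rw [hz]
    have hm : ρ ∈ F⟮ρ⟯ := mem_adjoin_simple_self F ρ
    exact mul_mem (ofNat_mem _ 3) (sub_mem (mul_mem (ofNat_mem _ 2) hm) (F⟮ρ⟯.algebraMap_mem _))
  · rw [hy3, ebi]
    linear_combination (algebraMap F M (evE t w dBI) / 81) * hy + (1 / 81) * h1
end S3

namespace S3

def dN1a : List ℤ := [5, 14, -21, 28, -35, 42, -28, 8]
def dN1U : List (List ℤ) := [[1, 0, 0, 0, 0, 0, 0, 0], [8, 5, 0, 0, 0, 0, 0, 0], [-4, -4, 3, 0, 0,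
  0, 0, 0], [-2, -2, 0, 3, 0, 0, 0, 0], [1, 1, 0, -8, 13, 0, 0, 0], [2, 11, 9, -16, 8, 9, 0, 0],
  [4, 22, 39, -11, 16, -24, 21, 0], [8, 44, 78, -17, 37, -48, 32, 5]]
def dN1T : List (List ℤ) := [[5, 14, -21, 28, -35, 42, -28, 8], [0, -63, -378, 399, -420, 441,
  -294, 84], [0, 0, 63, -294, 273, -252, 147, -42], [0, 0, 0, -273, 42, -63, 42, -21], [0, 0, 0,
  0, -567, -378, 252, -126], [0, 0, 0, 0, 0, -1323, 504, -252], [0, 0, 0, 0, 0, 0, -315, -504],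
  [0, 0, 0, 0, 0, 0, 0, -1323]]
def dH1a : List ℤ := [5, 98, 21, 56, 35, 42, -7, 8]
def dH1U : List (List ℤ) := [[1, 0, 0, 0, 0, 0, 0, 0], [128, 5, 0, 0, 0, 0, 0, 0], [784, -43, 589,
  0, 0, 0, 0, 0], [544, 762, 379, 485, 0, 0, 0, 0], [7504, -43383, 12339, -33955, 2545, 0, 0, 0],
  [925952, 491840, 2039259, 894449, -259809, 362227, 0, 0], [95326368, 70134578, 308399258,
  142816383, 68723237, 23170320, 13087954, 0], [7500306368, 5873078028, 24761371358, 13573179058,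
  6551112287, 3231095395, 945598554, 206678050]]
def dH1T : List (List ℤ) := [[5, 98, 21, 56, 35, 42, -7, 8], [0, 12369, 1218, 6993, 4200, 5271,
  -966, 1029], [0, 0, -20370, -131880, 987, -3276, -21378, -1428], [0, 0, 0, -106890, -99918,
  3339, -11508, -19698], [0, 0, 0, 0, 7606767, -549696, 95907, 1215312], [0, 0, 0, 0, 0,
  137423517, -37082472, 62557929], [0, 0, 0, 0, 0, 0, 2170119525, 4922076054], [0, 0, 0, 0, 0, 0,
  0, 467613895329]]
def dE1a : List ℤ := [-1, 1]
def dE1U : List (List ℤ) := [[1, 0, 0, 0, 0, 0, 0, 0], [0, 1, 0, 0, 0, 0, 0, 0], [0, 0, 1, 0, 0,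
  0, 0, 0], [0, 0, 0, 1, 0, 0, 0, 0], [0, 0, 0, 0, 1, 0, 0, 0], [0, 0, 0, 0, 0, 1, 0, 0], [0, 0,
  0, 0, 0, 0, 1, 0], [-16, -21, -70, -77, -91, -98, -105, 1]]
def dE1T : List (List ℤ) := [[-1, 1, 0, 0, 0, 0, 0, 0], [0, -1, 1, 0, 0, 0, 0, 0], [0, 0, -1, 1,
  0, 0, 0, 0], [0, 0, 0, -1, 1, 0, 0, 0], [0, 0, 0, 0, -1, 1, 0, 0], [0, 0, 0, 0, 0, -1, 1, 0],
  [0, 0, 0, 0, 0, 0, -1, 1], [0, 0, 0, 0, 0, 0, 0, -105]]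
def dE2a : List ℤ := [-2, 1]
def dE2U : List (List ℤ) := [[1, 0, 0, 0, 0, 0, 0, 0], [0, 1, 0, 0, 0, 0, 0, 0], [0, 0, 1, 0, 0,
  0, 0, 0], [0, 0, 0, 1, 0, 0, 0, 0], [0, 0, 0, 0, 1, 0, 0, 0], [0, 0, 0, 0, 0, 1, 0, 0], [0, 0,
  0, 0, 0, 0, 1, 0], [-512, -416, -1776, -1112, -1004, -726, -587, 64]]
def dE2T : List (List ℤ) := [[-2, 1, 0, 0, 0, 0, 0, 0], [0, -2, 1, 0, 0, 0, 0, 0], [0, 0, -2, 1,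
  0, 0, 0, 0], [0, 0, 0, -2, 1, 0, 0, 0], [0, 0, 0, 0, -2, 1, 0, 0], [0, 0, 0, 0, 0, -2, 1, 0],
  [0, 0, 0, 0, 0, 0, -2, 1], [0, 0, 0, 0, 0, 0, 0, -651]]
def lowH : List ℤ := [-16, -5, -49, -7, -14, -7, -7, 1]

def ent (L : List (List ℤ)) (i k : Fin 8) : ℤ := (L.getD k.1 []).getD i.1 0

def chkN (low a : List ℤ) (U T : List (List ℤ)) (n : ℤ) : Bool :=
  (List.finRange 8).all (fun k =>
    ((U.getD k.1 []).length == 8) && ((T.getD k.1 []).length == 8) &&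
    (ext opsZ 8 low).eqb ((ext opsZ 8 low).mul a (U.getD k.1 [])) (T.getD k.1 []) &&
    (ent U k k != 0) &&
    (List.finRange 8).all (fun i => (i ≤ k || ent U i k == 0) && (k ≤ i || ent T i k == 0))) &&
  (((List.finRange 8).map fun k => ent T k k).prod == n * ((List.finRange 8).map fun k => ent U k k).prod)

theorem chk_nN : chkN lowN dN1a dN1U dN1T (3 ^ 12 * 7 ^ 8) = true := by decide +kernel
theorem chk_nH : chkN lowH dH1a dH1U dH1T (21 ^ 8 * 32563 ^ 2) = true := by decide +kernel
theorem chk_n1 : chkN lowH dE1a dE1U dE1T 105 = true := by decide +kernel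
theorem chk_n2 : chkN lowH dE2a dE2U dE2T 1302 = true := by decide +kernel

theorem evT_sum {S : Type*} [CommRing S] (x : S) (l : List ℤ) (n : ℕ) (h : l.length = n) :
    evT x l = ∑ i : Fin n, ((l.getD i.1 0 : ℤ) : S) * x ^ i.1 := by
  induction l generalizing n with
  | nil => subst h; simp [evT, leval]
  | cons c l ih =>
    subst h
    rw [List.length_cons, Fin.sum_univ_succ]
    have := ih l.length rfl
    simp only [evT, leval] at this ⊢
    rw [this, Finset.mul_sum]
    simp only [Fin.val_zero, List.getD_cons_zero, pow_zero, mul_one, Fin.val_succ,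
      List.getD_cons_succ]
    congr 1
    apply Finset.sum_congr rfl
    intro i _
    ring

theorem norm_cert {F : Type} [Field F] [CharZero F] [Algebra ℚ F] {x : F} (b : Module.Basis (Fin 8) ℚ F)
    (hb : ∀ i, b i = x ^ i.1) {low a : List ℤ} {U T : List (List ℤ)} {n : ℤ}
    (hx : x ^ 8 = evT x low) (h : chkN low a U T n = true) : Algebra.norm ℚ (evT x a) = n := by
  simp only [chkN, Bool.and_eq_true, List.all_eq_true, List.mem_finRange, true_imp_iff, beq_iff_eq,
    bne_iff_ne, Bool.or_eq_true, decide_eq_true_eq] at h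
  obtain ⟨h, hp⟩ := h
  have hS : Sem (ext opsZ 8 low) (evT x) := sem_ext semZ x hx
  let A := LinearMap.toMatrix b b (LinearMap.mulLeft ℚ (evT x a))
  let Um : Matrix (Fin 8) (Fin 8) ℚ := fun i k => (ent U i k : ℚ)
  let Tm : Matrix (Fin 8) (Fin 8) ℚ := fun i k => (ent T i k : ℚ)
  have hrep : ∀ (L : List (List ℤ)) (k : Fin 8), (L.getD k.1 []).length = 8 → ∀ i,
      b.repr (evT x (L.getD k.1 [])) i = (ent L i k : ℚ) := by
    intro L k hl i
    rw [evT_sum x _ 8 hl]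
    have : ∑ i : Fin 8, (((L.getD k.1 []).getD i.1 0 : ℤ) : F) * x ^ i.1 =
        ∑ i : Fin 8, (ent L i k : ℚ) • b i := by
      apply Finset.sum_congr rfl
      intro i _
      rw [hb, Algebra.smul_def, ent, map_intCast]
    rw [this, b.repr_sum_self]
  have hm : A * Um = Tm := by
    ext i k
    obtain ⟨⟨⟨⟨hU, hT⟩, hmul⟩, -⟩, -⟩ := h k
    have h1 := congrFun (LinearMap.toMatrix_mulVec_repr b b (LinearMap.mulLeft ℚ (evT x a))
      (evT x (U.getD k.1 []))) i
    rw [LinearMap.mulLeft_apply, ← hS.mul, hS.eq hmul, hrep T k hT i] at h1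
    have e : (b.repr (evT x (U.getD k.1 [])) : Fin 8 → ℚ) = fun j => (ent U j k : ℚ) := by
      funext j; exact hrep U k hU j
    rw [e] at h1
    exact h1
  have hdet := congrArg Matrix.det hm
  rw [Matrix.det_mul, Matrix.det_of_isUpperTriangular (M := Um), Matrix.det_of_isLowerTriangular Tm] at hdet
  · have hn : Algebra.norm ℚ (evT x a) = A.det := by
      rw [Algebra.norm_apply, ← LinearMap.det_toMatrix b]; rfl
    have hU0 : (∏ i, Um i i) ≠ 0 := by
      rw [Finset.prod_ne_zero_iff]
      intro i _
      exact Int.cast_ne_zero.2 (h i).1.2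
    have hp' : (∏ i, Tm i i) = n * ∏ i, Um i i := by
      rw [← List.ofFn_eq_map, ← List.ofFn_eq_map, List.prod_ofFn, List.prod_ofFn] at hp
      simp only [Um, Tm]
      exact_mod_cast hp
    rw [hn]
    exact mul_right_cancel₀ hU0 (hdet.trans hp')
  · intro i k hik
    have h1 : i < k := hik
    exact Int.cast_eq_zero.2 (((h k).2 i).2.resolve_left (not_le.2 h1))
  · intro i k hik
    have h1 : k < i := hik
    exact Int.cast_eq_zero.2 (((h k).2 i).1.resolve_left (not_le.2 h1))

theorem exBasis {F : Type} [Field F] [NumberField F] {x : F} (hx : ℚ⟮x⟯ = ⊤)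
    (h8 : Module.finrank ℚ F = 8) : (minpoly ℚ x).natDegree = 8 ∧
    ∃ b : Module.Basis (Fin 8) ℚ F, ∀ i, b i = x ^ i.1 := by
  have hi : IsIntegral ℚ x := Algebra.IsIntegral.isIntegral x
  have hd : (minpoly ℚ x).natDegree = 8 := by
    rw [← adjoin.finrank hi, hx, finrank_top', h8]
  refine ⟨hd, ?_⟩
  have h3 := adjoin_simple_toSubalgebra_of_isAlgebraic (F := ℚ) (α := x)
      (Algebra.IsAlgebraic.isAlgebraic x)
  rw [hx] at h3
  let pb := PowerBasis.ofAdjoinEqTop hi h3.symm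
  have hg : pb.gen = x := PowerBasis.ofAdjoinEqTop_gen hi h3.symm
  have hdim : pb.dim = 8 := hd
  refine ⟨pb.basis.reindex (finCongr hdim), fun i => ?_⟩
  rw [Module.Basis.reindex_apply, PowerBasis.basis_eq_pow, hg]
  rfl

section
variable {R : Type} [CommRing R] [IsDomain R] [CharZero R] {θ : R}

theorem peel {p m a : ℤ} {Ha : ℤ[X]} (hH : (θ - a) * aeval θ Ha = - (p * m : ℤ))
    (hpm : IsCoprime p m) (hp : Prime p)
    (hN : ∀ (z : R) (k : ℤ), (θ - a) * z = k → p ∣ k) {z : R}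
    (hz : (θ - a) * z ∈ Algebra.adjoin ℤ {θ}) (hpz : (p : R) * z ∈ Algebra.adjoin ℤ {θ}) :
    z ∈ Algebra.adjoin ℤ {θ} := by
  have hA : ∀ q : ℤ[X], aeval θ q ∈ Algebra.adjoin ℤ {θ} := fun q => aeval_mem_adjoin_singleton ℤ θ
  have hc : ∀ c : ℤ, (c : R) ∈ Algebra.adjoin ℤ {θ} := fun c => intCast_mem _ c
  obtain ⟨q, hq⟩ : ∃ q : ℤ[X], aeval θ q = (θ - a) * z := by
    rw [Algebra.adjoin_singleton_eq_range_aeval] at hz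
    exact hz
  obtain ⟨s, hs⟩ : X - C a ∣ q - C (eval a q) := X_sub_C_dvd_sub_C_eval
  have hs' := congrArg (aeval θ) hs
  simp only [map_sub, map_mul, aeval_X, hq, eq_intCast, map_intCast] at hs'
  have h1 : (θ - a) * (z - aeval θ s) = (eval a q : ℤ) := by linear_combination hs'
  obtain ⟨k, hk⟩ := hN _ _ h1
  have hp0 : (p : R) ≠ 0 := Int.cast_ne_zero.2 hp.ne_zero
  have h2 : (m : R) * z = m * aeval θ s - k * aeval θ Ha := by
    apply mul_left_cancel₀ hp0
    rw [hk] at h1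
    push_cast at h1 hH
    linear_combination (z - aeval θ s) * hH - (aeval θ Ha) * h1
  have hmz : (m : R) * z ∈ Algebra.adjoin ℤ {θ} := by
    rw [h2]
    exact sub_mem (mul_mem (hc m) (hA s)) (mul_mem (hc k) (hA Ha))
  obtain ⟨u, v, huv⟩ := hpm
  have : z = u * (p * z) + v * (m * z) := by
    have := congrArg (Int.cast : ℤ → R) huv
    push_cast at this
    linear_combination (-z) * this
  rw [this]
  exact add_mem (mul_mem (hc u) hpz) (mul_mem (hc v) hmz)

theorem peel_pow {p m a : ℤ} {Ha : ℤ[X]} (hH : (θ - a) * aeval θ Ha = - (p * m : ℤ))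
    (hpm : IsCoprime p m) (hp : Prime p)
    (hN : ∀ (z : R) (k : ℤ), (θ - a) * z = k → p ∣ k) (n : ℕ) {z : R}
    (hz : (θ - a) ^ n * z ∈ Algebra.adjoin ℤ {θ}) (hpz : (p : R) * z ∈ Algebra.adjoin ℤ {θ}) :
    z ∈ Algebra.adjoin ℤ {θ} := by
  induction n with
  | zero => simpa using hz
  | succ n ih =>
    apply ih
    apply peel hH hpm hp hN
    · rw [← mul_assoc, ← pow_succ']; exact hz
    · have h1 : (θ - a) ^ n ∈ Algebra.adjoin ℤ {θ} :=
        pow_mem (sub_mem (Algebra.self_mem_adjoin_singleton ℤ θ) (intCast_mem _ a)) n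
      rw [mul_left_comm]
      exact mul_mem h1 hpz

theorem peel2 {p m m' a a' : ℤ} {Ha Ha' c : ℤ[X]} (hH : (θ - a) * aeval θ Ha = - (p * m : ℤ))
    (hH' : (θ - a') * aeval θ Ha' = - (p * m' : ℤ))
    (hpm : IsCoprime p m) (hpm' : IsCoprime p m') (hp : Prime p)
    (hN : ∀ (z : R) (k : ℤ), (θ - a) * z = k → p ∣ k)
    (hN' : ∀ (z : R) (k : ℤ), (θ - a') * z = k → p ∣ k) (i j : ℕ)
    (hc : (θ - a) ^ i * (θ - a') ^ j = p * aeval θ c) (n : ℕ) {z : R}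
    (hpz : (p : R) ^ n * z ∈ Algebra.adjoin ℤ {θ}) :
    z ∈ Algebra.adjoin ℤ {θ} := by
  induction n generalizing z with
  | zero => simpa using hpz
  | succ n ih =>
    have h1 : (p : R) * z ∈ Algebra.adjoin ℤ {θ} := by
      apply ih; rw [← mul_assoc, ← pow_succ]; exact hpz
    apply peel_pow hH' hpm' hp hN' j _ h1
    apply peel_pow hH hpm hp hN i
    · rw [← mul_assoc, hc, mul_comm (p : R), mul_assoc]
      exact mul_mem (aeval_mem_adjoin_singleton ℤ θ) h1
    · rw [mul_left_comm]
      exact mul_mem (pow_mem (sub_mem (Algebra.self_mem_adjoin_singleton ℤ θ) (intCast_mem _ a')) j) h1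
end
end S3

namespace S3

def pH : ℤ[X] := lpoly dH
theorem pH_eq : pH = X ^ 8 - X ^ 7 + 7 * X ^ 6 + 7 * X ^ 5 + 14 * X ^ 4 + 7 * X ^ 3 + 49 * X ^ 2
    + 5 * X + 16 := by
  simp only [pH, lpoly, evT, leval, dH]
  push_cast
  ring
theorem pH_deg : pH.natDegree = 8 := by rw [pH_eq]; compute_degree!
theorem pH_monic : pH.Monic := by rw [pH_eq]; monicity!
theorem pH_der {S : Type*} [CommRing S] (x : S) : aeval x (derivative pH) = evT x dH1a := by
  rw [pH_eq]
  simp [evT, leval, dH1a]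
  simp only [map_ofNat]
  ring
theorem pN_der {S : Type*} [CommRing S] (x : S) : aeval x (derivative pN) = evT x dN1a := by
  rw [pN_eq]
  simp [evT, leval, dN1a]
  simp only [map_ofNat]
  ring

theorem th_facts {F : Type} [Field F] [CharZero F] {t : F} (ht : evT t dN = 0) :
    evT (evT t dC1 / 3) dH = 0 ∧ evT (evT t dC1 / 3) dTC = 32563 * t := by
  have hT := semT ht
  have e2 : (fun c : ℤ => evT t [c]) = fun c : ℤ => (c : F) := by
    funext c; exact evT_const t c
  have h3 : evT t dC1 = 3 * (evT t dC1 / 3) := by field_simp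
  constructor
  · have h := hT.isz _ chk_H
    rw [hT.hev, e2, h3] at h
    have := leval_scale (3 : F) (evT t dC1 / 3) 3 (by norm_num) dH
    rw [h, mul_zero] at this
    exact (mul_eq_zero.1 this.symm).resolve_left (pow_ne_zero _ (by norm_num))
  · have h := hT.eq chk_TC
    rw [hT.hev, e2, h3] at h
    have := leval_scale (3 : F) (evT t dC1 / 3) 3 (by norm_num) dTC
    rw [h] at this
    have h8 : dTC.length = 8 := rfl
    rw [h8] at this
    have h9 : evT t [0, 32563 * 3 ^ 7] = 32563 * 3 ^ 7 * t := by
      simp [evT, leval]; ring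
    rw [h9] at this
    change _ = 3 ^ 8 * evT _ dTC at this
    linear_combination (-1 / 3 ^ 8) * this

theorem mem_evT {F : Type} [Field F] [CharZero F] [Algebra ℚ F] (E : IntermediateField ℚ F) {x : F}
    (hx : x ∈ E) (l : List ℤ) : evT x l ∈ E := by
  induction l with
  | nil => exact zero_mem _
  | cons c l ih => exact add_mem (intCast_mem _ c) (mul_mem hx ih)

theorem arith {C D : ℕ} (hc : C * D = (21 ^ 8 * 32563 ^ 2 : ℤ).natAbs)
    (hd1 : (D : ℤ) ∣ 3 ^ 12 * 7 ^ 8) (hd2 : (C : ℤ) ∣ (32563 ^ 2) ^ 8) : D = 21 ^ 8 := by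
  have hc' : C * D = 21 ^ 8 * 32563 ^ 2 := by rw [hc]; norm_num
  have h1 : D ∣ 3 ^ 12 * 7 ^ 8 := by exact_mod_cast hd1
  have h2 : C ∣ (32563 ^ 2) ^ 8 := by exact_mod_cast hd2
  have cop : Nat.Coprime (21 ^ 8) C := by
    apply Nat.Coprime.coprime_dvd_right h2
    norm_num
  have h3 : 21 ^ 8 ∣ D := cop.dvd_of_dvd_mul_left (hc' ▸ Dvd.intro _ rfl)
  obtain ⟨E, rfl⟩ := h3
  have h4 : E ∣ 3 ^ 4 := by
    have : (21 ^ 8) * E ∣ 21 ^ 8 * 3 ^ 4 := by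
      refine h1.trans ?_; norm_num
    exact Nat.dvd_of_mul_dvd_mul_left (by norm_num) this
  have h5 : E ∣ 32563 ^ 2 := by
    have : C * E = 32563 ^ 2 :=
      Nat.eq_of_mul_eq_mul_left (by norm_num : 0 < 21 ^ 8) (by rw [← hc']; ring)
    exact this ▸ Dvd.intro_left _ rfl
  have h6 : E ∣ 1 := by
    have := Nat.dvd_gcd h4 h5
    norm_num at this
    simp [this]
  rw [Nat.dvd_one.1 h6, mul_one]

set_option maxHeartbeats 2000000 in
theorem discF {F : Type} [Field F] [NumberField F] {t : F} (ht : evT t dN = 0) (hgt : ℚ⟮t⟯ = ⊤)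
    (h8 : Module.finrank ℚ F = 8) : (NumberField.discr F).natAbs = 21 ^ 8 := by
  obtain ⟨θ', hθ'⟩ : ∃ θ' : 𝓞 F, (θ' : F) = evT t dC1 / 3 := ⟨⟨_, int_rep3 ht chk_C1⟩, rfl⟩
  obtain ⟨t', ht'⟩ : ∃ t' : 𝓞 F, (t' : F) = t := ⟨⟨_, int_t ht⟩, rfl⟩
  obtain ⟨hH, hTC⟩ := th_facts ht
  rw [← hθ'] at hH hTC
  have hgθ : ℚ⟮(θ' : F)⟯ = ⊤ := by
    rw [eq_top_iff, ← hgt, adjoin_simple_le_iff]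
    have : t = evT (θ' : F) dTC * (algebraMap ℚ F (1 / 32563)) := by
      rw [hTC]; simp; field_simp
    rw [this]
    exact mul_mem (mem_evT _ (mem_adjoin_simple_self ℚ _) _) (IntermediateField.algebraMap_mem _ _)
  have cT : ∀ (x : 𝓞 F) (l : List ℤ), ((evT x l : 𝓞 F) : F) = evT (x : F) l := fun x l =>
    evT_map (algebraMap (𝓞 F) F) x l
  have hHO : evT θ' dH = 0 := by
    apply NumberField.RingOfIntegers.coe_injective
    exact (cT _ _).trans (hH.trans (map_zero _).symm)
  have hNO : evT t' dN = 0 := by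
    apply NumberField.RingOfIntegers.coe_injective
    exact (cT _ _).trans ((by rw [ht', ht] : evT (t' : F) dN = 0).trans (map_zero _).symm)
  obtain ⟨hdθ, bθ, hbθ⟩ := exBasis hgθ h8
  obtain ⟨hdt, bt, hbt⟩ := exBasis hgt h8
  have hxθ : (θ' : F) ^ 8 = evT (θ' : F) lowH := by
    simp only [evT, leval, dH, lowH] at hH ⊢
    push_cast at hH ⊢
    linear_combination hH
  have hxt : t ^ 8 = evT t lowN := by
    simp only [evT, leval, dN, lowN] at ht ⊢
    push_cast at ht ⊢
    linear_combination ht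
  have nrm : ∀ (x : 𝓞 F) (a : List ℤ) (n : ℤ), Algebra.norm ℚ (evT (x : F) a) = n →
      Algebra.norm ℤ (evT x a) = n := by
    intro x a n h
    have := Algebra.coe_norm_int (evT x a)
    rw [cT, h] at this
    exact_mod_cast this
  have n1 := nrm θ' _ _ (norm_cert bθ hbθ hxθ chk_n1)
  have n2 := nrm θ' _ _ (norm_cert bθ hbθ hxθ chk_n2)
  have nH := nrm θ' _ _ (norm_cert bθ hbθ hxθ chk_nH)
  have nN := nrm t' _ _ (norm_cert bt (by rw [ht']; exact hbt) (by rw [ht']; exact hxt) chk_nN)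
  have e1 : evT θ' dE1a = θ' - (1 : ℤ) := by simp [evT, leval, dE1a]; ring
  have e2 : evT θ' dE2a = θ' - (2 : ℤ) := by simp [evT, leval, dE2a]; ring
  rw [e1] at n1
  rw [e2] at n2
  have nz : ∀ k : ℤ, Algebra.norm ℤ ((k : ℤ) : 𝓞 F) = k ^ 8 := by
    intro k
    have h1 := Algebra.coe_norm_int (k : 𝓞 F)
    have h2 := Algebra.norm_algebraMap (S := F) (k : ℚ)
    rw [h8, map_intCast] at h2
    have h3 : (((k : ℤ) : 𝓞 F) : F) = k := map_intCast (algebraMap (𝓞 F) F) k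
    rw [h3, h2] at h1
    exact_mod_cast h1
  have hN : ∀ (a n p : ℤ), Algebra.norm ℤ (θ' - (a : 𝓞 F)) = n → p ∣ n → Prime p →
      ∀ (z : 𝓞 F) (k : ℤ), (θ' - a) * z = k → p ∣ k := by
    intro a n p hn hpn hp z k h
    have := congrArg (Algebra.norm ℤ) h
    rw [map_mul, hn, nz] at this
    exact hp.dvd_of_dvd_pow (this ▸ (hpn.mul_right _))
  have p3 : Prime (3 : ℤ) := Int.prime_three
  have p7 : Prime (7 : ℤ) := by norm_num
  have hH' := hHO
  simp only [evT, leval, dH] at hH'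
  push_cast at hH'
  let H1 : ℤ[X] := lpoly [89, 84, 35, 28, 14, 7, 0, 1]
  let H2 : ℤ[X] := lpoly [643, 319, 135, 64, 25, 9, 1, 1]
  have hH1 : (θ' - (1 : ℤ)) * aeval θ' H1 = - (105 : ℤ) := by
    rw [aeval_lpoly]; simp only [evT, leval]; push_cast; linear_combination hH'
  have hH2 : (θ' - (2 : ℤ)) * aeval θ' H2 = - (1302 : ℤ) := by
    rw [aeval_lpoly]; simp only [evT, leval]; push_cast; linear_combination hH'
  have hc3 : (θ' - (1 : ℤ)) ^ 6 * (θ' - (2 : ℤ)) ^ 2 = (3 : ℤ) *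
      aeval θ' (lpoly [-4, -11, 12, -51, 47, -37, 12, -3, 0]) := by
    rw [aeval_lpoly]; simp only [evT, leval]; push_cast; linear_combination hH'
  have hc7 : (θ' - (1 : ℤ)) ^ 1 * (θ' - (2 : ℤ)) ^ 7 = (7 : ℤ) *
      aeval θ' (lpoly [16, -83, 153, -177, 118, -53, 13, -2, 0]) := by
    rw [aeval_lpoly]; simp only [evT, leval]; push_cast; linear_combination hH'
  have pl3 : ∀ (n : ℕ) (z : 𝓞 F), ((3 : ℤ) : 𝓞 F) ^ n * z ∈ Algebra.adjoin ℤ {θ'} →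
      z ∈ Algebra.adjoin ℤ {θ'} := fun n z =>
    peel2 (p := 3) (m := 35) (m' := 434) hH1 hH2 ⟨12, -1, by norm_num⟩ ⟨145, -1, by norm_num⟩ p3
      (hN _ _ _ n1 ⟨35, by norm_num⟩ p3) (hN _ _ _ n2 ⟨434, by norm_num⟩ p3) 6 2 hc3 n
  have pl7 : ∀ (n : ℕ) (z : 𝓞 F), ((7 : ℤ) : 𝓞 F) ^ n * z ∈ Algebra.adjoin ℤ {θ'} →
      z ∈ Algebra.adjoin ℤ {θ'} := fun n z =>
    peel2 (p := 7) (m := 15) (m' := 186) hH1 hH2 ⟨-2, 1, by norm_num⟩ ⟨-53, 2, by norm_num⟩ p7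
      (hN _ _ _ n1 ⟨15, by norm_num⟩ p7) (hN _ _ _ n2 ⟨186, by norm_num⟩ p7) 1 7 hc7 n
  have gA : ∀ x : 𝓞 F, ℚ⟮(x : F)⟯ = ⊤ → Algebra.adjoin ℚ {algebraMap (𝓞 F) F x} = ⊤ := by
    intro x hx
    have h3 := adjoin_simple_toSubalgebra_of_isAlgebraic (F := ℚ) (α := (x : F))
      (Algebra.IsAlgebraic.isAlgebraic _)
    rw [hx] at h3
    exact h3.symm
  have hiθ : IsIntegral ℤ θ' := IsIntegralClosure.isIntegral ℤ F θ'
  have hit : IsIntegral ℤ t' := IsIntegralClosure.isIntegral ℤ F t'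
  have hmin : minpoly ℤ θ' = pH := by
    have hdv : minpoly ℤ θ' ∣ pH := minpoly.isIntegrallyClosed_dvd hiθ (by
      rw [pH, aeval_lpoly, hHO])
    refine (eq_of_monic_of_dvd_of_natDegree_le (minpoly.monic hiθ) pH_monic hdv ?_).symm
    have := minpoly.isIntegrallyClosed_eq_field_fractions ℚ F hiθ
    rw [pH_deg, ← hdθ, this, (minpoly.monic hiθ).natDegree_map]
  have hcd := conductor_mul_differentIdeal ℤ ℚ F θ' (gA _ hgθ)
  rw [hmin, pH_der] at hcd
  have hcdn := congrArg Ideal.absNorm hcd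
  rw [map_mul, NumberField.absNorm_differentIdeal F, Ideal.absNorm_span_singleton, nH] at hcdn
  have hdt : evT t' dN1a ∈ differentIdeal ℤ (𝓞 F) := by
    have h1 := aeval_derivative_mem_differentIdeal ℤ ℚ F t' (gA _ (by rw [ht']; exact hgt))
    obtain ⟨q, hq⟩ := minpoly.isIntegrallyClosed_dvd hit (p := pN) (by rw [pN, aeval_lpoly, hNO])
    rw [← pN_der, hq, derivative_mul, map_add, map_mul, map_mul, minpoly.aeval, zero_mul, add_zero]
    exact Ideal.mul_mem_right _ _ h1
  have hd1 := Ideal.absNorm_dvd_norm_of_mem hdt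
  rw [NumberField.absNorm_differentIdeal F, nN] at hd1
  have hcm : (((32563 : ℤ) ^ 2 : ℤ) : 𝓞 F) ∈ conductor ℤ θ' := by
    rw [mem_conductor_iff]
    intro z
    have h1 : ((21 ^ 8 * 32563 ^ 2 : ℤ) : 𝓞 F) ∈ conductor ℤ θ' := by
      have h2 : ((21 ^ 8 * 32563 ^ 2 : ℤ) : 𝓞 F) ∈ Ideal.span {evT θ' dH1a} := by
        have h3 := Ideal.absNorm_mem (Ideal.span {evT θ' dH1a})
        rw [Ideal.absNorm_span_singleton, nH] at h3
        exact_mod_cast h3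
      rw [← hcd] at h2
      exact Ideal.mul_le_left h2
    rw [mem_conductor_iff] at h1
    apply pl3 8
    apply pl7 8
    have := h1 z
    push_cast at this ⊢
    convert this using 1
    ring
  have hd2 := Ideal.absNorm_dvd_norm_of_mem hcm
  rw [nz] at hd2
  exact arith hcdn hd1 hd2
end S3

namespace S3

theorem finrank_le_of_root {F M : Type} [Field F] [Field M] [Algebra F M] {x : M}
    {p : F[X]} (hp : p.Monic) (h : aeval x p = 0) : Module.finrank F F⟮x⟯ ≤ p.natDegree := by
  have hi : IsIntegral F x := ⟨p, hp, by rwa [← aeval_def]⟩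
  rw [adjoin.finrank hi]
  exact natDegree_le_of_dvd (minpoly.dvd F x h) hp.ne_zero

theorem gen_top (F : Type) {M : Type} [Field F] [Field M] [Algebra F M] (x : M) :
    F⟮(⟨x, mem_adjoin_simple_self F x⟩ : F⟮x⟯)⟯ = ⊤ := by
  apply IntermediateField.lift_injective F⟮x⟯
  rw [lift_adjoin_simple, lift_top]

theorem discK (K : Type) [Field K] [NumberField K] {t w y : K} (ht : evT t dN = 0)
    (hw : w ^ 2 + w + 1 = 0) (hy : y ^ 2 = evE t w dB)
    (gen : ∀ F : IntermediateField ℚ K, t ∈ F → w ∈ F → y ∈ F → F = ⊤)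
    (h32 : Module.finrank ℚ K = 32) : |NumberField.discr K| = 21 ^ 32 := by
  let F : IntermediateField ℚ K := ℚ⟮t⟯
  let E : IntermediateField F K := F⟮w⟯
  have nfE : NumberField E := NumberField.of_module_finite F E
  let tF : F := ⟨t, mem_adjoin_simple_self ℚ t⟩
  let wE : E := ⟨w, mem_adjoin_simple_self F w⟩
  let tE : E := algebraMap F E tF
  have htF : evT tF dN = 0 := by
    apply (algebraMap F K).injective
    rw [evT_map, map_zero]; exact ht
  have htE : evT tE dN = 0 := by rw [← evT_map, htF, map_zero]
  have hwE : wE ^ 2 + wE + 1 = 0 := by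
    apply (algebraMap E K).injective
    rw [map_zero, map_add, map_add, map_pow, map_one]; exact hw
  have hyE : y ^ 2 = algebraMap E K (evE tE wE dB) := by
    rw [evE_map]; exact hy
  have d1 : Module.finrank ℚ F ≤ 8 := by
    have := finrank_le_of_root (F := ℚ) (x := t) (pN_monic.map (algebraMap ℤ ℚ))
      (by rw [aeval_map_algebraMap, pN, aeval_lpoly, ht])
    rwa [pN_monic.natDegree_map, pN_deg] at this
  have d2 : Module.finrank F E ≤ 2 := by
    have hm : (X ^ 2 + X + 1 : F[X]).Monic := by monicity!
    have hd : (X ^ 2 + X + 1 : F[X]).natDegree = 2 := by compute_degree!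
    have := finrank_le_of_root (F := F) (x := w) hm (by simpa using hw)
    rwa [hd] at this
  have top3 : E⟮y⟯ = ⊤ := by
    have h1 := gen ((E⟮y⟯.restrictScalars F).restrictScalars ℚ) ?_ ?_ ?_
    · rw [eq_top_iff]
      intro x _
      have : x ∈ (E⟮y⟯.restrictScalars F).restrictScalars ℚ := by rw [h1]; trivial
      exact this
    · exact E⟮y⟯.algebraMap_mem tE
    · exact E⟮y⟯.algebraMap_mem wE
    · exact mem_adjoin_simple_self E y
  have d3 : Module.finrank E K ≤ 2 := by
    have hm : (X ^ 2 - C (evE tE wE dB) : E[X]).Monic := by monicity!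
    have hd : (X ^ 2 - C (evE tE wE dB) : E[X]).natDegree = 2 := by compute_degree!
    have := finrank_le_of_root (F := E) (x := y) hm (by
      rw [map_sub, map_pow, aeval_X, aeval_C, hyE, sub_self])
    rwa [hd, top3, finrank_top'] at this
  have m1 : Module.finrank ℚ F * Module.finrank F K = 32 := by rw [Module.finrank_mul_finrank, h32]
  have m2 : Module.finrank F E * Module.finrank E K = Module.finrank F K :=
    Module.finrank_mul_finrank F E K
  have hd : Module.finrank ℚ F = 8 ∧ Module.finrank F E = 2 ∧ Module.finrank E K = 2 := by
    rw [← m2] at m1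
    generalize Module.finrank ℚ F = a at *
    generalize Module.finrank F E = b at *
    generalize Module.finrank E K = c at *
    clear * - d1 d2 d3 m1
    interval_cases b <;> interval_cases c <;> omega
  obtain ⟨f1, f2, f3⟩ := hd
  have g1 : ℚ⟮tF⟯ = ⊤ := gen_top ℚ t
  have g2 : F⟮wE⟯ = ⊤ := gen_top F w
  have D1 := discF htF g1 f1
  have D2 := discE (F := F) (M := E) htF hwE g2 f2
  have D3 := discM (F := E) (M := K) htE hwE hyE top3 f3
  rw [D2, D1] at D3
  rw [Int.abs_eq_natAbs, D3]
  norm_num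
end S3

namespace S3

theorem final : Irreducible f3 ∧ (∀ α : Qbar, aeval α f3 = 0 →
      Module.finrank ℚ (IntermediateField.adjoin ℚ {α}) = 32 ∧
      |absd (IntermediateField.adjoin ℚ {α})| = 21 ^ 32) ∧ Nat.card f3.Gal = 672 ∧
    (∃ H : Subgroup f3.Gal, H.index = 2 ∧
      Nonempty (H ≃* Matrix.SpecialLinearGroup (Fin 2) (ZMod 7))) := by
  have : Algebra.IsAlgebraic ℚ Qbar := AlgebraicClosure.isAlgebraic ℚ
  have : IsAlgClosed Qbar := AlgebraicClosure.isAlgClosed ℚ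
  obtain ⟨L, _, _, spl, exw, exy⟩ := exL Qbar
  obtain ⟨hirr, ⟨hc, hH⟩, t, w, y, α, hα, ht, hw, hy, hA, htm, hwm, hym⟩ := mainL L spl exw exy
  refine ⟨hirr, fun β hβ => ?_, hc, hH⟩
  have hmα := minpoly.eq_of_irreducible_of_monic hirr hα monic_f3
  have hmβ := minpoly.eq_of_irreducible_of_monic hirr hβ monic_f3
  have hiα : IsIntegral ℚ α := Algebra.IsIntegral.isIntegral α
  have hiβ : IsIntegral ℚ β := Algebra.IsIntegral.isIntegral β
  have hfβ : Module.finrank ℚ ℚ⟮β⟯ = 32 := by rw [adjoin.finrank hiβ, ← hmβ, deg_f3]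
  have hfα : Module.finrank ℚ ℚ⟮α⟯ = 32 := by rw [adjoin.finrank hiα, ← hmα, deg_f3]
  refine ⟨hfβ, ?_⟩
  have hfd : FiniteDimensional ℚ ℚ⟮β⟯ := adjoin.finiteDimensional hiβ
  have hnf : NumberField ℚ⟮β⟯ := ⟨⟩
  have e1 : absd ℚ⟮β⟯ = NumberField.discr ℚ⟮β⟯ := by rw [absd, dif_pos hfd]
  have e : ℚ⟮α⟯ ≃ₐ[ℚ] ℚ⟮β⟯ :=
    (adjoinRootEquivAdjoin ℚ hiα).symm.trans ((AdjoinRoot.algEquivOfEq ℚ _ _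
      (hmα.symm.trans hmβ)).trans (adjoinRootEquivAdjoin ℚ hiβ))
  rw [e1, ← NumberField.discr_eq_discr_of_algEquiv ℚ⟮α⟯ e]
  have cT : ∀ (x : ℚ⟮α⟯) (l : List ℤ), ((evT x l : ℚ⟮α⟯) : L) = evT (x : L) l := fun x l =>
    evT_map (algebraMap ℚ⟮α⟯ L) x l
  have cE : ∀ (x z : ℚ⟮α⟯) (l : List (List ℤ)), ((evE x z l : ℚ⟮α⟯) : L) = evE (x : L) (z : L) l :=
    fun x z l => evE_map (algebraMap ℚ⟮α⟯ L) x z l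
  refine discK ℚ⟮α⟯ (t := ⟨t, htm⟩) (w := ⟨w, hwm⟩) (y := ⟨y, hym⟩) ?_ ?_ ?_ ?_ hfα
  · apply Subtype.ext; rw [cT]; exact ht
  · apply Subtype.ext; exact hw
  · apply Subtype.ext; rw [cE]; exact hy
  · intro F h1 h2 h3
    let a : ℚ⟮α⟯ := ⟨α, mem_adjoin_simple_self ℚ α⟩
    have hT : ∀ (x : ℚ⟮α⟯) (l : List ℤ), x ∈ F → evT x l ∈ F := by
      intro x l hx
      induction l with
      | nil => exact zero_mem _
      | cons c l ih => exact add_mem (intCast_mem _ c) (mul_mem hx ih)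
    have hE : ∀ (x z : ℚ⟮α⟯) (l : List (List ℤ)), x ∈ F → z ∈ F → evE x z l ∈ F := by
      intro x z l hx hz
      induction l with
      | nil => exact zero_mem _
      | cons c l ih => exact add_mem (hT x c hx) (mul_mem hz ih)
    have ha : a ∈ F := by
      have h4 : (18 : ℚ⟮α⟯) * a = evE ⟨t, htm⟩ ⟨w, hwm⟩ dA0 + ⟨y, hym⟩ * evE ⟨t, htm⟩ ⟨w, hwm⟩ dA1 := by
        apply Subtype.ext
        change (18 : L) * α = ((evE _ _ dA0 : ℚ⟮α⟯) : L) + y * ((evE _ _ dA1 : ℚ⟮α⟯) : L)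
        rw [cE, cE, hA]
        simp [A18, evK, leval]
      have h5 : a = (18 : ℚ⟮α⟯)⁻¹ * ((18 : ℚ⟮α⟯) * a) := by field_simp
      rw [h5, h4]
      refine mul_mem (inv_mem (ofNat_mem F 18)) (add_mem (hE _ _ _ h1 h2)
        (mul_mem h3 (hE _ _ _ h1 h2)))
    have htop : ℚ⟮a⟯ = ⊤ := by
      rw [Field.primitive_element_iff_minpoly_natDegree_eq, hfα]
      have : aeval a f3 = 0 := by
        apply (algebraMap ℚ⟮α⟯ L).injective
        rw [map_zero, ← aeval_algebraMap_apply]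
        exact hα
      rw [← minpoly.eq_of_irreducible_of_monic hirr this monic_f3, deg_f3]
    rw [eq_top_iff, ← htop, adjoin_simple_le_iff]
    exact ha
end S3

/- `f3.Gal`, the Galois group of the splitting field of `f3` over `ℚ`, is the Galois group
of the Galois closure of the degree 32 number field `ℚ⟮α⟯` defined by a root `α` of `f3`. -/
theorem stmt3 :
    Irreducible f3 ∧
    (∀ α : Qbar, aeval α f3 = 0 →
      Module.finrank ℚ (IntermediateField.adjoin ℚ {α}) = 32 ∧
      |absd (IntermediateField.adjoin ℚ {α})| = 21 ^ 32) ∧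
    Nat.card f3.Gal = 672 ∧
    (∃ H : Subgroup f3.Gal, H.index = 2 ∧
      Nonempty (H ≃* Matrix.SpecialLinearGroup (Fin 2) (ZMod 7))) := by
  exact S3.final

end
end
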